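/- Let n ≥ 2. The Birman–Murakami–Wenzl algebra B(A_{n−1}) over K = ℚ(l,δ) is Morita equivalent to the direct sum ⊕_{i=0}^{⌊n/2⌋} H_{n−2i}, where H_m is the Iwahori–Hecke algebra of the symmetric group S_m over K with quadratic relation T_j² = 1 − m·T_j (and H_0 = H_1 = K). -/

import Mathlib

open FreeAlgebra

/-- Two rings are Morita equivalent if their categories of left modules are equivalent. -/
def MoritaEquivalent (A : Type u) (B : Type u) [Ring A] [Ring B] : Prop :=
  Nonempty (ModuleCat.{u} A ≌ ModuleCat.{u} B)
/-- The path graph (Coxeter diagram of type `A_n`) on nodes `1, …, n`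
(realized as `Fin n`, node `i` corresponding to index `i-1`): node `i` is
adjacent to node `i+1` for `1 ≤ i ≤ n-1`. -/
def typeA (n : ℕ) : SimpleGraph (Fin n) :=
  SimpleGraph.fromRel (fun i j => (i : ℕ) + 1 = (j : ℕ))

/-- The Coxeter diagram of type `D_n` (`n ≥ 4`) on nodes `1, …, n` (realized as
`Fin n`, node `i` corresponding to index `i-1`): nodes `1` and `2` are both
adjacent to node `3`, and nodes `i`, `i+1` are adjacent for `3 ≤ i ≤ n-1`. -/
def typeD (n : ℕ) : SimpleGraph (Fin n) :=
  SimpleGraph.fromRel (fun i j =>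
    ((i : ℕ) = 0 ∧ (j : ℕ) = 2) ∨ ((i : ℕ) = 1 ∧ (j : ℕ) = 2) ∨
      (2 ≤ (i : ℕ) ∧ (i : ℕ) + 1 = (j : ℕ)))

/-- The Coxeter diagram of type `E_n` (`n = 6, 7, 8`) on nodes `1, …, n`
(realized as `Fin n`, node `i` corresponding to index `i-1`): a path on nodes
`1, 3, 4, …, n` together with node `2` attached to node `4`. -/
def typeE (n : ℕ) : SimpleGraph (Fin n) :=
  SimpleGraph.fromRel (fun i j =>
    ((i : ℕ) = 0 ∧ (j : ℕ) = 2) ∨ ((i : ℕ) = 1 ∧ (j : ℕ) = 3) ∨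
      (2 ≤ (i : ℕ) ∧ (i : ℕ) + 1 = (j : ℕ)))
/-- The field `K = ℚ(l,δ)` of rational functions over `ℚ` in two independent
variables `l` and `δ`, realized as an iterated rational function field. -/
abbrev BMWField : Type := RatFunc (RatFunc ℚ)

/-- The variable `l` of `K = ℚ(l,δ)`. -/
noncomputable def lVar : BMWField := RatFunc.X

/-- The variable `δ` of `K = ℚ(l,δ)`. -/
noncomputable def deltaVar : BMWField := RatFunc.C RatFunc.X

/-- The element `m = (l - l⁻¹)/(1 - δ)` of `K = ℚ(l,δ)`. -/
noncomputable def mVar : BMWField := (lVar - lVar⁻¹) / (1 - deltaVar)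

/-- The defining relations of the Birman–Murakami–Wenzl algebra `B(Q)` of the
simply-laced type given by the graph `Q`, imposed on the free algebra over
`K = ℚ(l,δ)` on the generators `g_1, …, g_n` (encoded as `Sum.inl i`) and
`e_1, …, e_n` (encoded as `Sum.inr i`). -/
inductive BMWRel (n : ℕ) (Q : SimpleGraph (Fin n)) :
    FreeAlgebra BMWField (Fin n ⊕ Fin n) → FreeAlgebra BMWField (Fin n ⊕ Fin n) → Prop
  /-- `g_i g_j = g_j g_i` whenever `i ≁ j` -/
  | gg (i j : Fin n) (hne : i ≠ j) (hadj : ¬ Q.Adj i j) :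
      BMWRel n Q (ι BMWField (.inl i) * ι BMWField (.inl j))
        (ι BMWField (.inl j) * ι BMWField (.inl i))
  /-- `g_i g_j g_i = g_j g_i g_j` whenever `i ∼ j` -/
  | braid (i j : Fin n) (hadj : Q.Adj i j) :
      BMWRel n Q (ι BMWField (.inl i) * ι BMWField (.inl j) * ι BMWField (.inl i))
        (ι BMWField (.inl j) * ι BMWField (.inl i) * ι BMWField (.inl j))
  /-- `m·e_i = l·(g_i² + m·g_i - 1)` -/
  | quad (i : Fin n) :
      BMWRel n Q (mVar • ι BMWField (.inr i))
        (lVar • (ι BMWField (.inl i) * ι BMWField (.inl i)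
          + mVar • ι BMWField (.inl i) - 1))
  /-- `g_i e_i = l⁻¹·e_i` -/
  | ge (i : Fin n) :
      BMWRel n Q (ι BMWField (.inl i) * ι BMWField (.inr i)) (lVar⁻¹ • ι BMWField (.inr i))
  /-- `e_i g_j e_i = l·e_i` whenever `i ∼ j` -/
  | ege (i j : Fin n) (hadj : Q.Adj i j) :
      BMWRel n Q (ι BMWField (.inr i) * ι BMWField (.inl j) * ι BMWField (.inr i))
        (lVar • ι BMWField (.inr i))

/-- The Birman–Murakami–Wenzl algebra `B(Q)` of simply-laced type `Q` over
the rational function field `K = ℚ(l,δ)`. -/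
abbrev BMWAlgebra (n : ℕ) (Q : SimpleGraph (Fin n)) : Type :=
  RingQuot (BMWRel n Q)
/-- The defining relations of the Iwahori–Hecke algebra of the symmetric group
over `K = ℚ(l,δ)`, imposed on the free `K`-algebra on generators `T_1, …, T_N`
(encoded as `Fin N`): `T_iT_j = T_jT_i` for `|i - j| ≥ 2`,
`T_iT_{i+1}T_i = T_{i+1}T_iT_{i+1}`, and `T_i² = 1 - m·T_i`
where `m = (l - l⁻¹)/(1 - δ)`. -/
inductive HeckeRel (N : ℕ) :
    FreeAlgebra BMWField (Fin N) → FreeAlgebra BMWField (Fin N) → Prop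
  /-- `T_i T_j = T_j T_i` for `|i - j| ≥ 2` -/
  | comm (i j : Fin N) (h : (i : ℕ) + 2 ≤ (j : ℕ) ∨ (j : ℕ) + 2 ≤ (i : ℕ)) :
      HeckeRel N (ι BMWField i * ι BMWField j) (ι BMWField j * ι BMWField i)
  /-- `T_i T_{i+1} T_i = T_{i+1} T_i T_{i+1}` -/
  | braid (i j : Fin N) (h : (i : ℕ) + 1 = (j : ℕ)) :
      HeckeRel N (ι BMWField i * ι BMWField j * ι BMWField i)
        (ι BMWField j * ι BMWField i * ι BMWField j)
  /-- `T_i² = 1 - m·T_i` -/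
  | quad (i : Fin N) :
      HeckeRel N (ι BMWField i * ι BMWField i) (1 - mVar • ι BMWField i)

/-- The Iwahori–Hecke algebra `H_m` of the symmetric group `S_m` over
`K = ℚ(l,δ)`, presented on the generators `T_1, …, T_{m-1}`; for `m ≤ 1` there
are no generators and no relations, so `H_0 = H_1 = K`. -/
abbrev HeckeAlgebra (m : ℕ) : Type := RingQuot (HeckeRel (m - 1))

set_option autoImplicit false
set_option linter.all false

section Part1

/-- The evaluation form `f ↦ ∑ w(u,v) f(u,v)`. -/
def capF {I : Type} [Fintype I] (w : I → I → ℝ) (f : I → I → ℝ) : ℝ := ∑ u, ∑ v, w u v * f u v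

/-- A quantum orthogonal vector space: `R`-matrix, invariant tensor `w`. Here `t = q ^ k` and `l = t ^ 2 / q`. -/
structure QSpace (q t : ℝ) (k : ℕ) where
  I : Type
  fin : Fintype I
  dec : DecidableEq I
  R : (I → I → ℝ) →ₗ[ℝ] (I → I → ℝ)
  w : I → I → ℝ
  a : Fin k → I
  A : I → Prop
  ybe : ∀ (F : I → I → I → ℝ) (x y z : I),
    R (fun x y => R (fun y z => R (fun x y => F x y z) x y) y z) x y =
    R (fun y z => R (fun x y => R (fun y z => F x y z) y z) x y) y z
  quad : ∀ f x y, R (R f) x y = f x y + (q - q⁻¹) * R f x y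
    - (q - q⁻¹) * (q * (t⁻¹) ^ 2) * capF w f * w x y
  Rw : ∀ x y, R w x y = (q * (t⁻¹) ^ 2) * w x y
  capR : ∀ f, capF w (R f) = (q * (t⁻¹) ^ 2) * capF w f
  capw : (q - q⁻¹) * capF w w = (q - q⁻¹) + t ^ 2 * q⁻¹ - q * (t⁻¹) ^ 2
  ww : ∀ x y, ∑ v, w x v * w v y = if x = y then 1 else 0
  capnat1 : ∀ (F : I → I → I → ℝ) (z : I),
    capF w (fun x y => R (fun y z => R (fun x y => F x y z) x y) y z) = capF w (fun x y => F z x y)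
  capnat2 : ∀ (F : I → I → I → ℝ) (x : I),
    capF w (fun y z => R (fun x y => R (fun y z => F x y z) y z) x y) = capF w (fun y z => F y z x)
  sym : ∀ f g : I → I → ℝ, ∑ x, ∑ y, f x y * R g x y = ∑ x, ∑ y, R f x y * g x y
  hAw : ∀ x y, A x → A y → w x y = 0
  hAR : ∀ f : I → I → ℝ, (∀ x y, ¬ (A x ∧ A y) → f x y = 0) → ∀ x y, ¬ (A x ∧ A y) → R f x y = 0
  hAa : ∀ i, A (a i)
  hinj : Function.Injective a
  hRa : ∀ i j, i < j → ∀ x y, R (fun x y => if x = a i ∧ y = a j then 1 else 0) x y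
    = if x = a j ∧ y = a i then 1 else 0

attribute [instance] QSpace.fin QSpace.dec

namespace QSpace
variable {q t : ℝ} {k : ℕ} (S : QSpace q t k)

/-- The zero-dimensional space. -/
noncomputable def zero (q : ℝ) : QSpace q 1 0 where
  I := Empty
  fin := inferInstance
  dec := inferInstance
  R := 0
  w := fun x => x.elim
  a := Fin.elim0
  A := fun _ => True
  ybe := by intro F x; exact x.elim
  quad := by intro F x; exact x.elim
  Rw := by intro x; exact x.elim
  capR := by intro f; simp [capF]
  capw := by simp [capF]
  ww := by intro x; exact x.elim
  capnat1 := by intro F x; exact x.elim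
  capnat2 := by intro F x; exact x.elim
  sym := by intro f g; simp
  hAw := by intro x; exact x.elim
  hAR := by intro f _ x; exact x.elim
  hAa := by intro x; trivial
  hinj := by intro x; exact x.elim0
  hRa := by intro x; exact x.elim0

theorem capF_add {I : Type} [Fintype I] (w f g : I → I → ℝ) :
    capF w (fun x y => f x y + g x y) = capF w f + capF w g := by
  simp [capF, mul_add, Finset.sum_add_distrib]
theorem capF_sub {I : Type} [Fintype I] (w f g : I → I → ℝ) :
    capF w (fun x y => f x y - g x y) = capF w f - capF w g := by
  simp [capF, mul_sub, Finset.sum_sub_distrib]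
theorem capF_mul {I : Type} [Fintype I] (w f : I → I → ℝ) (c : ℝ) :
    capF w (fun x y => c * f x y) = c * capF w f := by
  simp only [capF, Finset.mul_sum]
  refine Finset.sum_congr rfl fun u _ => Finset.sum_congr rfl fun v _ => ?_
  ring

theorem R_add (f g : S.I → S.I → ℝ) (x y) :
    S.R (fun x y => f x y + g x y) x y = S.R f x y + S.R g x y := by
  have := S.R.map_add f g
  exact congrFun (congrFun this x) y
theorem R_sub (f g : S.I → S.I → ℝ) (x y) :
    S.R (fun x y => f x y - g x y) x y = S.R f x y - S.R g x y := by
  have := S.R.map_sub f g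
  exact congrFun (congrFun this x) y
theorem R_mul (c : ℝ) (f : S.I → S.I → ℝ) (x y) :
    S.R (fun x y => c * f x y) x y = c * S.R f x y := by
  have := S.R.map_smul c f
  exact congrFun (congrFun this x) y
theorem R_zero (x y) : S.R (fun _ _ => 0) x y = 0 := by
  have := S.R.map_zero
  exact congrFun (congrFun this x) y

/-- Pairing of functions of three variables. -/
theorem sym12 (F G : S.I → S.I → S.I → ℝ) :
    ∑ x, ∑ y, ∑ z, F x y z * S.R (fun x y => G x y z) x y
      = ∑ x, ∑ y, ∑ z, S.R (fun x y => F x y z) x y * G x y z := by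
  have h : ∀ H : S.I → S.I → S.I → ℝ, ∑ x, ∑ y, ∑ z, H x y z = ∑ z, ∑ x, ∑ y, H x y z := by
    intro H
    calc ∑ x, ∑ y, ∑ z, H x y z = ∑ x, ∑ z, ∑ y, H x y z :=
          Finset.sum_congr rfl fun x _ => Finset.sum_comm
      _ = _ := Finset.sum_comm
  rw [h (fun x y z => F x y z * S.R (fun x y => G x y z) x y),
    h (fun x y z => S.R (fun x y => F x y z) x y * G x y z)]
  refine Finset.sum_congr rfl fun z _ => ?_
  exact S.sym (fun x y => F x y z) (fun x y => G x y z)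

theorem sym23 (F G : S.I → S.I → S.I → ℝ) :
    ∑ x, ∑ y, ∑ z, F x y z * S.R (fun y z => G x y z) y z
      = ∑ x, ∑ y, ∑ z, S.R (fun y z => F x y z) y z * G x y z := by
  refine Finset.sum_congr rfl fun x _ => ?_
  exact S.sym (fun y z => F x y z) (fun y z => G x y z)

theorem ext_pair (G H : S.I → S.I → S.I → ℝ)
    (h : ∀ F : S.I → S.I → S.I → ℝ,
      ∑ x, ∑ y, ∑ z, F x y z * G x y z = ∑ x, ∑ y, ∑ z, F x y z * H x y z) (x y z) :
    G x y z = H x y z := by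
  have := h (fun x' y' z' => if x' = x then if y' = y then if z' = z then 1 else 0 else 0 else 0)
  simpa using this

/-- cup naturality, by adjunction. -/
theorem cupnat1 (f : S.I → ℝ) (x y z) :
    S.R (fun y z => S.R (fun x y => f x * S.w y z) x y) y z = f z * S.w x y := by
  refine S.ext_pair (fun x y z => S.R (fun y z => S.R (fun x y => f x * S.w y z) x y) y z)
    (fun x y z => f z * S.w x y) (fun F => ?_) x y z
  rw [S.sym23 F (fun x y z => S.R (fun x y => f x * S.w y z) x y)]
  rw [S.sym12 (fun x y z => S.R (fun y z => F x y z) y z) (fun x y z => f x * S.w y z)]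
  have h := fun x => congrArg (fun c => f x * c) (S.capnat2 F x)
  have h2 := Finset.sum_congr rfl fun x (_ : x ∈ Finset.univ) => h x
  simp only [capF, Finset.mul_sum] at h2
  rw [Finset.sum_comm] at h2
  refine Eq.trans ?_ (Eq.trans h2 ?_)
  · rw [Finset.sum_comm]
    refine Finset.sum_congr rfl fun x _ => Finset.sum_congr rfl fun y _ => Finset.sum_congr rfl fun z _ => ?_
    ring
  · rw [Finset.sum_comm]
    refine Finset.sum_congr rfl fun x _ => ?_
    rw [Finset.sum_comm]
    refine Finset.sum_congr rfl fun y _ => Finset.sum_congr rfl fun z _ => ?_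
    ring

theorem cupnat2 (f : S.I → ℝ) (x y z) :
    S.R (fun x y => S.R (fun y z => f z * S.w x y) y z) x y = f x * S.w y z := by
  refine S.ext_pair (fun x y z => S.R (fun x y => S.R (fun y z => f z * S.w x y) y z) x y)
    (fun x y z => f x * S.w y z) (fun F => ?_) x y z
  rw [S.sym12 F (fun x y z => S.R (fun y z => f z * S.w x y) y z)]
  rw [S.sym23 (fun x y z => S.R (fun x y => F x y z) x y) (fun x y z => f z * S.w x y)]
  have h := fun x => congrArg (fun c => f x * c) (S.capnat1 F x)
  have h2 := Finset.sum_congr rfl fun x (_ : x ∈ Finset.univ) => h x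
  simp only [capF, Finset.mul_sum] at h2
  refine Eq.trans ?_ (Eq.trans h2 ?_)
  · rw [Finset.sum_comm]
    rw [Finset.sum_comm]
    conv_rhs => rw [Finset.sum_comm]
    refine Finset.sum_congr rfl fun x _ => ?_
    rw [Finset.sum_comm]
    refine Finset.sum_congr rfl fun y _ => Finset.sum_congr rfl fun z _ => ?_
    ring
  · refine Finset.sum_congr rfl fun x _ => Finset.sum_congr rfl fun y _ => Finset.sum_congr rfl fun z _ => ?_
    ring

theorem Rinv_R (f : S.I → S.I → ℝ) (hRf : S.I → S.I → ℝ) (h : ∀ x y, S.R f x y = hRf x y) (x y) :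
    f x y = S.R hRf x y - (q - q⁻¹) * hRf x y + (q - q⁻¹) * capF S.w hRf * S.w x y := by
  obtain rfl : S.R f = hRf := by funext x y; exact h x y
  rw [S.quad, S.capR]; ring

theorem R_Rinv (f : S.I → S.I → ℝ) (x y) :
    S.R (fun x y => S.R f x y - (q - q⁻¹) * f x y + (q - q⁻¹) * (capF S.w f * S.w x y)) x y = f x y := by
  rw [R_add, R_sub, R_mul, R_mul, R_mul]
  have h1 := S.quad f x y
  have h2 := S.Rw x y
  change S.R (S.R f) x y - _ * S.R f x y + _ * (_ * S.R S.w x y) = _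
  rw [h1, h2]; ring

theorem zig1 (f : S.I → ℝ) (z) : capF S.w (fun x y => f x * S.w y z) = f z := by
  have : ∀ x, ∑ y, S.w x y * (f x * S.w y z) = f x * if x = z then 1 else 0 := by
    intro x; rw [← S.ww, Finset.mul_sum]
    refine Finset.sum_congr rfl fun y _ => ?_
    ring
  simp only [capF, this]; simp

theorem zig2 (f : S.I → ℝ) (x) : capF S.w (fun y z => f z * S.w x y) = f x := by
  have : ∀ z, ∑ y, S.w y z * (f z * S.w x y) = f z * if x = z then 1 else 0 := by
    intro z; rw [← S.ww, Finset.mul_sum]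
    refine Finset.sum_congr rfl fun y _ => ?_
    ring
  rw [capF, Finset.sum_comm]; simp only [this]; simp

theorem capRcup1 (hq : q ≠ 0) (ht : t ≠ 0) (f : S.I → ℝ) (z) :
    capF S.w (fun x y => S.R (fun y z => f z * S.w x y) y z) = (t ^ 2 * q⁻¹) * f z := by
  have h := S.capnat1 (fun x y z => f z * S.w x y) z
  simp only [R_mul] at h
  have h2 : ∀ x y, S.R (fun x y => S.w x y) x y = (q * (t⁻¹) ^ 2) * S.w x y := S.Rw
  simp only [h2] at h
  rw [zig2] at h
  have h3 : ∀ x y z, S.R (fun y z => f z * (q * t⁻¹ ^ 2 * S.w x y)) y z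
      = (q * t⁻¹ ^ 2) * S.R (fun y z => f z * S.w x y) y z := by
    intro x y z
    have e : (fun y z => f z * (q * t⁻¹ ^ 2 * S.w x y)) = fun y z => (q * t⁻¹ ^ 2) * (f z * S.w x y) := by
      funext y z; ring
    rw [e, R_mul]
  simp only [h3, capF_mul] at h
  rw [← h]; field_simp

theorem capRcup2 (hq : q ≠ 0) (ht : t ≠ 0) (f : S.I → ℝ) (x) :
    capF S.w (fun y z => S.R (fun x y => f x * S.w y z) x y) = (t ^ 2 * q⁻¹) * f x := by
  have h := S.capnat2 (fun x y z => f x * S.w y z) x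
  simp only [R_mul] at h
  have h2 : ∀ x y, S.R (fun x y => S.w x y) x y = (q * (t⁻¹) ^ 2) * S.w x y := S.Rw
  simp only [h2] at h
  rw [zig1] at h
  have h3 : ∀ x y z, S.R (fun x y => f x * (q * t⁻¹ ^ 2 * S.w y z)) x y
      = (q * t⁻¹ ^ 2) * S.R (fun x y => f x * S.w y z) x y := by
    intro x y z
    have e : (fun x y => f x * (q * t⁻¹ ^ 2 * S.w y z)) = fun x y => (q * t⁻¹ ^ 2) * (f x * S.w y z) := by
      funext y z; ring
    rw [e, R_mul]
  simp only [h3, capF_mul] at h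
  rw [← h]; field_simp

theorem capswap (G : S.I → S.I → S.I → ℝ) (y) :
    capF S.w (fun x z => S.R (fun u v => G u v z) y x)
      = capF S.w (fun x z => S.R (fun u v => G x u v) z y)
        - (q - q⁻¹) * capF S.w (fun u v => G u v y) + (q - q⁻¹) * capF S.w (fun u v => G y u v) := by
  have h := S.capnat2 (fun x y z => S.R (fun y z => G x y z) y z - (q - q⁻¹) * G x y z
    + (q - q⁻¹) * (capF S.w (fun y z => G x y z) * S.w y z)) y
  simp only [R_Rinv, capF_add, capF_sub, capF_mul, zig1] at h
  exact h

theorem cupswap (f : S.I → ℝ) (x y z) :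
    S.R (fun x y => f x * S.w y z) x y
      = S.R (fun y z => f z * S.w x y) y z - (q - q⁻¹) * (f z * S.w x y)
        + (q - q⁻¹) * (f x * S.w y z) := by
  have h := S.Rinv_R (fun y z => S.R (fun x y => f x * S.w y z) x y) (fun y z => f z * S.w x y)
    (fun y z => S.cupnat1 f x y z) y z
  rw [h, zig2]; ring

/-- The extended R-matrix -/
noncomputable def extRfun (f : Option (Option S.I) → Option (Option S.I) → ℝ) :
    Option (Option S.I) → Option (Option S.I) → ℝ
  | none, none => q * f none none
  | some none, some none => q * f (some none) (some none)
  | some (some v), none => f none (some (some v)) + (q - q⁻¹) * f (some (some v)) none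
  | none, some (some v) => f (some (some v)) none
  | some none, some (some v) => f (some (some v)) (some none) + (q - q⁻¹) * f (some none) (some (some v))
  | some (some v), some none => f (some none) (some (some v))
  | none, some none => q⁻¹ * f (some none) none
  | some none, none => q⁻¹ * f none (some none) + (q - q⁻¹) * (1 - (t⁻¹) ^ 2) * f (some none) none
      - (q - q⁻¹) * t⁻¹ * capF S.w (fun u v => f (some (some u)) (some (some v)))
  | some (some u), some (some v) => S.R (fun u v => f (some (some u)) (some (some v))) u v
      - (q - q⁻¹) * t⁻¹ * (f (some none) none * S.w u v)

noncomputable def extR : (Option (Option S.I) → Option (Option S.I) → ℝ) →ₗ[ℝ] (Option (Option S.I) → Option (Option S.I) → ℝ) where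
  toFun := S.extRfun
  map_add' := by
    intro f g
    funext x y
    rcases x with _|_|x <;> rcases y with _|_|y <;> simp [extRfun, capF_add, R_add] <;> ring
  map_smul' := by
    intro c f
    funext x y
    rcases x with _|_|x <;> rcases y with _|_|y <;> simp [extRfun, capF_mul, R_mul] <;> ring

noncomputable def extw : Option (Option S.I) → Option (Option S.I) → ℝ
  | none, some none => t
  | some none, none => t⁻¹
  | some (some u), some (some v) => S.w u v
  | _, _ => 0

theorem capF_extw (f : Option (Option S.I) → Option (Option S.I) → ℝ) :
    capF S.extw f = t * f none (some none) + t⁻¹ * f (some none) none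
      + capF S.w (fun u v => f (some (some u)) (some (some v))) := by
  simp [capF, extw, Fintype.sum_option]
  ring

theorem ext_ybe (hq : q ≠ 0) (ht : t ≠ 0) (F : Option (Option S.I) → Option (Option S.I) → Option (Option S.I) → ℝ) (x y z) :
    S.extRfun (fun x y => S.extRfun (fun y z => S.extRfun (fun x y => F x y z) x y) y z) x y =
    S.extRfun (fun y z => S.extRfun (fun x y => S.extRfun (fun y z => F x y z) y z) x y) y z := by
  rcases x with _|_|x <;> rcases y with _|_|y <;> rcases z with _|_|z <;>
    simp only [extRfun, R_add, R_sub, R_mul, capF_add, capF_sub, capF_mul] <;> try ring1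
  all_goals (try (field_simp; done))
  all_goals (try (field_simp; ring1))
  · rw [S.capR]
    linear_combination (norm := (field_simp; ring1))
      ((q - q⁻¹) ^ 2 * t⁻¹ ^ 2 * F (some none) none none) * S.capw
  · rw [S.capnat1 (fun x y z => F (some (some x)) (some (some y)) (some (some z))), S.zig1, S.capRcup1 hq ht]
    field_simp
    ring1
  · rw [S.capR]
    linear_combination (norm := (field_simp; ring1))
      (-(q - q⁻¹) ^ 2 * t⁻¹ ^ 2 * F (some none) (some none) none) * S.capw
  · rw [S.capswap (fun x y z => F (some (some x)) (some (some y)) (some (some z))), S.zig1, S.zig2]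
    field_simp
    ring1
  · rw [S.quad, S.Rw]
    field_simp
    ring1
  · rw [S.capnat2 (fun x y z => F (some (some x)) (some (some y)) (some (some z))), S.zig2, S.capRcup2 hq ht]
    field_simp
    ring1
  · rw [S.quad, S.Rw]
    field_simp
    ring1
  · rw [S.ybe (fun x y z => F (some (some x)) (some (some y)) (some (some z))), S.cupnat2, S.cupnat1, S.cupswap]
    field_simp
    ring1

/-- Adding a hyperbolic pair. -/
noncomputable def ext (hq : q ≠ 0) (ht : t ≠ 0) : QSpace q (t * q) (k + 1) where
  I := Option (Option S.I)
  fin := inferInstance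
  dec := inferInstance
  R := S.extR
  w := S.extw
  a := Fin.cons none (fun i => some (some (S.a i)))
  A := fun x => match x with
    | none => True
    | some none => False
    | some (some x) => S.A x
  ybe := S.ext_ybe hq ht
  quad := by
    intro f x y
    change S.extRfun (S.extRfun f) x y = f x y + (q - q⁻¹) * S.extRfun f x y - _
    rw [capF_extw]
    rcases x with _|_|x <;> rcases y with _|_|y <;>
    simp only [extRfun, R_add, R_sub, R_mul, capF_add, capF_sub, capF_mul, extw]
    all_goals (try (field_simp; done))
    all_goals (try (field_simp; ring1))
    · rw [S.capR]
      linear_combination (norm := (field_simp; ring1))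
        ((q - q⁻¹) * t⁻¹ ^ 2 * f (some none) none) * S.capw
    · rw [S.quad, S.Rw]
      field_simp
      ring1
  Rw := by
    intro x y
    change S.extRfun S.extw x y = _
    rcases x with _|_|x <;> rcases y with _|_|y <;> simp only [extRfun, extw]
    all_goals (try (field_simp; done))
    all_goals (try (field_simp; ring1))
    · linear_combination (norm := (field_simp; ring1)) (-t⁻¹) * S.capw
    · rw [S.Rw]
      field_simp
      ring1
  capR := by
    intro f
    change capF S.extw (S.extRfun f) = _
    rw [capF_extw, capF_extw]
    simp only [extRfun, R_add, R_sub, R_mul, capF_add, capF_sub, capF_mul, S.capR]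
    linear_combination (norm := (field_simp; ring1)) (-t⁻¹ * f (some none) none) * S.capw
  capw := by
    rw [capF_extw]
    simp only [extw]
    linear_combination (norm := (field_simp; ring1)) S.capw
  ww := by
    intro x y
    rcases x with _|_|x <;> rcases y with _|_|y <;> simp [extw, Fintype.sum_option, S.ww, ht]
  capnat1 := by
    intro F z
    change capF S.extw (fun x y => S.extRfun (fun y z => S.extRfun (fun x y => F x y z) x y) y z) = _
    rw [capF_extw, capF_extw]
    rcases z with _|_|z <;>
    simp only [extRfun, R_add, R_sub, R_mul, capF_add, capF_sub, capF_mul]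
    all_goals (try (field_simp; done))
    all_goals (try (field_simp; ring1))
    · rw [S.capR]
      linear_combination (norm := (field_simp; ring1))
        (-(q - q⁻¹) * t⁻¹ * F (some none) none none) * S.capw
    · rw [S.capnat1 (fun x y z => F (some (some x)) (some (some y)) (some (some z))), S.zig1, S.capRcup1 hq ht]
      field_simp
      ring1
  capnat2 := by
    intro F x
    change capF S.extw (fun y z => S.extRfun (fun x y => S.extRfun (fun y z => F x y z) y z) x y) = _
    rw [capF_extw, capF_extw]
    rcases x with _|_|x <;>
    simp only [extRfun, R_add, R_sub, R_mul, capF_add, capF_sub, capF_mul]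
    all_goals (try (field_simp; done))
    all_goals (try (field_simp; ring1))
    · rw [S.capR]
      linear_combination (norm := (field_simp; ring1))
        (-(q - q⁻¹) * t⁻¹ * F (some none) (some none) none) * S.capw
    · rw [S.capnat2 (fun x y z => F (some (some x)) (some (some y)) (some (some z))), S.zig2, S.capRcup2 hq ht]
      field_simp
      ring1
  sym := by
    intro f g
    change ∑ x, ∑ y, f x y * S.extRfun g x y = ∑ x, ∑ y, S.extRfun f x y * g x y
    have h := S.sym (fun u v => f (some (some u)) (some (some v))) (fun u v => g (some (some u)) (some (some v)))
    have e1 : ∑ u, ∑ v, f (some (some u)) (some (some v)) * S.extRfun g (some (some u)) (some (some v))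
        = ∑ u, ∑ v, f (some (some u)) (some (some v)) *
            S.R (fun u v => g (some (some u)) (some (some v))) u v
          - (q - q⁻¹) * t⁻¹ * g (some none) none *
            capF S.w (fun u v => f (some (some u)) (some (some v))) := by
      simp only [extRfun, capF, Finset.mul_sum, ← Finset.sum_sub_distrib]
      refine Finset.sum_congr rfl fun u _ => Finset.sum_congr rfl fun v _ => ?_
      ring
    have e2 : ∑ u, ∑ v, S.extRfun f (some (some u)) (some (some v)) * g (some (some u)) (some (some v))
        = ∑ u, ∑ v, S.R (fun u v => f (some (some u)) (some (some v))) u v *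
            g (some (some u)) (some (some v))
          - (q - q⁻¹) * t⁻¹ * f (some none) none *
            capF S.w (fun u v => g (some (some u)) (some (some v))) := by
      simp only [extRfun, capF, Finset.mul_sum, ← Finset.sum_sub_distrib]
      refine Finset.sum_congr rfl fun u _ => Finset.sum_congr rfl fun v _ => ?_
      ring
    simp only [Fintype.sum_option, Finset.sum_add_distrib, e1, e2]
    simp only [extRfun, mul_add, add_mul, Finset.sum_add_distrib]
    rw [h]
    ring_nf
  hAw := by
    intro x y
    rcases x with _|_|x <;> rcases y with _|_|y <;> simp [extw]
    exact S.hAw x y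
  hAR := by
    intro f hf x y
    change _ → S.extRfun f x y = 0
    rcases x with _|_|x <;> rcases y with _|_|y <;> intro h <;> simp only [extRfun]
    all_goals try simp only [not_true_eq_false, and_self, true_and, and_true, not_false_eq_true] at h
    · rw [hf _ _ (by simp)]; ring
    · rw [hf _ _ (by simpa using h)]
    · rw [hf none (some none) (by simp), hf (some none) none (by simp)]
      have : capF S.w (fun u v => f (some (some u)) (some (some v))) = 0 := by
        refine Finset.sum_eq_zero fun u _ => Finset.sum_eq_zero fun v _ => ?_
        by_cases huv : S.A u ∧ S.A v
        · rw [S.hAw u v huv.1 huv.2]; ring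
        · show S.w u v * f (some (some u)) (some (some v)) = 0
          rw [hf _ _ (by simpa using huv)]; ring
      rw [this]; ring
    · rw [hf _ _ (by simp)]; ring
    · rw [hf _ _ (by simp), hf _ _ (by simp)]; ring
    · rw [hf _ _ (by simpa using h), hf _ _ (by simpa using h)]; ring
    · rw [hf _ _ (by simp)]
    · rw [hf (some none) none (by simp), S.hAR (fun u v => f (some (some u)) (some (some v)))
        (fun u v huv => hf _ _ (by simpa using huv)) x y h]; ring
  hAa := by
    intro i
    refine Fin.cases ?_ ?_ i
    · simp
    · intro i; simpa using S.hAa i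
  hinj := by
    intro i j
    refine Fin.cases ?_ (fun i => ?_) i <;> refine Fin.cases ?_ (fun j => ?_) j <;> simp
    exact fun h => S.hinj h
  hRa := by
    intro i j hij x y
    simp only [extR, LinearMap.coe_mk, AddHom.coe_mk]
    revert hij
    refine Fin.cases ?_ (fun i => ?_) i <;> refine Fin.cases ?_ (fun j => ?_) j
    · simp
    · intro _
      rcases x with _|_|x <;> rcases y with _|_|y <;> simp [extRfun, capF, R_zero]
    · simp
    · intro hij
      have hij' : i < j := by simpa using hij
      have h0 : capF S.w (fun x y => if x = S.a i ∧ y = S.a j then 1 else 0) = 0 := by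
        refine Finset.sum_eq_zero fun u _ => Finset.sum_eq_zero fun v _ => ?_
        beta_reduce
        split_ifs with h
        · rw [h.1, h.2, S.hAw _ _ (S.hAa i) (S.hAa j)]; ring
        · ring
      have h1 := S.hRa i j hij'
      rcases x with _|_|x <;> rcases y with _|_|y <;> simp [extRfun, h0, h1]

/-- Iterated extension. -/
theorem exists_space (q : ℝ) (hq : q ≠ 0) (k : ℕ) : Nonempty (QSpace q (q ^ k) k) := by
  induction k with
  | zero => rw [pow_zero]; exact ⟨QSpace.zero q⟩
  | succ k ih =>
    obtain ⟨S⟩ := ih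
    rw [pow_succ]
    exact ⟨S.ext hq (pow_ne_zero _ hq)⟩
end QSpace

end Part1

section Part2

section PairRel
variable {K A : Type*} [Field K] [Ring A] [Algebra K A]

/-- Numerical hypotheses on the parameters. -/
structure Params (l m d : K) : Prop where
  hl : l ≠ 0
  hm : m ≠ 0
  hml : m * l + 1 ≠ 0
  hd : m * (1 - d) = l - l⁻¹

/-- Relations of a single pair `g, e`. -/
structure OneRel (l m d : K) (g e : A) : Prop where
  par : Params l m d
  quad : m • e = l • (g * g + m • g - 1)
  ge : g * e = l⁻¹ • e

namespace OneRel
variable {l m d : K} {g e : A} (H : OneRel l m d g e)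

theorem gg (H : OneRel l m d g e) : g * g = 1 - m • g + (m * l⁻¹) • e := by
  have h := H.quad
  have : (m * l⁻¹) • e = g * g + m • g - 1 := by
    rw [mul_comm, mul_smul, h, smul_smul, inv_mul_cancel₀ H.par.hl, one_smul]
  rw [this]; abel

theorem e_eq (H : OneRel l m d g e) : e = (l * m⁻¹) • (g * g + m • g - 1) := by
  rw [mul_comm, mul_smul, ← H.quad, smul_smul, inv_mul_cancel₀ H.par.hm, one_smul]

theorem eg (H : OneRel l m d g e) : e * g = l⁻¹ • e := by
  rw [← H.ge]
  rw [H.e_eq]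
  simp only [smul_mul_assoc, mul_smul_comm, mul_add, add_mul, mul_sub, sub_mul, mul_one, one_mul, mul_assoc]

theorem ee (H : OneRel l m d g e) : e * e = d • e := by
  have h : m • (e * e) = (m * d) • e := by
    rw [← smul_mul_assoc, H.quad]
    simp only [smul_mul_assoc, add_mul, sub_mul, one_mul, mul_assoc, H.ge, mul_smul_comm, smul_smul, smul_add, smul_sub]
    rw [← add_smul, ← sub_smul]
    congr 1
    have := H.par.hd
    have hl := H.par.hl
    field_simp at this ⊢
    linear_combination this
  have := congrArg (fun x => m⁻¹ • x) h
  simpa [smul_smul, ← mul_assoc, inv_mul_cancel₀ H.par.hm] using this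

theorem g_inv (H : OneRel l m d g e) : g * (g + m • 1 - m • e) = 1 := by
  simp only [mul_add, mul_sub, mul_smul_comm, mul_one, H.gg, H.ge, smul_smul]
  abel

theorem inv_g (H : OneRel l m d g e) : (g + m • 1 - m • e) * g = 1 := by
  simp only [add_mul, sub_mul, smul_mul_assoc, one_mul, H.gg, H.eg, smul_smul]
  abel

theorem op (H : OneRel l m d g e) : OneRel l m d (MulOpposite.op g) (MulOpposite.op e) where
  par := H.par
  quad := by
    rw [← MulOpposite.op_smul, H.quad]
    simp
  ge := by
    rw [← MulOpposite.op_mul, H.eg]; simp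

end OneRel

/-- Relations of two adjacent pairs. -/
structure PairRel (l m d : K) (g e h f : A) : Prop where
  one : OneRel l m d g e
  two : OneRel l m d h f
  braid : g * h * g = h * g * h
  ehe : e * h * e = l • e
  fgf : f * g * f = l • f

namespace PairRel
variable {l m d : K} {g e h f : A} (H : PairRel l m d g e h f)

theorem swap (H : PairRel l m d g e h f) : PairRel l m d h f g e := ⟨H.two, H.one, H.braid.symm, H.fgf, H.ehe⟩

theorem op (H : PairRel l m d g e h f) : PairRel l m d (MulOpposite.op g) (MulOpposite.op e) (MulOpposite.op h) (MulOpposite.op f) where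
  one := H.one.op
  two := H.two.op
  braid := by simp only [← MulOpposite.op_mul, ← mul_assoc, H.braid]
  ehe := by simp only [← MulOpposite.op_mul, ← mul_assoc, H.ehe, MulOpposite.op_smul]
  fgf := by simp only [← MulOpposite.op_mul, ← mul_assoc, H.fgf, MulOpposite.op_smul]

theorem ghe (H : PairRel l m d g e h f) : g * h * e = f * g * h := by
  have h1 : g * h * (g * g) = h * h * (g * h) := by
    calc g * h * (g * g) = (g * h * g) * g := by noncomm_ring
      _ = h * (g * h * g) := by
          conv_lhs => rw [H.braid]
          simp only [mul_assoc]
      _ = _ := by rw [H.braid]; simp only [mul_assoc]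
  rw [H.one.e_eq, H.two.e_eq]
  simp only [smul_mul_assoc, mul_smul_comm, mul_add, add_mul, mul_sub, sub_mul, mul_one, one_mul]
  rw [h1, H.braid]
  simp only [mul_assoc]

theorem hgfe (H : PairRel l m d g e h f) : h * g * f * e = e := by
  rw [H.swap.ghe, mul_assoc, H.one.ge, mul_smul_comm, H.ehe, smul_smul, inv_mul_cancel₀ H.one.par.hl, one_smul]

theorem gfe (H : PairRel l m d g e h f) : g * f * e = (h + m • 1 - m • f) * e := by
  conv_rhs => rw [← H.hgfe]
  simp only [← mul_assoc, H.two.inv_g, one_mul]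

theorem efe (H : PairRel l m d g e h f) : e * f * e = e := by
  have h1 : e * (g * f * e) = l⁻¹ • (e * f * e) := by
    simp only [← mul_assoc, H.one.eg, smul_mul_assoc]
  rw [H.gfe] at h1
  simp only [add_mul, sub_mul, mul_add, mul_sub, smul_mul_assoc, one_mul, mul_smul_comm, ← mul_assoc, H.ehe, H.one.ee, smul_smul] at h1
  have hl := H.one.par.hl
  have hd := H.one.par.hd
  have h2 : (l + m * d) • e = (l⁻¹ + m) • (e * f * e) := by
    rw [add_smul, add_smul, ← h1]; abel
  have h3 : l + m * d = l⁻¹ + m := by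
    linear_combination -hd
  rw [h3] at h2
  have h4 : l⁻¹ + m ≠ 0 := by
    have := H.one.par.hml
    intro h0
    apply this
    have : l * (l⁻¹ + m) = 0 := by rw [h0, mul_zero]
    rw [mul_add, mul_inv_cancel₀ hl] at this
    linear_combination this
  exact (smul_right_injective A h4 h2).symm

theorem ghe' (H : PairRel l m d g e h f) : g * h * e = f * e := by
  have h1 : (g + m • 1 - m • e) * f * e = h * e := by
    simp only [add_mul, sub_mul, smul_mul_assoc, one_mul, H.gfe, H.efe]
    abel
  rw [mul_assoc, ← h1]
  simp only [← mul_assoc, H.one.g_inv, one_mul]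

theorem ehg (H : PairRel l m d g e h f) : e * h * g = e * f := by
  have := congrArg MulOpposite.unop H.op.ghe'
  simpa [mul_assoc] using this

theorem efg (H : PairRel l m d g e h f) : e * f * g = e * (h + m • 1 - m • f) := by
  have := congrArg MulOpposite.unop H.op.gfe
  simpa [mul_assoc] using this

/-- `h e h = g⁻¹ f g⁻¹`. -/
theorem heh (H : PairRel l m d g e h f) : h * e * h = (g + m • 1 - m • e) * f * (g + m • 1 - m • e) := by
  have h1 : g * (h * e * h) = f * (g + m • 1 - m • e) := by
    rw [← H.swap.efg, ← H.ghe']; simp only [mul_assoc]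
  rw [mul_assoc _ f, ← h1, ← mul_assoc, H.one.inv_g, one_mul]

end PairRel
end PairRel

section Fam
variable {K A : Type*} [Field K] [Ring A] [Algebra K A]

/-- A family of elements satisfying the BMW relations of type `A_N`. -/
structure Fam (l m d : K) (N : ℕ) (g e : ℕ → A) : Prop where
  par : Params l m d
  comm : ∀ i j, i < N → j < N → i + 2 ≤ j → g i * g j = g j * g i
  braid : ∀ i, i + 1 < N → g i * g (i + 1) * g i = g (i + 1) * g i * g (i + 1)
  quad : ∀ i, i < N → m • e i = l • (g i * g i + m • g i - 1)
  ge : ∀ i, i < N → g i * e i = l⁻¹ • e i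
  ege : ∀ i, i + 1 < N → e i * g (i + 1) * e i = l • e i
  ege' : ∀ i, i + 1 < N → e (i + 1) * g i * e (i + 1) = l • e (i + 1)

namespace Fam
variable {l m d : K} {N : ℕ} {g e : ℕ → A} (H : Fam l m d N g e)

theorem mono (H : Fam l m d N g e) {M : ℕ} (h : M ≤ N) : Fam l m d M g e where
  par := H.par
  comm := fun i j hi hj => H.comm i j (by omega) (by omega)
  braid := fun i hi => H.braid i (by omega)
  quad := fun i hi => H.quad i (by omega)
  ge := fun i hi => H.ge i (by omega)
  ege := fun i hi => H.ege i (by omega)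
  ege' := fun i hi => H.ege' i (by omega)


theorem one (H : Fam l m d N g e) (i : ℕ) (hi : i < N) : OneRel l m d (g i) (e i) := ⟨H.par, H.quad i hi, H.ge i hi⟩

theorem pair (H : Fam l m d N g e) (i : ℕ) (hi : i + 1 < N) : PairRel l m d (g i) (e i) (g (i+1)) (e (i+1)) :=
  ⟨H.one i (by omega), H.one _ hi, H.braid i hi, H.ege i hi, H.ege' i hi⟩

theorem comm_e (H : Fam l m d N g e) (x : A) (i : ℕ) (hi : i < N) (h : x * g i = g i * x) : x * e i = e i * x := by
  rw [(H.one i hi).e_eq]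
  simp only [smul_mul_assoc, mul_smul_comm, mul_add, add_mul, mul_sub, sub_mul, mul_one, one_mul, mul_assoc, h]
  simp only [← mul_assoc, h]
  rw [mul_assoc (g i) x, h, mul_assoc]

end Fam

/-- The subalgebra generated by the first `k` generators. -/
def SubK (K : Type*) {A : Type*} [Field K] [Ring A] [Algebra K A] (g : ℕ → A) (k : ℕ) : Subalgebra K A :=
  Algebra.adjoin K {x | ∃ i, i < k ∧ x = g i}

theorem g_mem_SubK (g : ℕ → A) {i k : ℕ} (h : i < k) : g i ∈ SubK K g k :=
  Algebra.subset_adjoin ⟨i, h, rfl⟩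

theorem SubK_mono (g : ℕ → A) {i k : ℕ} (h : i ≤ k) : SubK K g i ≤ SubK K g k :=
  Algebra.adjoin_mono (fun x ⟨j, hj, hx⟩ => ⟨j, by omega, hx⟩)

theorem SubK_comm (g : ℕ → A) {k : ℕ} (y : A) (h : ∀ i < k, g i * y = y * g i) {x : A}
    (hx : x ∈ SubK K g k) : x * y = y * x := by
  induction hx using Algebra.adjoin_induction with
  | mem x hx => obtain ⟨i, hi, rfl⟩ := hx; exact h i hi
  | algebraMap r => exact Algebra.commutes r y
  | add a b _ _ ha hb => rw [add_mul, mul_add, ha, hb]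
  | mul a b _ _ ha hb => rw [mul_assoc, hb, ← mul_assoc, ha, mul_assoc]

theorem SubK_le (g : ℕ → A) {k : ℕ} (M : Submodule K A) (h1 : (1 : A) ∈ M)
    (h : ∀ i < k, ∀ y ∈ M, g i * y ∈ M) {x : A} (hx : x ∈ SubK K g k) : x ∈ M := by
  suffices ∀ y ∈ M, x * y ∈ M by simpa using this 1 h1
  induction hx using Algebra.adjoin_induction with
  | mem x hx => obtain ⟨i, hi, rfl⟩ := hx; exact h i hi
  | algebraMap r => intro y hy; rw [← Algebra.smul_def]; exact M.smul_mem _ hy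
  | add a b _ _ ha hb => intro y hy; rw [add_mul]; exact M.add_mem (ha y hy) (hb y hy)
  | mul a b _ _ ha hb => intro y hy; rw [mul_assoc]; exact ha _ (hb y hy)

/-- span of `1, g, e`. -/
def X3 (K : Type*) {A : Type*} [Field K] [Ring A] [Algebra K A] (g e : A) : Submodule K A :=
  Submodule.span K {1, g, e}

/-- `S_k X_k S_k`. -/
def SXS (K : Type*) {A : Type*} [Field K] [Ring A] [Algebra K A] (g e : ℕ → A) (k : ℕ) : Submodule K A :=
  Subalgebra.toSubmodule (SubK K g k) * X3 K (g k) (e k) * Subalgebra.toSubmodule (SubK K g k)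

theorem SXS_mem {g e : ℕ → A} {k : ℕ} {a x b : A} (ha : a ∈ SubK K g k) (hx : x ∈ X3 K (g k) (e k))
    (hb : b ∈ SubK K g k) : a * x * b ∈ SXS K g e k :=
  Submodule.mul_mem_mul (Submodule.mul_mem_mul ha hx) hb

theorem SXS_mul_left {g e : ℕ → A} {k : ℕ} {a x : A} (ha : a ∈ SubK K g k) (hx : x ∈ SXS K g e k) :
    a * x ∈ SXS K g e k := by
  have : a * x ∈ Subalgebra.toSubmodule (SubK K g k) * SXS K g e k := Submodule.mul_mem_mul ha hx
  rw [SXS, ← mul_assoc, ← mul_assoc, (Subalgebra.isIdempotentElem_toSubmodule _).eq] at this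
  exact this
theorem SXS_mul_right {g e : ℕ → A} {k : ℕ} {a x : A} (ha : a ∈ SubK K g k) (hx : x ∈ SXS K g e k) :
    x * a ∈ SXS K g e k := by
  have : x * a ∈ SXS K g e k * Subalgebra.toSubmodule (SubK K g k) := Submodule.mul_mem_mul hx ha
  rw [SXS, mul_assoc, (Subalgebra.isIdempotentElem_toSubmodule _).eq] at this
  exact this

theorem one_X3 (g e : A) : (1 : A) ∈ X3 K g e := Submodule.subset_span (by simp)
theorem g_X3 (g e : A) : g ∈ X3 K g e := Submodule.subset_span (by simp)
theorem e_X3 (g e : A) : e ∈ X3 K g e := Submodule.subset_span (by simp)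

/-- Induction principle. -/
theorem X3_ind {g e : A} (M : Submodule K A) (p : A →ₗ[K] A) (h1 : p 1 ∈ M) (hg : p g ∈ M) (he : p e ∈ M) {x : A}
    (hx : x ∈ X3 K g e) : p x ∈ M := by
  have : X3 K g e ≤ M.comap p := by
    rw [X3, Submodule.span_le]
    intro y hy
    rcases hy with rfl | rfl | rfl
    · exact h1
    · exact hg
    · exact he
  exact this hx

theorem SXS_ind {g e : ℕ → A} {k : ℕ} (M : Submodule K A) (p : A →ₗ[K] A)
    (h : ∀ a ∈ SubK K g k, ∀ x ∈ X3 K (g k) (e k), ∀ b ∈ SubK K g k, p (a * x * b) ∈ M) {x : A}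
    (hx : x ∈ SXS K g e k) : p x ∈ M := by
  have : SXS K g e k ≤ M.comap p := by
    rw [SXS, Submodule.mul_le]
    intro y hy b hb
    have : Subalgebra.toSubmodule (SubK K g k) * X3 K (g k) (e k) ≤ M.comap (p ∘ₗ LinearMap.mulRight K b) := by
      rw [Submodule.mul_le]
      intro a ha x hx
      exact h a ha x hx b hb
    exact this hy
  exact this hx

namespace Fam
variable {l m d : K} {N : ℕ} {g e : ℕ → A} (H : Fam l m d N g e)

theorem e_mem (H : Fam l m d N g e) {i k : ℕ} (hi : i < k) (hk : i < N) : e i ∈ SubK K g k := by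
  rw [(H.one i hk).e_eq]
  have := g_mem_SubK (K := K) g hi
  exact Subalgebra.smul_mem _ (sub_mem (add_mem (mul_mem this this) (Subalgebra.smul_mem _ this _)) (one_mem _)) _

theorem inv_mem (H : Fam l m d N g e) {i k : ℕ} (hi : i < k) (hk : i < N) : g i + m • 1 - m • e i ∈ SubK K g k :=
  sub_mem (add_mem (g_mem_SubK g hi) (Subalgebra.smul_mem _ (one_mem _) _)) (Subalgebra.smul_mem _ (H.e_mem hi hk) _)

theorem sub_comm_g (H : Fam l m d N g e) {k j : ℕ} (hk : k < j) (hj : j < N) {x : A} (hx : x ∈ SubK K g k) : x * g j = g j * x :=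
  SubK_comm g _ (fun i hi => H.comm i j (by omega) hj (by omega)) hx

theorem sub_comm_e (H : Fam l m d N g e) {k j : ℕ} (hk : k < j) (hj : j < N) {x : A} (hx : x ∈ SubK K g k) : x * e j = e j * x :=
  H.comm_e _ _ hj (H.sub_comm_g hk hj hx)

theorem gX3 (H : Fam l m d N g e) {i : ℕ} (hi : i < N) {x : A} (hx : x ∈ X3 K (g i) (e i)) : g i * x ∈ X3 K (g i) (e i) := by
  refine X3_ind (X3 K (g i) (e i)) (LinearMap.mulLeft K (g i)) ?_ ?_ ?_ hx
  · simpa using g_X3 _ _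
  · simp only [LinearMap.mulLeft_apply, (H.one i hi).gg]
    exact add_mem (sub_mem (one_X3 _ _) (Submodule.smul_mem _ _ (g_X3 _ _))) (Submodule.smul_mem _ _ (e_X3 _ _))
  · simp only [LinearMap.mulLeft_apply, H.ge i hi]
    exact Submodule.smul_mem _ _ (e_X3 _ _)

theorem gXX (H : Fam l m d N g e) {k : ℕ} (hk : k + 1 < N) {x y : A} (hx : x ∈ X3 K (g k) (e k)) (hy : y ∈ X3 K (g (k+1)) (e (k+1))) :
    g (k+1) * x * y ∈ SXS K g e (k+1) := by
  have hP := H.pair k hk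
  have hmid : ∀ z ∈ X3 K (g (k+1)) (e (k+1)), z ∈ SXS K g e (k+1) := fun z hz => by
    simpa using SXS_mem (one_mem (SubK K g (k+1))) hz (one_mem _)
  have hgm := g_mem_SubK (K := K) g (Nat.lt_succ_self k)
  have hem := H.e_mem (Nat.lt_succ_self k) (by omega)
  have him := H.inv_mem (Nat.lt_succ_self k) (by omega)
  refine X3_ind (SXS K g e (k+1)) (LinearMap.mulRight K y ∘ₗ LinearMap.mulLeft K (g (k+1))) ?_ ?_ ?_ hx
  · simp only [LinearMap.comp_apply, LinearMap.mulLeft_apply, LinearMap.mulRight_apply, mul_one]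
    exact hmid _ (H.gX3 hk hy)
  · simp only [LinearMap.comp_apply, LinearMap.mulLeft_apply, LinearMap.mulRight_apply]
    refine X3_ind (SXS K g e (k+1)) (LinearMap.mulLeft K (g (k+1) * g k)) ?_ ?_ ?_ hy <;>
      simp only [LinearMap.mulLeft_apply, mul_one]
    · exact SXS_mul_right hgm (hmid _ (g_X3 _ _))
    · rw [← hP.braid]
      exact SXS_mem hgm (g_X3 _ _) hgm
    · rw [hP.swap.ghe']
      exact SXS_mul_left hem (hmid _ (e_X3 _ _))
  · simp only [LinearMap.comp_apply, LinearMap.mulLeft_apply, LinearMap.mulRight_apply]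
    refine X3_ind (SXS K g e (k+1)) (LinearMap.mulLeft K (g (k+1) * e k)) ?_ ?_ ?_ hy <;>
      simp only [LinearMap.mulLeft_apply, mul_one]
    · exact SXS_mul_right hem (hmid _ (g_X3 _ _))
    · rw [hP.heh]
      exact SXS_mem him (e_X3 _ _) him
    · rw [hP.swap.gfe]
      exact SXS_mul_left him (hmid _ (e_X3 _ _))

theorem le_SXS (H : Fam l m d N g e) (k : ℕ) (hk : k < N) {x : A} (hx : x ∈ SubK K g (k+1)) : x ∈ SXS K g e k := by
  have h1 : ∀ z ∈ X3 K (g k) (e k), z ∈ SXS K g e k := fun z hz => by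
    simpa using SXS_mem (one_mem (SubK K g k)) hz (one_mem _)
  induction k generalizing x with
  | zero =>
    refine SubK_le g _ (h1 _ (one_X3 _ _)) ?_ hx
    intro i hi y hy
    obtain rfl : i = 0 := by omega
    refine SXS_ind _ (LinearMap.mulLeft K (g 0)) ?_ hy
    intro a ha x hx b hb
    rw [LinearMap.mulLeft_apply]
    have ha' : a * g 0 = g 0 * a := SubK_comm g _ (fun i hi => by omega) ha
    rw [← mul_assoc, ← mul_assoc, ← ha', mul_assoc a]
    exact SXS_mem ha (H.gX3 hk hx) hb
  | succ k ih =>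
    refine SubK_le g _ (h1 _ (one_X3 _ _)) ?_ hx
    intro i hi y hy
    by_cases hi' : i < k + 1
    · exact SXS_mul_left (g_mem_SubK g hi') hy
    obtain rfl : i = k + 1 := by omega
    refine SXS_ind _ (LinearMap.mulLeft K (g (k+1))) ?_ hy
    intro a ha x hx b hb
    rw [LinearMap.mulLeft_apply, ← mul_assoc]
    refine SXS_mul_right hb ?_
    have ha2 := ih (by omega) ha (fun z hz => by simpa using SXS_mem (one_mem (SubK K g k)) hz (one_mem _))
    refine SXS_ind _ (LinearMap.mulLeft K (g (k+1)) ∘ₗ LinearMap.mulRight K x) ?_ ha2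
    intro a' ha' y hy b' hb'
    simp only [LinearMap.comp_apply, LinearMap.mulLeft_apply, LinearMap.mulRight_apply]
    have hbx : b' * x = x * b' := by
      have := X3_ind (⊥ : Submodule K A) (LinearMap.mulLeft K b' - LinearMap.mulRight K b') (by simp)
        (by simp [H.sub_comm_g (Nat.lt_succ_self k) hk hb']) (by simp [H.sub_comm_e (Nat.lt_succ_self k) hk hb']) hx
      simpa [sub_eq_zero] using this
    have : g (k+1) * (a' * y * b' * x) = a' * (g (k+1) * y * x) * b' := by
      rw [mul_assoc _ b', hbx]
      simp only [← mul_assoc, ← H.sub_comm_g (Nat.lt_succ_self k) hk ha']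
    rw [this]
    have hle := SubK_mono (K := K) g (Nat.le_succ k)
    exact SXS_mul_right (hle hb') (SXS_mul_left (hle ha') (H.gXX hk hy hx))

theorem fg (H : Fam l m d N g e) (k : ℕ) (hk : k ≤ N) : (Subalgebra.toSubmodule (SubK K g k)).FG := by
  induction k with
  | zero =>
    have : Subalgebra.toSubmodule (SubK K g 0) ≤ Submodule.span K {1} := by
      intro x hx
      exact SubK_le g _ (Submodule.subset_span (Set.mem_singleton _)) (fun i hi => by omega) hx
    exact Submodule.FG.of_le_of_isNoetherian this
  | succ k ih =>
    have h := ih (by omega)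
    have h2 : (SXS K g e k).FG := (h.mul (Submodule.fg_span (by simp))).mul h
    haveI := Module.Finite.of_fg h2
    exact Submodule.FG.of_le_of_isNoetherian (fun x hx => H.le_SXS k (by omega) hx)


/-- `S_{M+1} e_M ⊆ S_M e_M`. -/
theorem Be (H : Fam l m d N g e) (M : ℕ) (hM : M < N) {x : A} (hx : x ∈ SubK K g (M+1)) :
    ∃ y ∈ SubK K g M, x * e M = y * e M := by
  let P : Submodule K A := (Subalgebra.toSubmodule (SubK K g M)).map (LinearMap.mulRight K (e M))
  suffices x * e M ∈ P by
    obtain ⟨y, hy, h⟩ := this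
    exact ⟨y, hy, h.symm⟩
  have hP : ∀ y ∈ SubK K g M, y * e M ∈ P := fun y hy => ⟨y, hy, rfl⟩
  have hPl : ∀ a ∈ SubK K g M, ∀ y ∈ P, a * y ∈ P := by
    rintro a ha _ ⟨y, hy, rfl⟩
    exact ⟨a * y, (SubK K g M).mul_mem ha hy, by simp [mul_assoc]⟩
  have h1 := hP 1 (one_mem _)
  rw [one_mul] at h1
  have h2 := H.le_SXS M hM hx
  refine SXS_ind P (LinearMap.mulRight K (e M)) ?_ h2
  intro a ha x hx b hb
  rw [LinearMap.mulRight_apply, mul_assoc, mul_assoc]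
  refine hPl a ha _ ?_
  rcases M with _ | M
  · have : b * e 0 = e 0 * b := SubK_comm g _ (fun i hi => by omega) hb
    have hxe : x * e 0 ∈ P := by
      refine X3_ind P (LinearMap.mulRight K (e 0)) ?_ ?_ ?_ hx <;> rw [LinearMap.mulRight_apply]
      · simpa using h1
      · rw [H.ge 0 hM]; exact P.smul_mem _ h1
      · rw [(H.one 0 hM).ee]; exact P.smul_mem _ h1
    obtain ⟨y, hy, h⟩ := hxe
    refine ⟨y * b, (SubK K g 0).mul_mem hy hb, ?_⟩
    simp only [LinearMap.mulRight_apply] at h ⊢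
    rw [this, ← mul_assoc, ← h, mul_assoc y b, this, mul_assoc]
  · have hb2 := H.le_SXS M (by omega) hb
    refine SXS_ind P (LinearMap.mulLeft K x ∘ₗ LinearMap.mulRight K (e (M+1))) ?_ hb2
    intro a' ha' y hy b' hb'
    simp only [LinearMap.comp_apply, LinearMap.mulLeft_apply, LinearMap.mulRight_apply]
    have hle := SubK_mono (K := K) g (Nat.le_succ M)
    have hax : a' * x = x * a' := by
      have := X3_ind (⊥ : Submodule K A) (LinearMap.mulLeft K a' - LinearMap.mulRight K a') (by simp)
        (by simp [H.sub_comm_g (Nat.lt_succ_self M) hM ha']) (by simp [H.sub_comm_e (Nat.lt_succ_self M) hM ha']) hx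
      simpa [sub_eq_zero] using this
    have hbe := H.sub_comm_e (Nat.lt_succ_self M) hM hb'
    have : x * (a' * y * b' * e (M+1)) = a' * (x * y * e (M+1) * b') := by
      rw [mul_assoc _ b', hbe]
      simp only [← mul_assoc, hax]
    rw [this]
    refine hPl _ (hle ha') _ ?_
    have hpair := H.pair M hM
    have hgm := g_mem_SubK (K := K) g (Nat.lt_succ_self M)
    have hem := H.e_mem (Nat.lt_succ_self M) (by omega)
    have him := H.inv_mem (Nat.lt_succ_self M) (by omega)
    have hxy : x * y * e (M+1) ∈ P := by
      refine X3_ind P (LinearMap.mulRight K (e (M+1)) ∘ₗ LinearMap.mulRight K y) ?_ ?_ ?_ hx <;>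
        simp only [LinearMap.comp_apply, LinearMap.mulRight_apply, one_mul]
      · refine X3_ind P (LinearMap.mulRight K (e (M+1))) ?_ ?_ ?_ hy <;>
          simp only [LinearMap.mulRight_apply, one_mul]
        · exact h1
        · exact hP _ hgm
        · exact hP _ hem
      · refine X3_ind P (LinearMap.mulRight K (e (M+1)) ∘ₗ LinearMap.mulLeft K (g (M+1))) ?_ ?_ ?_ hy <;>
          simp only [LinearMap.comp_apply, LinearMap.mulLeft_apply, LinearMap.mulRight_apply, mul_one]
        · rw [H.ge _ hM]; exact P.smul_mem _ h1
        · rw [hpair.swap.ghe']; exact hP _ hem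
        · rw [hpair.swap.gfe]; exact hP _ him
      · refine X3_ind P (LinearMap.mulRight K (e (M+1)) ∘ₗ LinearMap.mulLeft K (e (M+1))) ?_ ?_ ?_ hy <;>
          simp only [LinearMap.comp_apply, LinearMap.mulLeft_apply, LinearMap.mulRight_apply, mul_one]
        · rw [(H.one _ hM).ee]; exact P.smul_mem _ h1
        · rw [hpair.fgf]; exact P.smul_mem _ h1
        · rw [hpair.swap.efe]; exact h1
    obtain ⟨z, hz, h⟩ := hxy
    refine ⟨z * b', (SubK K g (M+1)).mul_mem hz (hle hb'), ?_⟩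
    simp only [LinearMap.mulRight_apply] at h ⊢
    rw [← h, mul_assoc, hbe, mul_assoc]

/-- `e_M S_{M+1} e_M ⊆ S_{M-1} e_M`. -/
theorem eBe (H : Fam l m d N g e) (M : ℕ) (hM : M < N) {x : A} (hx : x ∈ SubK K g (M+1)) :
    ∃ y ∈ SubK K g (M-1), e M * x * e M = y * e M := by
  obtain ⟨x', hx', h⟩ := H.Be M hM hx
  rw [mul_assoc, h, ← mul_assoc]
  clear h hx x
  rcases M with _ | M
  · have : x' * e 0 = e 0 * x' := SubK_comm g _ (fun i hi => by omega) hx'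
    refine ⟨d • x', Subalgebra.smul_mem _ hx' _, ?_⟩
    rw [mul_assoc, this, ← mul_assoc, (H.one 0 hM).ee, smul_mul_assoc, smul_mul_assoc, this]
  · let P : Submodule K A := (Subalgebra.toSubmodule (SubK K g M)).map (LinearMap.mulRight K (e (M+1)))
    suffices e (M+1) * x' * e (M+1) ∈ P by
      obtain ⟨y, hy, h⟩ := this
      exact ⟨y, hy, h.symm⟩
    have hpair := H.pair M hM
    have hb2 := H.le_SXS M (by omega) hx'
    refine SXS_ind P (LinearMap.mulRight K (e (M+1)) ∘ₗ LinearMap.mulLeft K (e (M+1))) ?_ hb2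
    intro a ha y hy b hb
    simp only [LinearMap.comp_apply, LinearMap.mulLeft_apply, LinearMap.mulRight_apply, mul_one]
    have hbe := H.sub_comm_e (Nat.lt_succ_self M) hM hb
    have hae := H.sub_comm_e (Nat.lt_succ_self M) hM ha
    have h1 : e (M+1) ∈ Submodule.span K {e (M+1)} := Submodule.subset_span rfl
    have hy2 : e (M+1) * y * e (M+1) ∈ Submodule.span K {e (M+1)} := by
      refine X3_ind _ (LinearMap.mulRight K (e (M+1)) ∘ₗ LinearMap.mulLeft K (e (M+1))) ?_ ?_ ?_ hy <;>
        simp only [LinearMap.comp_apply, LinearMap.mulLeft_apply, LinearMap.mulRight_apply, mul_one]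
      · rw [(H.one _ hM).ee]; exact Submodule.smul_mem _ _ h1
      · rw [hpair.fgf]; exact Submodule.smul_mem _ _ h1
      · rw [hpair.swap.efe]; exact h1
    obtain ⟨c, hc⟩ := Submodule.mem_span_singleton.1 hy2
    refine ⟨c • (a * b), Subalgebra.smul_mem _ (mul_mem ha hb) _, ?_⟩
    rw [LinearMap.mulRight_apply]
    calc (c • (a * b)) * e (M+1) = a * (c • e (M+1)) * b := by
          simp only [smul_mul_assoc, mul_smul_comm, mul_assoc, hbe]
      _ = a * (e (M+1) * y * e (M+1)) * b := by rw [hc]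
      _ = _ := by simp only [mul_assoc, ← hbe]; simp only [← mul_assoc, hae]

end Fam
end Fam

end Part2

section Part3

theorem deltaVar_ne_zero : deltaVar ≠ 0 := by
  simp [deltaVar, RatFunc.X_ne_zero]

theorem one_sub_delta_ne : (1 : BMWField) - deltaVar ≠ 0 := by
  intro h
  have h1 : (RatFunc.C (1 : RatFunc ℚ) : BMWField) = RatFunc.C (RatFunc.X : RatFunc ℚ) := by
    rw [map_one]; exact sub_eq_zero.1 h
  have h2 := (RatFunc.C (K := RatFunc ℚ)).injective h1
  have h3 : (algebraMap (Polynomial ℚ) (RatFunc ℚ)) 1 = algebraMap (Polynomial ℚ) (RatFunc ℚ) Polynomial.X := by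
    simpa using h2
  have h4 := RatFunc.algebraMap_injective ℚ h3
  have := congrArg (Polynomial.eval 0) h4
  simp at this

theorem l_sq_ne (c : RatFunc ℚ) : lVar ^ 2 ≠ RatFunc.C c := by
  intro h
  have h3 : (algebraMap (Polynomial (RatFunc ℚ)) BMWField) (Polynomial.X ^ 2) = algebraMap _ _ (Polynomial.C c) := by
    simpa [lVar] using h
  have h4 := RatFunc.algebraMap_injective _ h3
  have := congrArg Polynomial.natDegree h4
  simp at this

theorem params : Params lVar mVar deltaVar where
  hl := RatFunc.X_ne_zero
  hm := by
    have hl : lVar ≠ 0 := RatFunc.X_ne_zero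
    refine div_ne_zero ?_ one_sub_delta_ne
    intro h
    apply l_sq_ne 1
    rw [map_one]
    field_simp at h
    linear_combination h
  hml := by
    have hl : lVar ≠ 0 := RatFunc.X_ne_zero
    have h1 := one_sub_delta_ne
    intro h
    apply l_sq_ne RatFunc.X
    change _ = deltaVar
    rw [mVar] at h
    field_simp at h
    linear_combination h
  hd := by
    rw [mVar, div_mul_cancel₀ _ one_sub_delta_ne]

/-- The algebra `B(A_N)`. -/
abbrev BA (N : ℕ) : Type := BMWAlgebra N (typeA N)
/-- The Hecke algebra with `N` generators. -/
abbrev HA (N : ℕ) : Type := RingQuot (HeckeRel N)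

theorem typeA_adj {N : ℕ} (i j : Fin N) : (typeA N).Adj i j ↔ ((i:ℕ) + 1 = j ∨ (j:ℕ) + 1 = i) := by
  rw [typeA, SimpleGraph.fromRel_adj]
  constructor
  · exact fun h => h.2
  · intro h
    refine ⟨?_, h⟩
    rintro rfl
    omega

/-- generators -/
noncomputable def gB (N : ℕ) (i : ℕ) : BA N :=
  if h : i < N then RingQuot.mkAlgHom BMWField (BMWRel N (typeA N)) (FreeAlgebra.ι BMWField (.inl ⟨i, h⟩)) else 0
/-- generators -/
noncomputable def eB (N : ℕ) (i : ℕ) : BA N :=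
  if h : i < N then RingQuot.mkAlgHom BMWField (BMWRel N (typeA N)) (FreeAlgebra.ι BMWField (.inr ⟨i, h⟩)) else 0
/-- generators -/
noncomputable def tH (N : ℕ) (i : ℕ) : HA N :=
  if h : i < N then RingQuot.mkAlgHom BMWField (HeckeRel N) (FreeAlgebra.ι BMWField ⟨i, h⟩) else 0

theorem famB (N : ℕ) : Fam lVar mVar deltaVar N (gB N) (eB N) where
  par := params
  comm := by
    intro i j hi hj hij
    have := RingQuot.mkAlgHom_rel BMWField (BMWRel.gg (Q := typeA N) ⟨i, hi⟩ ⟨j, hj⟩ (by simp; omega)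
      (by rw [typeA_adj]; simp; omega))
    simpa [gB, hi, hj] using this
  braid := by
    intro i hi
    have := RingQuot.mkAlgHom_rel BMWField (BMWRel.braid (Q := typeA N) ⟨i, by omega⟩ ⟨i+1, hi⟩
      (by rw [typeA_adj]; simp))
    have h' : i < N := by omega
    simpa [gB, hi, h'] using this
  quad := by
    intro i hi
    have := RingQuot.mkAlgHom_rel BMWField (BMWRel.quad (Q := typeA N) ⟨i, hi⟩)
    simpa only [gB, eB, hi, dif_pos, map_smul, map_add, map_sub, map_mul, map_one] using this
  ge := by
    intro i hi
    have := RingQuot.mkAlgHom_rel BMWField (BMWRel.ge (Q := typeA N) ⟨i, hi⟩)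
    simpa only [gB, eB, hi, dif_pos, map_smul, map_add, map_sub, map_mul, map_one] using this
  ege := by
    intro i hi
    have := RingQuot.mkAlgHom_rel BMWField (BMWRel.ege (Q := typeA N) ⟨i, by omega⟩ ⟨i+1, hi⟩
      (by rw [typeA_adj]; simp))
    have h' : i < N := by omega
    simpa only [gB, eB, hi, h', dif_pos, map_smul, map_add, map_sub, map_mul, map_one] using this
  ege' := by
    intro i hi
    have := RingQuot.mkAlgHom_rel BMWField (BMWRel.ege (Q := typeA N) ⟨i+1, hi⟩ ⟨i, by omega⟩
      (by rw [typeA_adj]; simp))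
    have h' : i < N := by omega
    simpa only [gB, eB, hi, h', dif_pos, map_smul, map_add, map_sub, map_mul, map_one] using this

theorem famH (N : ℕ) : Fam lVar mVar deltaVar N (tH N) (fun _ => 0) where
  par := params
  comm := by
    intro i j hi hj hij
    have := RingQuot.mkAlgHom_rel BMWField (HeckeRel.comm (N := N) ⟨i, hi⟩ ⟨j, hj⟩ (Or.inl hij))
    simpa [tH, hi, hj] using this
  braid := by
    intro i hi
    have := RingQuot.mkAlgHom_rel BMWField (HeckeRel.braid (N := N) ⟨i, by omega⟩ ⟨i+1, hi⟩ rfl)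
    have h' : i < N := by omega
    simpa [tH, hi, h'] using this
  quad := by
    intro i hi
    have := RingQuot.mkAlgHom_rel BMWField (HeckeRel.quad (N := N) ⟨i, hi⟩)
    simp only [map_smul, map_add, map_sub, map_mul, map_one] at this
    simp only [tH, hi, dif_pos]
    rw [this]; simp
  ge := by simp
  ege := by simp
  ege' := by simp

section Lift
variable {A : Type*} [Ring A] [Algebra BMWField A] {N : ℕ} {g e : ℕ → A}

/-- universal property -/
noncomputable def liftB (H : Fam lVar mVar deltaVar N g e) : BA N →ₐ[BMWField] A :=
  RingQuot.liftAlgHom BMWField ⟨FreeAlgebra.lift BMWField (Sum.elim (fun i => g i) (fun i => e i)), by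
    intro x y h
    induction h with
    | gg i j hne hadj =>
      rw [typeA_adj] at hadj
      have hne' : (i:ℕ) ≠ j := fun h => hne (Fin.ext h)
      simp only [map_mul, FreeAlgebra.lift_ι_apply, Sum.elim_inl]
      rcases lt_or_gt_of_ne hne' with h | h
      · exact H.comm i j i.2 j.2 (by omega)
      · exact (H.comm j i j.2 i.2 (by omega)).symm
    | braid i j hadj =>
      rw [typeA_adj] at hadj
      simp only [map_mul, FreeAlgebra.lift_ι_apply, Sum.elim_inl]
      rcases hadj with h | h
      · rw [← h]; exact H.braid i (by omega)
      · rw [← h]; exact (H.braid j (by omega)).symm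
    | quad i =>
      simp only [map_mul, map_smul, map_add, map_sub, map_one, FreeAlgebra.lift_ι_apply, Sum.elim_inl, Sum.elim_inr]
      exact H.quad i i.2
    | ge i =>
      simp only [map_mul, map_smul, map_add, map_sub, map_one, FreeAlgebra.lift_ι_apply, Sum.elim_inl, Sum.elim_inr]
      exact H.ge i i.2
    | ege i j hadj =>
      rw [typeA_adj] at hadj
      simp only [map_mul, map_smul, FreeAlgebra.lift_ι_apply, Sum.elim_inl, Sum.elim_inr]
      rcases hadj with h | h
      · rw [← h]; exact H.ege i (by omega)
      · rw [← h]; exact H.ege' j (by omega)⟩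

theorem liftB_g (H : Fam lVar mVar deltaVar N g e) {i : ℕ} (hi : i < N) : liftB H (gB N i) = g i := by
  simp [liftB, gB, hi]
theorem liftB_e (H : Fam lVar mVar deltaVar N g e) {i : ℕ} (hi : i < N) : liftB H (eB N i) = e i := by
  simp [liftB, eB, hi]

/-- universal property -/
noncomputable def liftH (H : Fam lVar mVar deltaVar N g e) (he : ∀ i < N, e i = 0) : HA N →ₐ[BMWField] A :=
  RingQuot.liftAlgHom BMWField ⟨FreeAlgebra.lift BMWField (fun i : Fin N => g i), by
    intro x y h
    induction h with
    | comm i j h =>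
      simp only [map_mul, FreeAlgebra.lift_ι_apply]
      rcases h with h | h
      · exact H.comm i j i.2 j.2 h
      · exact (H.comm j i j.2 i.2 h).symm
    | braid i j h =>
      simp only [map_mul, FreeAlgebra.lift_ι_apply]
      rw [← h]; exact H.braid i (by omega)
    | quad i =>
      simp only [map_mul, map_smul, map_add, map_sub, map_one, FreeAlgebra.lift_ι_apply]
      rw [(H.one i i.2).gg, he i i.2]; simp⟩

theorem liftH_t (H : Fam lVar mVar deltaVar N g e) (he : ∀ i < N, e i = 0) {i : ℕ} (hi : i < N) :
    liftH H he (tH N i) = g i := by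
  simp [liftH, tH, hi]

theorem SubK_gB (N : ℕ) : SubK BMWField (gB N) N = ⊤ := by
  rw [eq_top_iff]
  intro x _
  obtain ⟨x, rfl⟩ := RingQuot.mkAlgHom_surjective BMWField _ x
  induction x using FreeAlgebra.induction with
  | grade0 r => rw [AlgHom.commutes]; exact Subalgebra.algebraMap_mem _ _
  | grade1 i =>
    rcases i with i | i
    · have := g_mem_SubK (K := BMWField) (gB N) i.2
      simpa [gB] using this
    · have := (famB N).e_mem i.2 i.2
      simpa [eB] using this
  | mul a b ha hb => rw [map_mul]; exact mul_mem (ha trivial) (hb trivial)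
  | add a b ha hb => rw [map_add]; exact add_mem (ha trivial) (hb trivial)

theorem SubK_tH (N : ℕ) : SubK BMWField (tH N) N = ⊤ := by
  rw [eq_top_iff]
  intro x _
  obtain ⟨x, rfl⟩ := RingQuot.mkAlgHom_surjective BMWField _ x
  induction x using FreeAlgebra.induction with
  | grade0 r => rw [AlgHom.commutes]; exact Subalgebra.algebraMap_mem _ _
  | grade1 i =>
    have := g_mem_SubK (K := BMWField) (tH N) i.2
    simpa [tH] using this
  | mul a b ha hb => rw [map_mul]; exact mul_mem (ha trivial) (hb trivial)
  | add a b ha hb => rw [map_add]; exact add_mem (ha trivial) (hb trivial)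

theorem BA_ind {N : ℕ} {p : BA N → Prop} (hg : ∀ i < N, p (gB N i)) (hs : ∀ c : BMWField, p (algebraMap _ _ c))
    (ha : ∀ x y, p x → p y → p (x + y)) (hm : ∀ x y, p x → p y → p (x * y)) (x : BA N) : p x := by
  have hx : x ∈ SubK BMWField (gB N) N := by rw [SubK_gB]; trivial
  induction hx using Algebra.adjoin_induction with
  | mem x hx => obtain ⟨i, hi, rfl⟩ := hx; exact hg i hi
  | algebraMap r => exact hs r
  | add a b _ _ h1 h2 => exact ha _ _ h1 h2
  | mul a b _ _ h1 h2 => exact hm _ _ h1 h2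

theorem BA_ext {N : ℕ} (φ ψ : BA N →ₐ[BMWField] A) (h : ∀ i < N, φ (gB N i) = ψ (gB N i)) (x : BA N) :
    φ x = ψ x := by
  refine BA_ind (p := fun x => φ x = ψ x) h (fun c => by simp) ?_ ?_ x
  · intro x y hx hy; rw [map_add, map_add, hx, hy]
  · intro x y hx hy; rw [map_mul, map_mul, hx, hy]

end Lift

theorem Fam.op {K A : Type*} [Field K] [Ring A] [Algebra K A] {l m d : K} {N : ℕ} {g e : ℕ → A}
    (H : Fam l m d N g e) :
    Fam l m d N (fun i => MulOpposite.op (g i)) (fun i => MulOpposite.op (e i)) where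
  par := H.par
  comm := fun i j hi hj h => by
    simp only [← MulOpposite.op_mul, H.comm i j hi hj h]
  braid := fun i hi => (H.pair i hi).op.braid
  quad := fun i hi => (H.one i hi).op.quad
  ge := fun i hi => (H.one i hi).op.ge
  ege := fun i hi => (H.pair i hi).op.ehe
  ege' := fun i hi => (H.pair i hi).op.fgf

theorem Fam.map {K A C : Type*} [Field K] [Ring A] [Algebra K A] [Ring C] [Algebra K C]
    {l m d : K} {N : ℕ} {g e : ℕ → A}
    (H : Fam l m d N g e) (φ : A →ₐ[K] C) :
    Fam l m d N (fun i => φ (g i)) (fun i => φ (e i)) where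
  par := H.par
  comm := fun i j hi hj h => by simp only [← map_mul, H.comm i j hi hj h]
  braid := fun i hi => by simp only [← map_mul, H.braid i hi]
  quad := fun i hi => by
    have := congrArg φ (H.quad i hi)
    simpa only [map_smul, map_mul, map_add, map_sub, map_one] using this
  ge := fun i hi => by
    have := congrArg φ (H.ge i hi)
    simpa only [map_smul, map_mul, map_add, map_sub, map_one] using this
  ege := fun i hi => by
    have := congrArg φ (H.ege i hi)
    simpa only [map_smul, map_mul, map_add, map_sub, map_one] using this
  ege' := fun i hi => by
    have := congrArg φ (H.ege' i hi)
    simpa only [map_smul, map_mul, map_add, map_sub, map_one] using this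

/-- the inclusion map -/
noncomputable def incl {M N : ℕ} (h : M ≤ N) : BA M →ₐ[BMWField] BA N := liftB ((famB N).mono h)

theorem incl_g {M N : ℕ} (h : M ≤ N) {i : ℕ} (hi : i < M) : incl h (gB M i) = gB N i := liftB_g _ hi
theorem incl_e {M N : ℕ} (h : M ≤ N) {i : ℕ} (hi : i < M) : incl h (eB M i) = eB N i := liftB_e _ hi

theorem mem_incl {M N : ℕ} (h : M ≤ N) {x : BA N} (hx : x ∈ SubK BMWField (gB N) M) : ∃ y, incl h y = x := by
  have : SubK BMWField (gB N) M ≤ (incl h).range := by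
    refine Algebra.adjoin_le ?_
    rintro _ ⟨i, hi, rfl⟩
    exact ⟨gB M i, incl_g h hi⟩
  exact this hx

theorem incl_mem {M N : ℕ} (h : M ≤ N) (y : BA M) : incl h y ∈ SubK BMWField (gB N) M := by
  refine BA_ind (p := fun y => incl h y ∈ SubK BMWField (gB N) M) ?_ ?_ ?_ ?_ y
  · intro i hi; rw [incl_g h hi]; exact g_mem_SubK _ hi
  · intro c; rw [AlgHom.commutes]; exact Subalgebra.algebraMap_mem _ _
  · intro x y hx hy; rw [map_add]; exact add_mem hx hy
  · intro x y hx hy; rw [map_mul]; exact mul_mem hx hy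

/-- the anti-involution -/
noncomputable def tau {N : ℕ} (x : BA N) : BA N := MulOpposite.unop (liftB (famB N).op x)

section
variable {N : ℕ}
theorem tau_add (x y : BA N) : tau (x + y) = tau x + tau y := by simp [tau]
theorem tau_mul (x y : BA N) : tau (x * y) = tau y * tau x := by simp [tau]
theorem tau_algebraMap (c : BMWField) : tau (algebraMap BMWField (BA N) c) = algebraMap _ _ c := by
  rw [tau, AlgHom.commutes]; rfl
theorem tau_g {i : ℕ} (hi : i < N) : tau (gB N i) = gB N i := by simp [tau, liftB_g _ hi]
theorem tau_e {i : ℕ} (hi : i < N) : tau (eB N i) = eB N i := by simp [tau, liftB_e _ hi]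
theorem tau_zero : tau (0 : BA N) = 0 := by simp [tau]
theorem tau_neg (x : BA N) : tau (-x) = -tau x := by simp [tau]
theorem tau_tau (x : BA N) : tau (tau x) = x := by
  refine BA_ind (p := fun x => tau (tau x) = x) ?_ ?_ ?_ ?_ x
  · intro i hi; rw [tau_g hi, tau_g hi]
  · intro c; rw [tau_algebraMap, tau_algebraMap]
  · intro x y hx hy; rw [tau_add, tau_add, hx, hy]
  · intro x y hx hy; rw [tau_mul, tau_mul, hx, hy]
end

theorem BA_zero (x : BA 0) : ∃ c, x = algebraMap BMWField _ c := by
  refine BA_ind (p := fun x => ∃ c, x = algebraMap BMWField _ c) ?_ ?_ ?_ ?_ x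
  · intro i hi; omega
  · exact fun c => ⟨c, rfl⟩
  · rintro _ _ ⟨c, rfl⟩ ⟨d, rfl⟩; exact ⟨c + d, by simp⟩
  · rintro _ _ ⟨c, rfl⟩ ⟨d, rfl⟩; exact ⟨c * d, by simp⟩

instance BA_finite (N : ℕ) : Module.Finite BMWField (BA N) := by
  have := (famB N).fg N le_rfl
  rw [SubK_gB, Algebra.top_toSubmodule] at this
  exact ⟨this⟩

/-- the ideal generated by `e` -/
def Jid {A : Type*} [Ring A] (e : A) : Ideal A := Ideal.span (Set.range (fun b => e * b))

instance {A : Type*} [Ring A] (e : A) : (Jid e).IsTwoSided := ⟨by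
  intro a b ha
  refine Submodule.span_induction (p := fun a _ => a * b ∈ Jid e) ?_ ?_ ?_ ?_ ha
  · rintro _ ⟨c, rfl⟩
    exact Ideal.subset_span ⟨c * b, by simp [mul_assoc]⟩
  · simp
  · intro x y _ _ hx hy; rw [add_mul]; exact add_mem hx hy
  · intro c x _ hx; rw [smul_eq_mul, mul_assoc]; exact Ideal.mul_mem_left _ _ hx⟩

theorem mem_Jid {A : Type*} [Ring A] {e : A} (a b : A) : a * e * b ∈ Jid e := by
  rw [mul_assoc]; exact Ideal.mul_mem_left _ _ (Ideal.subset_span ⟨b, rfl⟩)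

theorem e_mem_Jid {A : Type*} [Ring A] {e : A} : e ∈ Jid e := by
  simpa using mem_Jid (e := e) 1 1

theorem Jid_ind {A : Type*} [Ring A] {e : A} {p : A → Prop} (h0 : p 0) (ha : ∀ x y, p x → p y → p (x + y))
    (h : ∀ a b, p (a * e * b)) {x : A} (hx : x ∈ Jid e) : p x := by
  have : ∀ a, p (a * x) := by
    refine Submodule.span_induction (p := fun x _ => ∀ a, p (a * x)) ?_ ?_ ?_ ?_ hx
    · rintro _ ⟨c, rfl⟩ a; simpa [mul_assoc] using h a c
    · simpa using h0
    · intro x y _ _ hx hy a; rw [mul_add]; exact ha _ _ (hx a) (hy a)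
    · intro c x _ hx a; rw [smul_eq_mul, ← mul_assoc]; exact hx _
  simpa using this 1

theorem e_mem_J {M i : ℕ} (hi : i ≤ M) : eB (M+1) i ∈ Jid (eB (M+1) M) := by
  induction hi using Nat.decreasingInduction with
  | self => exact e_mem_Jid
  | of_succ k hk ih =>
    rw [← ((famB (M+1)).pair k (by omega)).efe]
    exact Ideal.mul_mem_right _ _ (Ideal.mul_mem_left _ _ ih)

/-- the projection to the Hecke algebra -/
noncomputable def piH (N : ℕ) : BA N →ₐ[BMWField] HA N := liftB (famH N)

theorem famJ (M : ℕ) : Fam lVar mVar deltaVar (M+1) (fun i => Ideal.Quotient.mkₐ BMWField (Jid (eB (M+1) M)) (gB (M+1) i))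
    (fun i => Ideal.Quotient.mkₐ BMWField (Jid (eB (M+1) M)) (eB (M+1) i)) := (famB (M+1)).map _

theorem piH_ker {M : ℕ} {x : BA (M+1)} (hx : piH (M+1) x = 0) : x ∈ Jid (eB (M+1) M) := by
  let ψ := liftH (famJ M) (fun i hi => Ideal.Quotient.eq_zero_iff_mem.2 (e_mem_J (by omega)))
  have h : ∀ y, ψ (piH (M+1) y) = Ideal.Quotient.mkₐ BMWField _ y := by
    intro y
    refine BA_ext (ψ.comp (piH (M+1))) (Ideal.Quotient.mkₐ BMWField _) ?_ y
    intro i hi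
    rw [AlgHom.comp_apply, piH, liftB_g _ hi]; exact liftH_t _ _ hi
  have := h x
  rw [hx, map_zero] at this
  exact Ideal.Quotient.eq_zero_iff_mem.1 this.symm

theorem piH_J {M : ℕ} {x : BA (M+1)} (hx : x ∈ Jid (eB (M+1) M)) : piH (M+1) x = 0 := by
  refine Jid_ind (p := fun x => piH (M+1) x = 0) (map_zero _) ?_ ?_ hx
  · intro x y hx hy; rw [map_add, hx, hy, add_zero]
  · intro a b; rw [map_mul, map_mul, piH, liftB_e _ (by omega)]; simp

theorem HA_ind {N : ℕ} {p : HA N → Prop} (hg : ∀ i < N, p (tH N i)) (hs : ∀ c : BMWField, p (algebraMap _ _ c))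
    (ha : ∀ x y, p x → p y → p (x + y)) (hm : ∀ x y, p x → p y → p (x * y)) (x : HA N) : p x := by
  have hx : x ∈ SubK BMWField (tH N) N := by rw [SubK_tH]; trivial
  induction hx using Algebra.adjoin_induction with
  | mem x hx => obtain ⟨i, hi, rfl⟩ := hx; exact hg i hi
  | algebraMap r => exact hs r
  | add a b _ _ h1 h2 => exact ha _ _ h1 h2
  | mul a b _ _ h1 h2 => exact hm _ _ h1 h2

theorem piH_surj (N : ℕ) : Function.Surjective (piH N) := by
  intro x
  refine HA_ind (p := fun x => ∃ y, piH N y = x) ?_ ?_ ?_ ?_ x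
  · intro i hi; exact ⟨gB N i, liftB_g _ hi⟩
  · intro c; exact ⟨algebraMap _ _ c, AlgHom.commutes _ _⟩
  · rintro _ _ ⟨x, rfl⟩ ⟨y, rfl⟩; exact ⟨x + y, map_add _ _ _⟩
  · rintro _ _ ⟨x, rfl⟩ ⟨y, rfl⟩; exact ⟨x * y, map_mul _ _ _⟩

end Part3

section Part4

/-- Index set of the normal form words. -/
def Idx : ℕ → Type
  | 0 => Unit
  | N + 1 => Fin (N + 2) × Idx N

instance Idx_fintype : (N : ℕ) → Fintype (Idx N)
  | 0 => inferInstanceAs (Fintype Unit)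
  | N + 1 => by
      haveI := Idx_fintype N
      exact inferInstanceAs (Fintype (Fin (N + 2) × Idx N))

section
variable {K A : Type*} [Field K] [Ring A] [Algebra K A]

/-- `g_j g_{j+1} ⋯ g_{j+n-1}` -/
def chain (g : ℕ → A) : ℕ → ℕ → A
  | _, 0 => 1
  | j, n + 1 => g j * chain g (j + 1) n

/-- normal form words -/
def word (g : ℕ → A) : (N : ℕ) → Idx N → A
  | 0, _ => 1
  | N + 1, (j, d) => chain g j (N + 1 - j) * word g N d

/-- the corresponding permutations -/
def sig : (N : ℕ) → Idx N → ℕ → ℕ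
  | 0, _ => id
  | N + 1, (j, d) => fun p => if p < j then sig N d p else if p = j then N + 1
      else if p ≤ N + 1 then sig N d (p - 1) else p

theorem sig_gt (N : ℕ) (d : Idx N) (p : ℕ) (hp : N < p) : sig N d p = p := by
  induction N generalizing p with
  | zero => rfl
  | succ N ih =>
    obtain ⟨j, d⟩ := d
    have := j.2
    simp only [sig]
    rw [if_neg (by omega), if_neg (by omega), if_neg (by omega)]

theorem sig_le (N : ℕ) (d : Idx N) (p : ℕ) (hp : p ≤ N) : sig N d p ≤ N := by
  induction N generalizing p with
  | zero => exact hp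
  | succ N ih =>
    obtain ⟨j, d⟩ := d
    have := j.2
    simp only [sig]
    split_ifs with h1 h2
    · have := ih d p (by omega); omega
    · exact le_rfl
    · have := ih d (p-1) (by omega); omega

theorem sig_inj (N : ℕ) (d d' : Idx N) (h : ∀ p ≤ N, sig N d p = sig N d' p) : d = d' := by
  induction N with
  | zero => exact Subsingleton.elim (α := Unit) _ _
  | succ N ih =>
    obtain ⟨j, d⟩ := d
    obtain ⟨j', d'⟩ := d'
    have hj := j.2
    have hj' := j'.2
    have key : ∀ (i : Fin (N+2)) (c : Idx N) (p : ℕ), p ≤ N + 1 → (sig (N+1) (i, c) p = N + 1 ↔ p = i) := by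
      intro i c p hp
      simp only [sig]
      split_ifs with h1 h2
      · have := sig_le N c p (by omega)
        omega
      · simp [h2]
      · have := sig_le N c (p-1) (by omega)
        omega
    have hjj : j = j' := by
      apply Fin.ext
      rw [← key j' d' j (by omega), ← h j (by omega), key j d j (by omega)]
    subst hjj
    congr 1
    apply ih
    intro p hp
    by_cases hpj : p < j
    · have := h p (by omega)
      simpa [sig, hpj] using this
    · have := h (p+1) (by omega)
      simp only [sig] at this
      rw [if_neg (by omega), if_neg (by omega), if_pos (by omega), if_neg (by omega), if_neg (by omega), if_pos (by omega)] at this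
      simpa using this

theorem map_chain {C : Type*} [Ring C] (φ : A →+* C) (g : ℕ → A) (j n : ℕ) :
    φ (chain g j n) = chain (fun i => φ (g i)) j n := by
  induction n generalizing j with
  | zero => simp [chain]
  | succ n ih => simp [chain, ih]

theorem map_word {C : Type*} [Ring C] (φ : A →+* C) (g : ℕ → A) (N : ℕ) (d : Idx N) :
    φ (word g N d) = word (fun i => φ (g i)) N d := by
  induction N with
  | zero => simp [word]
  | succ N ih =>
    obtain ⟨j, d⟩ := d
    simp [word, ih, map_chain]

theorem chain_congr (g g' : ℕ → A) (j n : ℕ) (h : ∀ i, i < j + n → g i = g' i) : chain g j n = chain g' j n := by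
  induction n generalizing j with
  | zero => rfl
  | succ n ih => rw [chain, chain, h j (by omega), ih (j+1) (fun i hi => h i (by omega))]

theorem word_congr (g g' : ℕ → A) (N : ℕ) (d : Idx N) (h : ∀ i < N, g i = g' i) : word g N d = word g' N d := by
  induction N with
  | zero => rfl
  | succ N ih =>
    obtain ⟨j, d⟩ := d
    have := j.2
    rw [word, word, ih d (fun i hi => h i (by omega)), chain_congr g g' j _ (fun i hi => h i (by omega))]

namespace Fam
variable {l m d : K} {N : ℕ} {g e : ℕ → A} (H : Fam l m d N g e)

theorem chain_comm (H : Fam l m d N g e) (i j n : ℕ) (h : i + 1 < j) (hn : j + n ≤ N) : g i * chain g j n = chain g j n * g i := by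
  induction n generalizing j with
  | zero => simp [chain]
  | succ n ih =>
    rw [chain, ← mul_assoc, H.comm i j (by omega) (by omega) (by omega), mul_assoc, ih (j+1) (by omega) (by omega), mul_assoc]

theorem chain_shift (H : Fam l m d N g e) (i j n : ℕ) (h : j < i) (hi : i < j + n) (hn : j + n ≤ N) :
    g i * chain g j n = chain g j n * g (i - 1) := by
  induction n generalizing j with
  | zero => omega
  | succ n ih =>
    by_cases hij : i = j + 1
    · subst hij
      obtain ⟨n, rfl⟩ : ∃ k, n = k + 1 := ⟨n - 1, by omega⟩
      have := H.chain_comm j (j + 2) n (by omega) (by omega)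
      rw [chain, chain]
      simp only [Nat.add_sub_cancel]
      calc g (j+1) * (g j * (g (j+1) * chain g (j+1+1) n)) = (g (j+1) * g j * g (j+1)) * chain g (j+2) n := by
            simp only [mul_assoc]
        _ = g j * g (j+1) * (g j * chain g (j+2) n) := by rw [← H.braid j (by omega)]; simp only [mul_assoc]
        _ = _ := by rw [this]; simp only [mul_assoc]
    · rw [chain, ← mul_assoc, ← H.comm j i (by omega) (by omega) (by omega), mul_assoc, ih (j+1) (by omega) (by omega) (by omega), mul_assoc]

theorem span_word_aux (H : Fam l m d N g e) (he : ∀ i < N, e i = 0) (M : ℕ) (hM : M ≤ N) :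
    (1 : A) ∈ Submodule.span K (Set.range (word g M)) ∧
    ∀ i < M, ∀ y ∈ Submodule.span K (Set.range (word g M)), g i * y ∈ Submodule.span K (Set.range (word g M)) := by
  induction M with
  | zero => exact ⟨Submodule.subset_span ⟨(), rfl⟩, fun i hi => by omega⟩
  | succ M ih =>
    obtain ⟨ih1, ih2⟩ := ih (by omega)
    have hc : ∀ j n, j + n = M + 1 → ∀ y ∈ Submodule.span K (Set.range (word g M)),
        chain g j n * y ∈ Submodule.span K (Set.range (word g (M+1))) := by
      intro j n hjn y hy
      have : Submodule.span K (Set.range (word g M)) ≤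
          (Submodule.span K (Set.range (word g (M+1)))).comap (LinearMap.mulLeft K (chain g j n)) := by
        rw [Submodule.span_le]
        rintro _ ⟨d, rfl⟩
        refine Submodule.subset_span ⟨(⟨j, by omega⟩, d), ?_⟩
        simp only [word, LinearMap.mulLeft_apply]
        congr 2; omega
      exact this hy
    refine ⟨by simpa [chain] using hc (M+1) 0 rfl 1 ih1, ?_⟩
    intro i hi y hy
    have : Submodule.span K (Set.range (word g (M+1))) ≤
          (Submodule.span K (Set.range (word g (M+1)))).comap (LinearMap.mulLeft K (g i)) := by
      rw [Submodule.span_le]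
      rintro _ ⟨⟨j, d⟩, rfl⟩
      have hj := j.2
      change g i * (chain g j (M+1-j) * word g M d) ∈ Submodule.span K (Set.range (word g (M+1)))
      have hd : word g M d ∈ Submodule.span K (Set.range (word g M)) := Submodule.subset_span ⟨d, rfl⟩
      rw [← mul_assoc]
      rcases lt_trichotomy i j with h | h | h
      · by_cases h' : i + 1 = j
        · have : g i * chain g j (M+1-j) = chain g i (M+1-i) := by
            rw [← h', show M + 1 - i = (M + 1 - (i+1)) + 1 by omega, chain]
          rw [this]
          exact hc _ _ (by omega) _ hd
        · rw [H.chain_comm i j _ (by omega) (by omega), mul_assoc]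
          exact hc _ _ (by omega) _ (ih2 i (by omega) _ hd)
      · rw [← h, show M + 1 - i = (M - i) + 1 by omega, chain, ← mul_assoc, (H.one i (by omega)).gg, he i (by omega)]
        have h1 := hc (i+1) (M-i) (by omega) _ hd
        have h2 := hc i (M-i+1) (by omega) _ hd
        rw [chain] at h2
        simp only [smul_zero, add_zero, sub_mul, one_mul, smul_mul_assoc]
        exact sub_mem h1 (Submodule.smul_mem _ _ h2)
      · rw [H.chain_shift i j _ h (by omega) (by omega), mul_assoc]
        exact hc _ _ (by omega) _ (ih2 (i-1) (by omega) _ hd)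
    exact this hy

end Fam
end

theorem HA_span {N : ℕ} (x : HA N) : ∃ c : Idx N → BMWField, x = ∑ d, c d • word (tH N) N d := by
  have h := (famH N).span_word_aux (fun _ _ => rfl) N le_rfl
  have hx : x ∈ SubK BMWField (tH N) N := by rw [SubK_tH]; trivial
  have := SubK_le _ _ h.1 h.2 hx
  obtain ⟨c, hc⟩ := (Submodule.mem_span_range_iff_exists_fun _).1 this
  exact ⟨c, hc.symm⟩

theorem BA_span {M : ℕ} (x : BA (M+1)) : ∃ c : Idx (M+1) → BMWField, ∃ y ∈ Jid (eB (M+1) M),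
    x = ∑ d, c d • word (gB (M+1)) (M+1) d + y := by
  obtain ⟨c, hc⟩ := HA_span (piH _ x)
  refine ⟨c, x - ∑ d, c d • word (gB (M+1)) (M+1) d, piH_ker ?_, by abel⟩
  rw [map_sub, hc, map_sum, sub_eq_zero]
  refine Finset.sum_congr rfl fun d _ => ?_
  rw [map_smul]
  congr 1
  have := map_word (piH (M+1)).toRingHom (gB (M+1)) (M+1) d
  refine Eq.trans ?_ this.symm
  refine word_congr _ _ _ _ fun i hi => ?_
  exact (liftB_g (famH _) hi).symm

end Part4

section Part5

namespace QSpace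
variable {q t : ℝ} {k : ℕ} (S : QSpace q t k)

/-- tensor space -/
abbrev TS : Type := (ℕ → S.I) → ℝ

variable {S}

/-- change two slots -/
def x2 (i : ℕ) (x : ℕ → S.I) (u v : S.I) : ℕ → S.I := Function.update (Function.update x i u) (i + 1) v

theorem x2_self (i : ℕ) (x : ℕ → S.I) : x2 i x (x i) (x (i+1)) = x := by
  simp [x2]
theorem x2_i (i : ℕ) (x : ℕ → S.I) (u v) : x2 i x u v i = u := by simp [x2]
theorem x2_i1 (i : ℕ) (x : ℕ → S.I) (u v) : x2 i x u v (i+1) = v := by simp [x2]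
theorem x2_ne (i : ℕ) (x : ℕ → S.I) (u v) (p : ℕ) (h : p ≠ i) (h' : p ≠ i + 1) : x2 i x u v p = x p := by
  simp [x2, h, h']
theorem x2_x2 (i : ℕ) (x : ℕ → S.I) (u v u' v') : x2 i (x2 i x u v) u' v' = x2 i x u' v' := by
  funext p
  by_cases h : p = i
  · subst h; simp [x2_i]
  by_cases h' : p = i + 1
  · subst h'; simp [x2_i1]
  simp [x2_ne _ _ _ _ _ h h']

theorem x2_comm (i j : ℕ) (hij : i + 2 ≤ j) (x : ℕ → S.I) (u v u' v') :
    x2 i (x2 j x u v) u' v' = x2 j (x2 i x u' v') u v := by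
  funext p
  by_cases h : p = i
  · subst h; rw [x2_i, x2_ne _ _ _ _ _ (by omega) (by omega), x2_i]
  by_cases h' : p = i + 1
  · subst h'; rw [x2_i1, x2_ne _ _ _ _ _ (by omega) (by omega), x2_i1]
  rw [x2_ne _ _ _ _ _ h h']
  by_cases h1 : p = j
  · subst h1; rw [x2_i, x2_i]
  by_cases h1' : p = j + 1
  · subst h1'; rw [x2_i1, x2_i1]
  rw [x2_ne _ _ _ _ _ h1 h1', x2_ne _ _ _ _ _ h1 h1', x2_ne _ _ _ _ _ h h']

theorem R_smul' (c : ℝ) (f : S.I → S.I → ℝ) (x y) :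
    S.R (fun x y => c * f x y) x y = c * S.R f x y := S.R_mul c f x y

variable (S) in
/-- braid operator -/
noncomputable def G (i : ℕ) : Module.End ℝ S.TS where
  toFun f x := S.R (fun u v => f (x2 i x u v)) (x i) (x (i + 1))
  map_add' f h := by funext x; exact S.R_add _ _ _ _
  map_smul' c f := by funext x; exact S.R_mul _ _ _ _

variable (S) in
/-- cup-cap operator -/
noncomputable def E (i : ℕ) : Module.End ℝ S.TS where
  toFun f x := capF S.w (fun u v => f (x2 i x u v)) * S.w (x i) (x (i + 1))
  map_add' f h := by funext x; simp only [Pi.add_apply]; rw [capF_add, add_mul]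
  map_smul' c f := by funext x; simp only [Pi.smul_apply, smul_eq_mul, RingHom.id_apply]; rw [capF_mul, mul_assoc]

theorem G_apply (i : ℕ) (f : S.TS) (x) : S.G i f x = S.R (fun u v => f (x2 i x u v)) (x i) (x (i + 1)) := rfl
theorem E_apply (i : ℕ) (f : S.TS) (x) :
    S.E i f x = capF S.w (fun u v => f (x2 i x u v)) * S.w (x i) (x (i + 1)) := rfl

theorem G_x2 (i : ℕ) (f : S.TS) (x) (a b) : S.G i f (x2 i x a b) = S.R (fun u v => f (x2 i x u v)) a b := by
  simp only [G_apply, x2_x2, x2_i, x2_i1]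
theorem E_x2 (i : ℕ) (f : S.TS) (x) (a b) :
    S.E i f (x2 i x a b) = capF S.w (fun u v => f (x2 i x u v)) * S.w a b := by
  simp only [E_apply, x2_x2, x2_i, x2_i1]

theorem GG (i : ℕ) (f : S.TS) (x) : S.G i (S.G i f) x = f x + (q - q⁻¹) * S.G i f x
    - (q - q⁻¹) * (q * t⁻¹ ^ 2) * S.E i f x := by
  rw [G_apply]
  simp only [G_x2]
  have := S.quad (fun u v => f (x2 i x u v)) (x i) (x (i+1))
  rw [x2_self] at this
  refine this.trans ?_
  rw [G_apply, E_apply]; ring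

theorem GE (i : ℕ) (f : S.TS) (x) : S.G i (S.E i f) x = (q * t⁻¹ ^ 2) * S.E i f x := by
  rw [G_apply]
  simp only [E_x2]
  have := S.R_mul (capF S.w (fun u v => f (x2 i x u v))) S.w (x i) (x (i+1))
  refine this.trans ?_
  rw [S.Rw, E_apply]; ring

theorem EE (i : ℕ) (f : S.TS) (x) : S.E i (S.E i f) x = capF S.w S.w * S.E i f x := by
  rw [E_apply]
  simp only [E_x2]
  rw [capF_mul, E_apply]; ring

theorem R_kernel (S : QSpace q t k) : ∃ Rm : S.I → S.I → S.I → S.I → ℝ, ∀ f x y, S.R f x y = ∑ u, ∑ v, Rm x y u v * f u v := by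
  refine ⟨fun x y u v => S.R (fun a b => if a = u ∧ b = v then 1 else 0) x y, fun f x y => ?_⟩
  have h : f = ∑ u, ∑ v, f u v • (fun a b : S.I => if a = u ∧ b = v then (1:ℝ) else 0) := by
    funext a b
    simp only [Finset.sum_apply, Pi.smul_apply, smul_eq_mul]
    rw [Finset.sum_eq_single a, Finset.sum_eq_single b]
    · simp
    · intro v _ hv; simp [hv.symm]
    · simp
    · intro u _ hu
      refine Finset.sum_eq_zero fun v _ => ?_
      simp [hu.symm]
    · simp
  conv_lhs => rw [h]
  simp only [map_sum, map_smul, Finset.sum_apply, Pi.smul_apply, smul_eq_mul]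
  refine Finset.sum_congr rfl fun u _ => Finset.sum_congr rfl fun v _ => ?_
  ring

theorem G_comm (i j : ℕ) (hij : i + 2 ≤ j) (f : S.TS) (x) : S.G i (S.G j f) x = S.G j (S.G i f) x := by
  obtain ⟨Rm, hR⟩ := R_kernel S
  simp only [G_apply, hR]
  simp only [Finset.mul_sum]
  simp only [x2_comm i j hij, x2_ne i _ _ _ j (by omega) (by omega), x2_ne i _ _ _ (j+1) (by omega) (by omega),
    x2_ne j _ _ _ i (by omega) (by omega), x2_ne j _ _ _ (i+1) (by omega) (by omega)]
  have h4 : ∀ F : S.I → S.I → S.I → S.I → ℝ, ∑ a, ∑ b, ∑ c, ∑ d, F a b c d = ∑ c, ∑ d, ∑ a, ∑ b, F a b c d := by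
    intro F
    calc ∑ a, ∑ b, ∑ c, ∑ d, F a b c d = ∑ a, ∑ c, ∑ b, ∑ d, F a b c d :=
          Finset.sum_congr rfl fun a _ => Finset.sum_comm
      _ = ∑ c, ∑ a, ∑ b, ∑ d, F a b c d := Finset.sum_comm
      _ = ∑ c, ∑ a, ∑ d, ∑ b, F a b c d :=
          Finset.sum_congr rfl fun c _ => Finset.sum_congr rfl fun a _ => Finset.sum_comm
      _ = _ := Finset.sum_congr rfl fun c _ => Finset.sum_comm
  rw [h4]
  refine Finset.sum_congr rfl fun a _ => Finset.sum_congr rfl fun b _ =>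
    Finset.sum_congr rfl fun c _ => Finset.sum_congr rfl fun d _ => ?_
  ring

/-- change three slots -/
def x3 (i : ℕ) (x : ℕ → S.I) (a b c : S.I) : ℕ → S.I :=
  Function.update (Function.update (Function.update x i a) (i + 1) b) (i + 2) c

theorem x3_self (i : ℕ) (x : ℕ → S.I) : x3 i x (x i) (x (i+1)) (x (i+2)) = x := by simp [x3]

theorem x2_x3 (i : ℕ) (x : ℕ → S.I) (a b c u v) : x2 i (x3 i x a b c) u v = x3 i x u v c := by
  funext p
  simp only [x2, x3, Function.update_apply]
  split_ifs <;> first | rfl | omega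
theorem x2_x3' (i : ℕ) (x : ℕ → S.I) (a b c u v) : x2 (i+1) (x3 i x a b c) u v = x3 i x a u v := by
  funext p
  simp only [x2, x3, Function.update_apply]
  split_ifs <;> first | rfl | omega
theorem x3_0 (i : ℕ) (x : ℕ → S.I) (a b c) : x3 i x a b c i = a := by simp [x3]
theorem x3_1 (i : ℕ) (x : ℕ → S.I) (a b c) : x3 i x a b c (i+1) = b := by simp [x3]
theorem x3_2 (i : ℕ) (x : ℕ → S.I) (a b c) : x3 i x a b c (i+2) = c := by simp [x3]
theorem x3_2' (i : ℕ) (x : ℕ → S.I) (a b c) : x3 i x a b c (i+1+1) = c := x3_2 i x a b c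

theorem G_x3 (i : ℕ) (f : S.TS) (x) (a b c) : S.G i f (x3 i x a b c) = S.R (fun u v => f (x3 i x u v c)) a b := by
  simp only [G_apply, x2_x3, x3_0, x3_1]
theorem G_x3' (i : ℕ) (f : S.TS) (x) (a b c) : S.G (i+1) f (x3 i x a b c) = S.R (fun u v => f (x3 i x a u v)) b c := by
  simp only [G_apply, x2_x3', x3_1, x3_2']
theorem E_x3 (i : ℕ) (f : S.TS) (x) (a b c) :
    S.E i f (x3 i x a b c) = capF S.w (fun u v => f (x3 i x u v c)) * S.w a b := by
  simp only [E_apply, x2_x3, x3_0, x3_1]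
theorem E_x3' (i : ℕ) (f : S.TS) (x) (a b c) :
    S.E (i+1) f (x3 i x a b c) = capF S.w (fun u v => f (x3 i x a u v)) * S.w b c := by
  simp only [E_apply, x2_x3', x3_1, x3_2']

theorem G_braid (i : ℕ) (f : S.TS) (x) :
    S.G i (S.G (i+1) (S.G i f)) x = S.G (i+1) (S.G i (S.G (i+1) f)) x := by
  rw [← x3_self i x]
  simp only [G_x3, G_x3']
  exact S.ybe (fun a b c => f (x3 i x a b c)) _ _ _

theorem EGE (hq : q ≠ 0) (ht : t ≠ 0) (i : ℕ) (f : S.TS) (x) :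
    S.E i (S.G (i+1) (S.E i f)) x = (t ^ 2 * q⁻¹) * S.E i f x := by
  rw [← x3_self i x]
  simp only [E_x3, G_x3']
  rw [S.capRcup1 hq ht (fun c => capF S.w fun u v => f (x3 i x u v c))]
  ring

theorem EGE' (hq : q ≠ 0) (ht : t ≠ 0) (i : ℕ) (f : S.TS) (x) :
    S.E (i+1) (S.G i (S.E (i+1) f)) x = (t ^ 2 * q⁻¹) * S.E (i+1) f x := by
  rw [← x3_self i x]
  simp only [E_x3', G_x3]
  rw [S.capRcup2 hq ht (fun c => capF S.w fun u v => f (x3 i x c u v))]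
  ring

/-- sum over one slot -/
def sm (i : ℕ) (F : S.TS) : S.TS := fun x => ∑ u, F (Function.update x i u)
/-- sum over the first slots -/
def total : ℕ → S.TS → S.TS
  | 0, F => sm 0 F
  | N + 1, F => total N (sm (N + 1) F)

theorem sm_comm (i j : ℕ) (h : i ≠ j) (F : S.TS) : sm i (sm j F) = sm j (sm i F) := by
  funext x
  simp only [sm]
  rw [Finset.sum_comm]
  simp only [Function.update_comm h]

theorem total_congr1 (N i : ℕ) (hi : i ≤ N) (F F' : S.TS) (h : sm i F = sm i F') : total N F = total N F' := by
  induction N generalizing F F' with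
  | zero =>
    obtain rfl : i = 0 := by omega
    exact h
  | succ N ih =>
    rw [total, total]
    by_cases hi' : i = N + 1
    · subst hi'; rw [h]
    · apply ih (by omega)
      rw [sm_comm _ _ hi', h, sm_comm _ _ hi']

theorem total_congr2 (N i : ℕ) (hi : i < N) (F F' : S.TS) (h : sm i (sm (i+1) F) = sm i (sm (i+1) F')) :
    total N F = total N F' := by
  induction N generalizing F F' with
  | zero => omega
  | succ N ih =>
    rw [total, total]
    by_cases hi' : i = N
    · subst hi'; exact total_congr1 _ _ le_rfl _ _ h
    · apply ih (by omega)
      rw [sm_comm (i+1) _ (by omega), sm_comm i _ (by omega), h, sm_comm (i+1) _ (by omega), sm_comm i (N+1) (by omega)]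

theorem G_adj (N i : ℕ) (hi : i < N) (f h : S.TS) : total N (S.G i f * h) = total N (f * S.G i h) := by
  apply total_congr2 N i hi
  funext x
  have := S.sym (fun u v => f (x2 i x u v)) (fun u v => h (x2 i x u v))
  simp only [sm]
  change ∑ u, ∑ v, S.G i f (x2 i x u v) * h (x2 i x u v) = ∑ u, ∑ v, f (x2 i x u v) * S.G i h (x2 i x u v)
  simp only [G_x2]
  exact this.symm

theorem total_zero (N : ℕ) : total N (0 : S.TS) = 0 := by
  induction N with
  | zero => funext x; simp [total, sm]
  | succ N ih =>
    rw [total]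
    have : sm (N+1) (0 : S.TS) = 0 := by funext x; simp [sm]
    rw [this, ih]

theorem sm_nonneg (i : ℕ) (F : S.TS) (h : ∀ x, 0 ≤ F x) (x) : 0 ≤ sm i F x := Finset.sum_nonneg fun u _ => h _

theorem sm_eq_zero (i : ℕ) (F : S.TS) (h : ∀ x, 0 ≤ F x) (h0 : sm i F = 0) : F = 0 := by
  funext x
  have := congrFun h0 x
  rw [sm, Pi.zero_apply, Finset.sum_eq_zero_iff_of_nonneg (fun u _ => h _)] at this
  simpa using this (x i) (Finset.mem_univ _)

theorem total_eq_zero (N : ℕ) (F : S.TS) (h : ∀ x, 0 ≤ F x) (h0 : total N F = 0) : F = 0 := by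
  induction N generalizing F with
  | zero => exact sm_eq_zero 0 F h h0
  | succ N ih => exact sm_eq_zero (N+1) F h (ih _ (sm_nonneg _ _ h) h0)

/-- adjointness -/
def AdjOp (N : ℕ) (X Y : Module.End ℝ S.TS) : Prop := ∀ f h, total N (X f * h) = total N (f * Y h)

theorem AdjOp_zero {N : ℕ} {X Y : Module.End ℝ S.TS} (h : AdjOp N X Y) (h0 : Y * X = 0) : X = 0 := by
  refine LinearMap.ext fun f => ?_
  have h1 := h f (X f)
  have h2 : Y (X f) = 0 := by rw [← Module.End.mul_apply, h0]; rfl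
  rw [h2, mul_zero, total_zero] at h1
  have h3 := total_eq_zero N _ (fun x => mul_self_nonneg _) h1
  funext x
  simpa using congrFun h3 x

variable (S) in
/-- freeze a slot -/
def U (j : ℕ) (y : S.I) : Module.End ℝ S.TS where
  toFun f x := f (Function.update x j y)
  map_add' f h := rfl
  map_smul' c f := rfl

theorem U_apply (j : ℕ) (y : S.I) (f : S.TS) (x) : S.U j y f x = f (Function.update x j y) := rfl

theorem x2_update (i j : ℕ) (h : i + 1 < j) (x : ℕ → S.I) (u v y) :
    x2 i (Function.update x j y) u v = Function.update (x2 i x u v) j y := by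
  funext p
  simp only [x2, Function.update_apply]
  split_ifs <;> first | rfl | omega

theorem G_U (i j : ℕ) (h : i + 1 < j) (y : S.I) : S.G i * S.U j y = S.U j y * S.G i := by
  refine LinearMap.ext fun f => ?_
  funext x
  simp only [Module.End.mul_apply, G_apply, U_apply, x2_update i j h]
  rw [Function.update_of_ne (by omega), Function.update_of_ne (by omega)]

theorem cancelE (M : ℕ) (X : Module.End ℝ S.TS) (hX : ∀ j, M < j → ∀ y, X * S.U j y = S.U j y * X)
    (hd : capF S.w S.w ≠ 0) (h0 : X * S.E M = 0) : X = 0 := by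
  refine LinearMap.ext fun f => ?_
  funext x
  have hXU : ∀ j, M < j → ∀ y F, X (S.U j y F) = S.U j y (X F) := fun j hj y F => by
    rw [← Module.End.mul_apply, hX j hj y]; rfl
  have h1 : X f x = X (S.U (M+1) (x (M+1)) f) x := by
    rw [hXU _ (by omega), U_apply]; simp
  set f' := S.U (M+1) (x (M+1)) f with hf'
  let c : S.I → S.TS := fun y z => ∑ v, S.w y v * f' (Function.update z M v)
  let D' : S.I → S.TS := fun y z => S.w (z M) (z (M+1)) * c y z
  have hcc : ∀ y z u v, c y (x2 M z u v) = c y z := by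
    intro y z u v
    refine Finset.sum_congr rfl fun a _ => ?_
    congr 1
    simp only [hf', U_apply]
    congr 1
    funext p
    simp only [x2, Function.update_apply]
    split_ifs <;> first | rfl | omega
  have hED : ∀ y, S.E M (D' y) = capF S.w S.w • D' y := by
    intro y
    funext z
    rw [E_apply]
    simp only [D', hcc, x2_i, x2_i1, Pi.smul_apply, smul_eq_mul]
    have : (fun u v => S.w u v * c y z) = fun u v => c y z * S.w u v := by funext u v; ring
    rw [this, capF_mul]
    have e : capF S.w (fun u v => S.w u v) = capF S.w S.w := rfl
    rw [e]; ring
  have hXD : ∀ y, X (D' y) = 0 := by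
    intro y
    have : X (S.E M (D' y)) = 0 := by rw [← Module.End.mul_apply, h0]; rfl
    rw [hED, map_smul] at this
    exact (smul_eq_zero.1 this).resolve_left hd
  have hsum : f' = ∑ y, S.U (M+1) y (D' y) := by
    funext z
    simp only [Finset.sum_apply, U_apply, D', c]
    have hz : ∀ y v, f' (Function.update (Function.update z (M+1) y) M v) = f' (Function.update z M v) := by
      intro y v
      simp only [hf', U_apply]
      congr 1
      funext p
      simp only [Function.update_apply]
      split_ifs <;> first | rfl | omega
    simp only [hz, Function.update_self, Function.update_of_ne (show M ≠ M + 1 by omega), Finset.mul_sum]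
    rw [Finset.sum_comm]
    simp only [← mul_assoc, ← Finset.sum_mul, S.ww]
    simp
  rw [h1, hsum, map_sum]
  simp only [hXU _ (Nat.lt_succ_self M), hXD, map_zero, Finset.sum_const_zero]
  rfl

/-- support condition -/
def InW (N : ℕ) (f : S.TS) : Prop := ∀ x, (∃ p ≤ N, ¬ S.A (x p)) → f x = 0

theorem G_InW (N i : ℕ) (hi : i < N) (f : S.TS) (hf : InW N f) : InW N (S.G i f) := by
  rintro x ⟨p, hp, hx⟩
  rw [G_apply]
  by_cases h : p = i ∨ p = i + 1
  · apply S.hAR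
    · intro u v huv
      apply hf
      by_cases hu : S.A u
      · exact ⟨i+1, by omega, by rw [x2_i1]; tauto⟩
      · exact ⟨i, by omega, by rw [x2_i]; exact hu⟩
    · rcases h with rfl | rfl <;> tauto
  · push Not at h
    have : (fun u v => f (x2 i x u v)) = fun _ _ => 0 := by
      funext u v
      exact hf _ ⟨p, hp, by rw [x2_ne _ _ _ _ _ h.1 h.2]; exact hx⟩
    rw [this, R_zero]

theorem E_InW (N i : ℕ) (hi : i < N) (f : S.TS) (hf : InW N f) : S.E i f = 0 := by
  funext x
  rw [E_apply]
  have : capF S.w (fun u v => f (x2 i x u v)) = 0 := by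
    refine Finset.sum_eq_zero fun u _ => Finset.sum_eq_zero fun v _ => ?_
    beta_reduce
    by_cases huv : S.A u ∧ S.A v
    · rw [S.hAw u v huv.1 huv.2]; ring
    · rw [hf, mul_zero]
      by_cases hu : S.A u
      · exact ⟨i+1, by omega, by rw [x2_i1]; tauto⟩
      · exact ⟨i, by omega, by rw [x2_i]; exact hu⟩
  rw [this, zero_mul]; rfl

/-- extremal vectors -/
def ind (N : ℕ) (b : ℕ → S.I) (s : ℕ → ℕ) : S.TS := fun x =>
  open Classical in if ∀ p ≤ N, x p = b (s p) then 1 else 0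

variable (S) in
/-- good sequence of basis vectors -/
structure Good (N : ℕ) (b : ℕ → S.I) : Prop where
  hR : ∀ i j, i < j → j ≤ N → ∀ x y, S.R (fun x y => if x = b i ∧ y = b j then 1 else 0) x y
    = if x = b j ∧ y = b i then 1 else 0
  hA : ∀ i ≤ N, S.A (b i)
  inj : ∀ i j, i ≤ N → j ≤ N → b i = b j → i = j

theorem exists_good (S : QSpace q t k) (N : ℕ) (h : N < k) : ∃ b, Good S N b := by
  refine ⟨fun i => if h : i < k then S.a ⟨i, h⟩ else S.a ⟨0, by omega⟩, ?_, ?_, ?_⟩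
  · intro i j hij hj x y
    simp only [show i < k by omega, show j < k by omega, dif_pos]
    exact S.hRa _ _ hij x y
  · intro i hi
    simp only [show i < k by omega, dif_pos]
    exact S.hAa _
  · intro i j hi hj hij
    simp only [show i < k by omega, show j < k by omega, dif_pos] at hij
    simpa using S.hinj hij

theorem ind_InW (N : ℕ) (b : ℕ → S.I) (hb : Good S N b) (s : ℕ → ℕ) (hs : ∀ p ≤ N, s p ≤ N) : InW N (ind N b s) := by
  rintro x ⟨p, hp, hx⟩
  rw [ind, if_neg]
  intro h
  rw [h p hp] at hx
  exact hx (hb.hA _ (hs p hp))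

theorem G_ind (N i : ℕ) (hi : i < N) (b : ℕ → S.I) (hb : Good S N b) (s : ℕ → ℕ) (h1 : s i < s (i+1)) (h2 : s (i+1) ≤ N) :
    S.G i (ind N b s) = ind N b (fun p => s (Equiv.swap i (i+1) p)) := by
  classical
  funext x
  rw [G_apply]
  set c : ℝ := if ∀ p ≤ N, p ≠ i → p ≠ i + 1 → x p = b (s p) then 1 else 0 with hc
  have e1 : (fun u v => ind N b s (x2 i x u v)) = fun u v => c * (if u = b (s i) ∧ v = b (s (i+1)) then 1 else 0) := by
    funext u v
    have : (∀ p ≤ N, x2 i x u v p = b (s p)) ↔ ((∀ p ≤ N, p ≠ i → p ≠ i + 1 → x p = b (s p)) ∧ (u = b (s i) ∧ v = b (s (i+1)))) := by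
      constructor
      · intro h
        refine ⟨fun p hp h1 h2 => ?_, ?_, ?_⟩
        · have := h p hp; rwa [x2_ne _ _ _ _ _ h1 h2] at this
        · have := h i (by omega); rwa [x2_i] at this
        · have := h (i+1) (by omega); rwa [x2_i1] at this
      · rintro ⟨h1, h2, h3⟩ p hp
        by_cases hp1 : p = i
        · subst hp1; rwa [x2_i]
        by_cases hp2 : p = i + 1
        · subst hp2; rwa [x2_i1]
        rw [x2_ne _ _ _ _ _ hp1 hp2]; exact h1 p hp hp1 hp2
    simp only [ind, this, hc, ite_and]
    split_ifs <;> simp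
  rw [e1, R_mul, hb.hR _ _ h1 h2]
  have : (∀ p ≤ N, x p = b (s (Equiv.swap i (i+1) p))) ↔ ((∀ p ≤ N, p ≠ i → p ≠ i + 1 → x p = b (s p)) ∧ (x i = b (s (i+1)) ∧ x (i+1) = b (s i))) := by
    constructor
    · intro h
      refine ⟨fun p hp h1 h2 => ?_, ?_, ?_⟩
      · have := h p hp; rwa [Equiv.swap_apply_of_ne_of_ne h1 h2] at this
      · have := h i (by omega); rwa [Equiv.swap_apply_left] at this
      · have := h (i+1) (by omega); rwa [Equiv.swap_apply_right] at this
    · rintro ⟨h1, h2, h3⟩ p hp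
      by_cases hp1 : p = i
      · subst hp1; rwa [Equiv.swap_apply_left]
      by_cases hp2 : p = i + 1
      · subst hp2; rwa [Equiv.swap_apply_right]
      rw [Equiv.swap_apply_of_ne_of_ne hp1 hp2]; exact h1 p hp hp1 hp2
  simp only [ind, this, hc, ite_and]
  split_ifs <;> simp

theorem chain_ind (N : ℕ) (b : ℕ → S.I) (hb : Good S N b) (j n : ℕ) (hn : j + n ≤ N) (s : ℕ → ℕ)
    (h1 : ∀ p, p < j + n → s p < s (j + n)) (h2 : s (j + n) ≤ N) :
    chain S.G j n (ind N b s) = ind N b (fun p => if p < j then s p else if p = j then s (j + n)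
      else if p ≤ j + n then s (p - 1) else s p) := by
  induction n generalizing j with
  | zero =>
    rw [chain, Module.End.one_apply]
    congr 1
    funext p
    simp only [add_zero]
    split_ifs <;> first | rfl | (exfalso; omega) | (subst_vars; rfl) | (congr 1; omega)
  | succ n ih =>
    have e : j + 1 + n = j + (n + 1) := by omega
    rw [chain, Module.End.mul_apply, ih (j+1) (by omega) (by rw [e]; exact h1) (by rw [e]; exact h2), e,
      G_ind N j (by omega) b hb]
    · congr 1
      funext p
      by_cases hp1 : p = j
      · subst hp1; rw [Equiv.swap_apply_left]; simp
      by_cases hp2 : p = j + 1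
      · subst hp2; rw [Equiv.swap_apply_right]; simp
      rw [Equiv.swap_apply_of_ne_of_ne hp1 hp2]
      split_ifs <;> first | rfl | omega
    · simp only [lt_add_iff_pos_right, zero_lt_one, if_true, lt_irrefl, if_false]
      exact h1 _ (by omega)
    · simpa using h2

theorem word_ind (N : ℕ) (b : ℕ → S.I) (hb : Good S N b) (M : ℕ) (hM : M ≤ N) (d : Idx M) :
    word S.G M d (ind N b id) = ind N b (sig M d) := by
  induction M with
  | zero => rfl
  | succ M ih =>
    obtain ⟨j, d⟩ := d
    have hj := j.2
    rw [word, Module.End.mul_apply, ih (by omega)]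
    have e : (j:ℕ) + (M + 1 - j) = M + 1 := by omega
    rw [chain_ind N b hb j _ (by omega)]
    · congr 1
      funext p
      simp only [sig, e]
      split_ifs
      · rfl
      · rw [sig_gt _ _ _ (by omega)]
      · rfl
      · rw [sig_gt _ _ _ (by omega)]
    · rw [e]
      intro p hp
      have := sig_le M d p (by omega)
      rw [sig_gt M d (M+1) (by omega)]; omega
    · rw [e, sig_gt M d (M+1) (by omega)]; exact hM

theorem ind_indep (N : ℕ) (b : ℕ → S.I) (hb : Good S N b) (c : Idx N → ℝ)
    (h : ∑ d, c d • ind N b (sig N d) = 0) (d : Idx N) : c d = 0 := by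
  have := congrFun h (fun p => b (sig N d p))
  rw [Finset.sum_apply, Finset.sum_eq_single d] at this
  · simpa [ind] using this
  · intro d' _ hd'
    simp only [Pi.smul_apply, smul_eq_mul, ind]
    rw [if_neg, mul_zero]
    intro h2
    apply hd'
    apply sig_inj
    intro p hp
    exact (hb.inj _ _ (sig_le N d p hp) (sig_le N d' p hp) (h2 p hp)).symm
  · simp

end QSpace

end Part5

section Part6

theorem exists_trans : ∃ L : ℝ, 1 < L ∧ Transcendental ℚ L := by
  by_contra h
  push Not at h
  have h1 : Set.Ioi (1:ℝ) ⊆ {x : ℝ | IsAlgebraic ℚ x} := by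
    intro x hx
    have := h x hx
    simpa [Transcendental] using this
  have h2 : Set.Countable {x : ℝ | IsAlgebraic ℚ x} := Algebraic.countable ℚ ℝ
  have h3 := (h2.mono h1)
  rw [Set.countable_iff_exists_injOn] at h3
  have h4 : Set.Countable (Set.Ioi (1:ℝ)) := h2.mono h1
  have h5 := Cardinal.mk_Ioi_real 1
  have h6 := h4.le_aleph0
  rw [h5] at h6
  exact absurd h6 (not_le.2 Cardinal.aleph0_lt_continuum)

/-- the value of `l` -/
noncomputable def L0 : ℝ := exists_trans.choose
theorem L0_gt : 1 < L0 := exists_trans.choose_spec.1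
theorem L0_tr : Transcendental ℚ L0 := exists_trans.choose_spec.2

theorem exists_q (k : ℕ) : ∃ q : ℝ, 1 < q ∧ q ^ (2 * k + 1) = L0 := by
  refine ⟨L0 ^ (((2 * k + 1 : ℕ) : ℝ)⁻¹), ?_, Real.rpow_inv_natCast_pow (by linarith [L0_gt]) (by omega)⟩
  exact Real.one_lt_rpow L0_gt (by positivity)

/-- the value of `q` -/
noncomputable def q0 (k : ℕ) : ℝ := (exists_q k).choose
theorem q0_gt (k : ℕ) : 1 < q0 k := (exists_q k).choose_spec.1
theorem q0_pow (k : ℕ) : q0 k ^ (2 * k + 1) = L0 := (exists_q k).choose_spec.2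
theorem q0_ne (k : ℕ) : q0 k ≠ 0 := by linarith [q0_gt k]
/-- the spaces -/
noncomputable def S0 (k : ℕ) : QSpace (q0 k) (q0 k ^ (k + 1)) (k + 1) :=
  (QSpace.exists_space (q0 k) (q0_ne k) (k+1)).some
/-- the value of `δ` -/
noncomputable def d0 (k : ℕ) : ℝ := capF (S0 k).w (S0 k).w
/-- the value of `m` -/
noncomputable def m0 (k : ℕ) : ℝ := - (q0 k - (q0 k)⁻¹)

theorem l0_eq (k : ℕ) : (q0 k ^ (k+1)) ^ 2 * (q0 k)⁻¹ = L0 := by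
  have := q0_ne k
  rw [← q0_pow k]; field_simp; ring
theorem l0_inv_eq (k : ℕ) : q0 k * (q0 k ^ (k+1))⁻¹ ^ 2 = L0⁻¹ := by
  have := q0_ne k
  rw [← l0_eq k]; field_simp
theorem m0_ne (k : ℕ) : m0 k ≠ 0 := by
  have h := q0_gt k
  have : (q0 k)⁻¹ < 1 := inv_lt_one_of_one_lt₀ h
  rw [m0]; intro h; linarith
theorem d0_eq (k : ℕ) : m0 k * (1 - d0 k) = L0 - L0⁻¹ := by
  have := (S0 k).capw
  rw [l0_eq, l0_inv_eq] at this
  rw [m0, d0]; linarith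
theorem L0_sub : 0 < L0 - L0⁻¹ := by
  have h := L0_gt
  have : (L0)⁻¹ < 1 := inv_lt_one_of_one_lt₀ h
  linarith
theorem d0_inj : Function.Injective d0 := by
  intro j k h
  have h1 := d0_eq j
  have h2 := d0_eq k
  rw [h] at h1
  have h3 : (1 - d0 k) ≠ 0 := by
    intro h0; rw [h0] at h2; linarith [L0_sub]
  have h4 : m0 j = m0 k := mul_right_cancel₀ h3 (h1.trans h2.symm)
  rw [m0, m0] at h4
  have hj := q0_gt j
  have hk := q0_gt k
  have hj0 := q0_ne j
  have hk0 := q0_ne k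
  have h5 : (q0 j - q0 k) * (q0 j * q0 k + 1) = 0 := by
    field_simp at h4; linarith
  have h6 : q0 j = q0 k := by
    rcases mul_eq_zero.1 h5 with h | h
    · linarith
    · nlinarith
  have h7 := q0_pow j
  rw [h6, ← q0_pow k] at h7
  have := pow_right_injective₀ (by linarith : 0 < q0 k) (by linarith : q0 k ≠ 1) h7
  omega

open Filter in
theorem d0_trans (p : Polynomial ℝ) (hp : p ≠ 0) : ∀ᶠ k in (hyperfilter ℕ : Filter ℕ), p.eval (d0 k) ≠ 0 := by
  have : {k | p.eval (d0 k) ≠ 0} ∈ (cofinite : Filter ℕ) := by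
    rw [mem_cofinite]
    refine Set.Finite.subset (Set.Finite.preimage (d0_inj.injOn) (p.roots.toFinset.finite_toSet)) ?_
    intro k hk
    simp at hk ⊢
    exact ⟨hp, hk⟩
  exact hyperfilter_le_cofinite this

open Filter in
/-- the ultrapower of the reals -/
abbrev UF : Type := Germ (hyperfilter ℕ : Filter ℕ) ℝ

open Filter in
/-- coercion to the ultrapower -/
noncomputable def toUF : (ℕ → ℝ) →+* UF := Germ.coeRingHom _

open Filter in
theorem toUF_eq (a b : ℕ → ℝ) : toUF a = toUF b ↔ ∀ᶠ k in (hyperfilter ℕ : Filter ℕ), a k = b k := Germ.coe_eq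

theorem toUF_surj (x : UF) : ∃ a, toUF a = x := by
  induction x using Quotient.inductionOn with
  | h a => exact ⟨a, rfl⟩

/-- first stage -/
noncomputable def ev1p : Polynomial ℚ →+* UF := Polynomial.eval₂RingHom (algebraMap ℚ UF) (toUF d0)

/-- constants -/
noncomputable def cUF : ℝ →+* UF := toUF.comp (Pi.constRingHom ℕ ℝ)

theorem ev_real (p : Polynomial ℝ) : p.eval₂ cUF (toUF d0) = toUF (fun k => p.eval (d0 k)) := by
  induction p using Polynomial.induction_on' with
  | add p q hp hq => 
    rw [Polynomial.eval₂_add, hp, hq, ← map_add]; congr 1; funext k; simp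
  | monomial n a =>
    rw [Polynomial.eval₂_monomial, cUF, RingHom.comp_apply, ← map_pow, ← map_mul]; congr 1; funext k; simp

theorem ev_real_inj (p : Polynomial ℝ) (h : p.eval₂ cUF (toUF d0) = 0) : p = 0 := by
  by_contra hp
  rw [ev_real, ← map_zero toUF, toUF_eq] at h
  obtain ⟨k, h1, h2⟩ := (h.and (d0_trans p hp)).exists
  exact h2 h1

open Polynomial in
theorem ev_two_inj (p : ℚ[X][X]) (h : p.eval₂ ev1p (cUF L0) = 0) : p = 0 := by
  have key : ∀ p : ℚ[X][X], p.eval₂ ev1p (cUF L0) =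
      ((Bivariate.swap p).map (aeval L0 : ℚ[X] →ₐ[ℚ] ℝ).toRingHom).eval₂ cUF (toUF d0) := by
    intro p
    induction p using Polynomial.induction_on' with
    | add p q hp hq => simp only [map_add, Polynomial.map_add, Polynomial.eval₂_add, hp, hq]
    | monomial n a =>
      induction a using Polynomial.induction_on' with
      | add p q hp hq => simp only [map_add, Polynomial.map_add, Polynomial.eval₂_add, hp, hq]
      | monomial m a =>
        rw [Bivariate.swap_monomial_monomial]
        simp [ev1p, Polynomial.eval₂_monomial]
        ring
  rw [key] at h
  have h1 := ev_real_inj _ h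
  have h2 : Function.Injective (Polynomial.map (aeval L0 : ℚ[X] →ₐ[ℚ] ℝ).toRingHom) :=
    Polynomial.map_injective _ (transcendental_iff_injective.1 L0_tr)
  have h3 : Bivariate.swap p = 0 := h2 (by rw [h1, Polynomial.map_zero])
  simpa using h3

theorem ev1p_inj (p : Polynomial ℚ) (h : ev1p p = 0) : p = 0 := by
  have := ev_two_inj (Polynomial.C p) (by simpa using h)
  simpa using this

/-- first stage -/
noncomputable def ev1 : RatFunc ℚ →+* UF := RatFunc.liftRingHom ev1p (by
  intro p hp
  rw [Submonoid.mem_comap, mem_nonZeroDivisors_iff_ne_zero]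
  intro h
  exact (nonZeroDivisors.ne_zero hp) (ev1p_inj p h))

theorem ev1_poly (p : Polynomial ℚ) : ev1 (algebraMap _ _ p) = ev1p p := by
  simp [ev1]

open Polynomial in
theorem ev2_inj (p : Polynomial (RatFunc ℚ)) (h : p.eval₂ ev1 (cUF L0) = 0) : p = 0 := by
  obtain ⟨b, hb⟩ := IsLocalization.integerNormalization_map_to_map (nonZeroDivisors ℚ[X]) p
  have hb0 : (algebraMap ℚ[X] (RatFunc ℚ) b) ≠ 0 := by
    simpa using nonZeroDivisors.ne_zero b.2
  have h1 : (IsLocalization.integerNormalization (nonZeroDivisors ℚ[X]) p) = 0 := by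
    apply ev_two_inj
    have h2 : ev1p = ev1.comp (algebraMap ℚ[X] (RatFunc ℚ)) := by
      exact RingHom.ext fun p => (ev1_poly p).symm
    rw [h2, ← Polynomial.eval₂_map, hb, Algebra.smul_def, Polynomial.eval₂_mul, h, mul_zero]
  rw [h1, Polynomial.map_zero] at hb
  have h3 : (C (algebraMap ℚ[X] (RatFunc ℚ) b)) * p = 0 := by
    rw [hb, Algebra.smul_def]; rfl
  rcases mul_eq_zero.1 h3 with h | h
  · exact absurd (by simpa using h) hb0
  · exact h

/-- evaluation of rational functions -/
noncomputable def ev2 : BMWField →+* UF := RatFunc.liftRingHom (Polynomial.eval₂RingHom ev1 (cUF L0)) (by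
  intro p hp
  rw [Submonoid.mem_comap, mem_nonZeroDivisors_iff_ne_zero]
  intro h
  exact (nonZeroDivisors.ne_zero hp) (ev2_inj p h))

theorem ev2_l : ev2 lVar = toUF (fun _ => L0) := by
  rw [lVar, ← RatFunc.algebraMap_X, ev2, RatFunc.liftRingHom_apply]
  simp; rfl
theorem ev2_d : ev2 deltaVar = toUF d0 := by
  rw [deltaVar, ← RatFunc.algebraMap_C, ev2, RatFunc.liftRingHom_apply]
  simp
  rw [← RatFunc.algebraMap_X, ev1_poly]; simp [ev1p]

theorem ev2_linv : ev2 lVar⁻¹ = toUF (fun _ => L0⁻¹) := by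
  have h : lVar ≠ 0 := params.hl
  have h1 : ev2 lVar * ev2 lVar⁻¹ = 1 := by rw [← map_mul, mul_inv_cancel₀ h, map_one]
  have h2 : ev2 lVar * toUF (fun _ => L0⁻¹) = 1 := by
    rw [ev2_l, ← map_mul, ← map_one toUF]; congr 1; funext k
    have := L0_gt
    simp [mul_inv_cancel₀ (by linarith : L0 ≠ 0)]
  exact mul_left_cancel₀ (left_ne_zero_of_mul_eq_one h1) (h1.trans h2.symm)

theorem ev2_m : ev2 mVar = toUF m0 := by
  have h1 := congrArg ev2 params.hd
  rw [map_mul, map_sub, map_sub, map_one] at h1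
  have h2 : toUF m0 * (1 - ev2 deltaVar) = ev2 lVar - ev2 lVar⁻¹ := by
    rw [ev2_d, ev2_l, ev2_linv, ← map_one toUF, ← map_sub, ← map_mul, ← map_sub]
    congr 1; funext k; exact d0_eq k
  have h3 : (1 - ev2 deltaVar) ≠ 0 := by
    rw [← map_one ev2, ← map_sub]
    exact (map_ne_zero ev2).2 one_sub_delta_ne
  exact mul_right_cancel₀ h3 (h1.trans h2.symm)

/-- representatives -/
noncomputable def ev (c : BMWField) : ℕ → ℝ := (toUF_surj (ev2 c)).choose
theorem ev_spec (c : BMWField) : toUF (ev c) = ev2 c := (toUF_surj (ev2 c)).choose_spec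


end Part6

section Part7
open Filter

theorem ev_congr {a b : BMWField} {x : ℕ → ℝ} (h : ev2 a = toUF x) :
    ∀ᶠ k in (hyperfilter ℕ : Filter ℕ), ev a k = x k := by
  rw [← toUF_eq, ev_spec, h]

/-- families of operators -/
abbrev PR : Type := ∀ k : ℕ, Module.End ℝ (S0 k).TS

/-- eventually zero families -/
def IZ : Ideal PR where
  carrier := {X | ∀ᶠ k in (hyperfilter ℕ : Filter ℕ), X k = 0}
  add_mem' := by
    intro X Y hX hY
    filter_upwards [hX, hY] with k h1 h2
    rw [Pi.add_apply, h1, h2, add_zero]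
  zero_mem' := by simp
  smul_mem' := by
    intro X Y hY
    filter_upwards [hY] with k h1
    rw [smul_eq_mul, Pi.mul_apply, h1, mul_zero]

instance : IZ.IsTwoSided := ⟨by
  intro X Y hX
  have hX : ∀ᶠ k in (hyperfilter ℕ : Filter ℕ), X k = 0 := hX
  show ∀ᶠ k in (hyperfilter ℕ : Filter ℕ), (X * Y) k = 0
  filter_upwards [hX] with k h1
  rw [Pi.mul_apply, h1, zero_mul]⟩

/-- the ultraproduct of operator algebras -/
abbrev QR : Type := PR ⧸ IZ

/-- quotient map -/
def mkQ : PR →+* QR := Ideal.Quotient.mk IZ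

theorem mkQ_eq (X Y : PR) : mkQ X = mkQ Y ↔ ∀ᶠ k in (hyperfilter ℕ : Filter ℕ), X k = Y k := by
  rw [mkQ, Ideal.Quotient.eq]
  show (∀ᶠ k in (hyperfilter ℕ : Filter ℕ), (X - Y) k = 0) ↔ _
  simp only [Pi.sub_apply, sub_eq_zero]
theorem mkQ_zero (X : PR) : mkQ X = 0 ↔ ∀ᶠ k in (hyperfilter ℕ : Filter ℕ), X k = 0 := by
  rw [← map_zero mkQ, mkQ_eq]; rfl

/-- scalar families -/
noncomputable def scP : (ℕ → ℝ) →+* PR := Pi.ringHom fun k => (algebraMap ℝ (Module.End ℝ (S0 k).TS)).comp (Pi.evalRingHom _ k)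

theorem scP_apply (a : ℕ → ℝ) (k : ℕ) : scP a k = algebraMap ℝ _ (a k) := rfl

/-- scalars -/
noncomputable def scF (x : UF) : QR := mkQ (scP (toUF_surj x).choose)

theorem scF_toUF (a : ℕ → ℝ) : scF (toUF a) = mkQ (scP a) := by
  show mkQ (scP (toUF_surj _).choose) = _
  rw [mkQ_eq]
  have := (toUF_surj (toUF a)).choose_spec
  rw [toUF_eq] at this
  filter_upwards [this] with k h
  rw [scP_apply, scP_apply, h]

/-- scalars -/
noncomputable def scU : UF →+* QR where
  toFun := scF
  map_one' := by rw [← map_one toUF, scF_toUF, map_one, map_one]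
  map_zero' := by rw [← map_zero toUF, scF_toUF, map_zero, map_zero]
  map_mul' x y := by
    obtain ⟨a, rfl⟩ := toUF_surj x
    obtain ⟨b, rfl⟩ := toUF_surj y
    rw [← map_mul, scF_toUF, scF_toUF, scF_toUF, map_mul, map_mul]
  map_add' x y := by
    obtain ⟨a, rfl⟩ := toUF_surj x
    obtain ⟨b, rfl⟩ := toUF_surj y
    rw [← map_add, scF_toUF, scF_toUF, scF_toUF, map_add, map_add]

theorem scU_toUF (a : ℕ → ℝ) : scU (toUF a) = mkQ (scP a) := scF_toUF a

theorem mkQ_surj (x : QR) : ∃ X, mkQ X = x := Ideal.Quotient.mk_surjective x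

noncomputable instance QR_alg : Algebra BMWField QR := RingHom.toAlgebra' (scU.comp ev2) (by
  intro c x
  obtain ⟨X, rfl⟩ := mkQ_surj x
  obtain ⟨a, ha⟩ := toUF_surj (ev2 c)
  rw [RingHom.comp_apply, ← ha, scU_toUF, ← map_mul, ← map_mul]
  congr 1; funext k
  rw [Pi.mul_apply, Pi.mul_apply, scP_apply]
  exact Algebra.commutes _ _)

theorem algQ (c : BMWField) (a : ℕ → ℝ) (h : ev2 c = toUF a) : algebraMap BMWField QR c = mkQ (scP a) := by
  rw [← scU_toUF, ← h]; rfl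

theorem smulQ (c : BMWField) (a : ℕ → ℝ) (h : ev2 c = toUF a) (X : PR) : c • mkQ X = mkQ (fun k => a k • X k) := by
  rw [Algebra.smul_def, algQ c a h, ← map_mul]
  congr 1

/-- family of braid operators -/
noncomputable def GP (i : ℕ) : PR := fun k => (S0 k).G i
/-- family of cup-cap operators -/
noncomputable def EP (i : ℕ) : PR := fun k => (S0 k).E i

theorem t0_ne (k : ℕ) : q0 k ^ (k+1) ≠ 0 := pow_ne_zero _ (q0_ne k)

theorem famQ (N : ℕ) : Fam lVar mVar deltaVar N (fun i => mkQ (GP i)) (fun i => mkQ (EP i)) where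
  par := params
  comm := by
    intro i j hi hj hij
    rw [← map_mul, ← map_mul]; congr 1; funext k
    refine LinearMap.ext fun f => funext fun x => ?_
    first
    | exact QSpace.G_comm i j hij f x
    | (rcases hij with h | h
       · exact QSpace.G_comm i j h f x
       · exact (QSpace.G_comm j i h f x).symm)
  braid := by
    intro i hi
    rw [← map_mul, ← map_mul, ← map_mul, ← map_mul]; congr 1; funext k
    refine LinearMap.ext fun f => funext fun x => ?_
    exact QSpace.G_braid i f x
  quad := by
    intro i hi
    rw [smulQ _ _ ev2_m, smulQ _ _ ev2_m, ← map_mul, ← map_add, ← map_one mkQ, ← map_sub, smulQ _ _ ev2_l]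
    congr 1; funext k
    refine LinearMap.ext fun f => funext fun x => ?_
    have := QSpace.GG (S := S0 k) i f x
    rw [l0_inv_eq] at this
    have h0 : L0 ≠ 0 := by linarith [L0_gt]
    show m0 k * ((S0 k).E i f x) = L0 * ((S0 k).G i ((S0 k).G i f) x + m0 k * (S0 k).G i f x - f x)
    rw [this, m0]; field_simp; ring
  ge := by
    intro i hi
    rw [smulQ _ _ ev2_linv, ← map_mul]
    congr 1; funext k
    refine LinearMap.ext fun f => funext fun x => ?_
    have := QSpace.GE (S := S0 k) i f x
    rw [l0_inv_eq] at this
    exact this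
  ege := by
    intro i hi
    rw [smulQ _ _ ev2_l, ← map_mul, ← map_mul]
    congr 1; funext k
    refine LinearMap.ext fun f => funext fun x => ?_
    have := QSpace.EGE (S := S0 k) (q0_ne k) (t0_ne k) i f x
    rw [l0_eq] at this
    exact this
  ege' := by
    intro i hi
    rw [smulQ _ _ ev2_l, ← map_mul, ← map_mul]
    congr 1; funext k
    refine LinearMap.ext fun f => funext fun x => ?_
    have := QSpace.EGE' (S := S0 k) (q0_ne k) (t0_ne k) i f x
    rw [l0_eq] at this
    exact this

/-- the representation -/
noncomputable def rho (N : ℕ) : BA N →ₐ[BMWField] QR := liftB (famQ N)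

theorem rho_g {N i : ℕ} (hi : i < N) : rho N (gB N i) = mkQ (GP i) := liftB_g _ hi
theorem rho_e {N i : ℕ} (hi : i < N) : rho N (eB N i) = mkQ (EP i) := liftB_e _ hi

theorem rho_incl {M N : ℕ} (h : M ≤ N) (x : BA M) : rho N (incl h x) = rho M x := by
  refine BA_ext ((rho N).comp (incl h)) (rho M) (fun i hi => ?_) x
  rw [AlgHom.comp_apply, incl_g h hi, rho_g hi, rho_g (by omega)]

theorem rho_alg {N : ℕ} (c : BMWField) : rho N (algebraMap _ _ c) = mkQ (scP (ev c)) := by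
  rw [AlgHom.commutes, algQ c _ (ev_spec c).symm]

open QSpace in
theorem total_add {q t : ℝ} {k : ℕ} {S : QSpace q t k} (N : ℕ) (F F' : S.TS) :
    total N (F + F') = total N F + total N F' := by
  have hs : ∀ i (F F' : S.TS), sm i (F + F') = sm i F + sm i F' := by
    intro i F F'; funext x; simp [sm, Finset.sum_add_distrib]
  induction N generalizing F F' with
  | zero => exact hs 0 F F'
  | succ N ih => simp only [total, hs, ih]

open QSpace in
theorem rho_adj {N : ℕ} (x : BA N) : ∃ X Y : PR, rho N x = mkQ X ∧ rho N (tau x) = mkQ Y ∧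
    ∀ k, AdjOp N (X k) (Y k) := by
  refine BA_ind (p := fun x => ∃ X Y : PR, rho N x = mkQ X ∧ rho N (tau x) = mkQ Y ∧
    ∀ k, AdjOp N (X k) (Y k)) ?_ ?_ ?_ ?_ x
  · intro i hi
    refine ⟨GP i, GP i, rho_g hi, by rw [tau_g hi, rho_g hi], fun k f h => G_adj N i hi f h⟩
  · intro c
    refine ⟨_, _, rho_alg c, by rw [tau_algebraMap, rho_alg c], fun k f h => ?_⟩
    congr 1; funext x
    simp [scP_apply]; ring
  · rintro x y ⟨X, Y, h1, h2, h3⟩ ⟨X', Y', h1', h2', h3'⟩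
    refine ⟨X + X', Y + Y', by rw [map_add, h1, h1', map_add], by rw [tau_add, map_add, h2, h2', map_add], fun k f h => ?_⟩
    have := h3 k f h
    have := h3' k f h
    rw [Pi.add_apply, Pi.add_apply, LinearMap.add_apply, LinearMap.add_apply, add_mul, mul_add, total_add, total_add, h3 k f h, h3' k f h]
  · rintro x y ⟨X, Y, h1, h2, h3⟩ ⟨X', Y', h1', h2', h3'⟩
    refine ⟨X * X', Y' * Y, by rw [map_mul, h1, h1', map_mul], by rw [tau_mul, map_mul, h2, h2', map_mul], fun k f h => ?_⟩
    rw [Pi.mul_apply, Pi.mul_apply, Module.End.mul_apply, Module.End.mul_apply, h3 k, h3' k]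

theorem rho_aniso {N : ℕ} (x : BA N) (h : rho N (tau x * x) = 0) : rho N x = 0 := by
  obtain ⟨X, Y, h1, h2, h3⟩ := rho_adj x
  rw [map_mul, h1, h2, ← map_mul, mkQ_zero] at h
  rw [h1, mkQ_zero]
  filter_upwards [h] with k hk
  exact QSpace.AdjOp_zero (h3 k) hk

theorem rho_tau {N : ℕ} (x : BA N) (h : rho N x = 0) : rho N (tau x) = 0 := by
  apply rho_aniso
  rw [tau_tau, map_mul, h, zero_mul]

theorem rho_U {M : ℕ} (x : BA M) : ∃ X : PR, rho M x = mkQ X ∧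
    ∀ k j, M < j → ∀ y, X k * (S0 k).U j y = (S0 k).U j y * X k := by
  refine BA_ind (p := fun x => ∃ X : PR, rho M x = mkQ X ∧
    ∀ k j, M < j → ∀ y, X k * (S0 k).U j y = (S0 k).U j y * X k) ?_ ?_ ?_ ?_ x
  · intro i hi
    exact ⟨GP i, rho_g hi, fun k j hj y => QSpace.G_U i j (by omega) y⟩
  · intro c
    exact ⟨_, rho_alg c, fun k j hj y => Algebra.commutes (ev c k) ((S0 k).U j y)⟩
  · rintro x y ⟨X, h1, h2⟩ ⟨X', h1', h2'⟩
    refine ⟨X + X', by rw [map_add, h1, h1', map_add], fun k j hj y => ?_⟩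
    rw [Pi.add_apply, add_mul, mul_add, h2 k j hj, h2' k j hj]
  · rintro x y ⟨X, h1, h2⟩ ⟨X', h1', h2'⟩
    refine ⟨X * X', by rw [map_mul, h1, h1', map_mul], fun k j hj y => ?_⟩
    rw [Pi.mul_apply, mul_assoc, h2' k j hj, ← mul_assoc, h2 k j hj, mul_assoc]

theorem d0_ne : ∀ᶠ k in (hyperfilter ℕ : Filter ℕ), d0 k ≠ 0 := by
  have := d0_trans Polynomial.X Polynomial.X_ne_zero
  simpa using this

theorem rho_cancel {M : ℕ} (x : BA M) (h : rho (M+1) (incl (Nat.le_succ M) x * eB (M+1) M) = 0) : rho M x = 0 := by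
  obtain ⟨X, h1, h2⟩ := rho_U x
  rw [map_mul, rho_incl, rho_e (by omega), h1, ← map_mul, mkQ_zero] at h
  rw [h1, mkQ_zero]
  filter_upwards [h, d0_ne] with k hk hd
  exact QSpace.cancelE M _ (h2 k) hd hk

open QSpace in
theorem rho_W {N : ℕ} (x : BA N) : ∃ X : PR, rho N x = mkQ X ∧ ∀ k f, InW N f → InW N (X k f) := by
  refine BA_ind (p := fun x => ∃ X : PR, rho N x = mkQ X ∧ ∀ k f, InW N f → InW N (X k f)) ?_ ?_ ?_ ?_ x
  · intro i hi
    exact ⟨GP i, rho_g hi, fun k f hf => QSpace.G_InW N i hi f hf⟩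
  · intro c
    refine ⟨_, rho_alg c, fun k f hf x hx => ?_⟩
    simp [scP_apply, hf x hx]
  · rintro x y ⟨X, h1, h2⟩ ⟨X', h1', h2'⟩
    refine ⟨X + X', by rw [map_add, h1, h1', map_add], fun k f hf x hx => ?_⟩
    rw [Pi.add_apply, LinearMap.add_apply, Pi.add_apply, h2 k f hf x hx, h2' k f hf x hx, add_zero]
  · rintro x y ⟨X, h1, h2⟩ ⟨X', h1', h2'⟩
    refine ⟨X * X', by rw [map_mul, h1, h1', map_mul], fun k f hf => ?_⟩
    rw [Pi.mul_apply, Module.End.mul_apply]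
    exact h2 k _ (h2' k f hf)

open QSpace in
theorem rho_J {M : ℕ} (x : BA (M+1)) (hx : x ∈ Jid (eB (M+1) M)) :
    ∃ X : PR, rho (M+1) x = mkQ X ∧ ∀ k f, InW (M+1) f → X k f = 0 := by
  refine Jid_ind (p := fun x => ∃ X : PR, rho (M+1) x = mkQ X ∧ ∀ k f, InW (M+1) f → X k f = 0) ?_ ?_ ?_ hx
  · exact ⟨0, by rw [map_zero, map_zero], fun k f hf => rfl⟩
  · rintro x y ⟨X, h1, h2⟩ ⟨X', h1', h2'⟩
    refine ⟨X + X', by rw [map_add, h1, h1', map_add], fun k f hf => ?_⟩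
    rw [Pi.add_apply, LinearMap.add_apply, h2 k f hf, h2' k f hf, add_zero]
  · intro a b
    obtain ⟨X, h1, -⟩ := rho_W a
    obtain ⟨Y, h1', h2⟩ := rho_W b
    refine ⟨X * EP M * Y, by rw [map_mul, map_mul, h1, h1', rho_e (by omega), map_mul, map_mul], fun k f hf => ?_⟩
    show X k ((S0 k).E M (Y k f)) = 0
    rw [E_InW (M+1) M (by omega) _ (h2 k f hf), map_zero]

open QSpace in
theorem rho_words {M : ℕ} (c : Idx (M+1) → BMWField) (y : BA (M+1)) (hy : y ∈ Jid (eB (M+1) M))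
    (h : rho (M+1) (∑ d, c d • word (gB (M+1)) (M+1) d + y) = 0) (d) : c d = 0 := by
  obtain ⟨Y, h1, h2⟩ := rho_J y hy
  have hw : ∀ d, rho (M+1) (word (gB (M+1)) (M+1) d) = mkQ (word GP (M+1) d) := by
    intro d
    rw [map_word mkQ]
    have := map_word (rho (M+1)).toRingHom (gB (M+1)) (M+1) d
    refine this.trans ?_
    apply word_congr
    intro i hi
    exact rho_g hi
  have hs : ∀ k d, word GP (M+1) d k = word (S0 k).G (M+1) d := by
    intro k d
    exact map_word (Pi.evalRingHom (fun k => Module.End ℝ (S0 k).TS) k) GP (M+1) d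
  rw [map_add, map_sum, h1] at h
  simp only [map_smul, hw] at h
  have h3 : ∀ d, c d • mkQ (word GP (M+1) d) = mkQ (fun k => ev (c d) k • word (S0 k).G (M+1) d) := by
    intro d
    rw [smulQ _ _ (ev_spec (c d)).symm]; simp only [hs]
  simp only [h3] at h
  rw [← map_sum, ← map_add, mkQ_zero] at h
  have hk : ∀ᶠ k in (hyperfilter ℕ : Filter ℕ), M + 1 < k + 1 := by
    have : ∀ᶠ k in (cofinite : Filter ℕ), M + 1 < k + 1 := by
      rw [Nat.cofinite_eq_atTop]
      filter_upwards [eventually_gt_atTop M] with k hk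
      omega
    exact hyperfilter_le_cofinite this
  have h4 : ev2 (c d) = 0 := by
    rw [← ev_spec, ← map_zero toUF, toUF_eq]
    filter_upwards [h, hk] with k h5 h6
    obtain ⟨b, hb⟩ := exists_good (S0 k) (M+1) h6
    have h7 := LinearMap.congr_fun h5 (ind (M+1) b id)
    rw [Pi.add_apply, LinearMap.add_apply, h2 k _ (ind_InW _ _ hb id (fun p hp => hp)), add_zero, Finset.sum_apply,
      LinearMap.sum_apply] at h7
    simp only [LinearMap.smul_apply, word_ind (M+1) b hb (M+1) le_rfl] at h7
    exact ind_indep (M+1) b hb (fun d => ev (c d) k) h7 d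
  exact (map_eq_zero ev2).1 h4

end Part7

section Part8

section
variable {M : ℕ}

theorem Be_inj (IH : ∀ x, rho M x = 0 → x = 0) (x : BA (M+1)) (h : rho (M+1) (x * eB (M+1) M) = 0) :
    x * eB (M+1) M = 0 := by
  obtain ⟨y, hy, h1⟩ := (famB (M+1)).Be M (by omega) (x := x) (by rw [SubK_gB]; trivial)
  obtain ⟨y', rfl⟩ := mem_incl (Nat.le_succ M) hy
  rw [h1] at h
  rw [h1, IH y' (rho_cancel y' h), map_zero, zero_mul]

theorem eB_inj (IH : ∀ x, rho M x = 0 → x = 0) (x : BA (M+1)) (h : rho (M+1) (eB (M+1) M * x) = 0) :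
    eB (M+1) M * x = 0 := by
  have h1 := rho_tau _ h
  rw [tau_mul, tau_e (by omega)] at h1
  have h2 := Be_inj IH _ h1
  rw [← tau_tau (eB (M+1) M * x), tau_mul, tau_e (by omega), h2, tau_zero]

theorem rho_sym_nil {N : ℕ} (y : BA N) (hy : tau y = y) (n : ℕ) (h : rho N y ^ (2 ^ n) = 0) : rho N y = 0 := by
  induction n with
  | zero => simpa using h
  | succ n ih =>
    apply ih
    have ht : ∀ m, tau (y ^ m) = y ^ m := by
      intro m
      induction m with
      | zero => rw [pow_zero, ← map_one (algebraMap BMWField (BA N)), tau_algebraMap]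
      | succ m ih => rw [pow_succ, tau_mul, ih, hy, ← pow_succ', pow_succ]
    rw [← map_pow]
    apply rho_aniso
    rw [ht, ← pow_add, map_pow]
    rw [pow_succ, mul_two] at h
    exact h

theorem range_ss (N : ℕ) : IsSemisimpleRing (rho N).range := by
  haveI : Module.Finite BMWField (rho N).range := Module.Finite.of_surjective (rho N).rangeRestrict.toLinearMap
    (rho N).rangeRestrict_surjective
  haveI : IsArtinianRing (rho N).range := IsArtinianRing.of_finite BMWField _
  rw [IsArtinianRing.isSemisimpleRing_iff_jacobson, eq_bot_iff]
  intro x hx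
  obtain ⟨n, hn⟩ := IsSemiprimaryRing.isNilpotent (R := (rho N).range)
  have hnil : ∀ y ∈ Ring.jacobson (rho N).range, y ^ n = 0 := by
    intro y hy
    have := Ideal.pow_mem_pow hy n
    rw [hn] at this
    exact this
  obtain ⟨_, b, rfl⟩ := x
  have hb := hnil _ (Ideal.mul_mem_left _ (⟨rho N (tau b), tau b, rfl⟩ : (rho N).range) hx)
  have hb' : (rho N (tau b) * rho N b) ^ n = 0 := congrArg Subtype.val hb
  rw [← map_mul] at hb'
  have h1 : rho N (tau b * b) = 0 := by
    refine rho_sym_nil _ (by rw [tau_mul, tau_tau]) n (pow_eq_zero_of_le (Nat.lt_two_pow_self).le hb')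
  exact Subtype.ext (rho_aniso b h1)

theorem tau_J {x : BA (M+1)} (hx : x ∈ Jid (eB (M+1) M)) : tau x ∈ Jid (eB (M+1) M) := by
  refine Jid_ind (p := fun x => tau x ∈ Jid (eB (M+1) M)) ?_ ?_ ?_ hx
  · rw [tau_zero]; exact zero_mem _
  · intro x y hx hy; rw [tau_add]; exact add_mem hx hy
  · intro a b
    rw [tau_mul, tau_mul, tau_e (by omega), ← mul_assoc]; exact mem_Jid _ _

theorem exists_z0 (IH : ∀ x, rho M x = 0 → x = 0) : ∃ z ∈ Jid (eB (M+1) M), ∀ j ∈ Jid (eB (M+1) M), j * z = j := by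
  haveI := range_ss (M+1)
  let π := (rho (M+1)).rangeRestrict
  have hπ : Function.Surjective π := (rho (M+1)).rangeRestrict_surjective
  obtain ⟨C, hC⟩ := exists_isCompl ((Jid (eB (M+1) M)).map π)
  have h1 : (1 : (rho (M+1)).range) ∈ ((Jid (eB (M+1) M)).map π) ⊔ C := by rw [hC.sup_eq_top]; trivial
  obtain ⟨ε, hε, ε', hε', h2⟩ := Submodule.mem_sup.1 h1
  obtain ⟨z, hz, rfl⟩ := (Ideal.mem_map_iff_of_surjective π hπ).1 hε
  refine ⟨z, hz, ?_⟩
  have h3 : ∀ j ∈ Jid (eB (M+1) M), π j * π z = π j := by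
    intro j hj
    have h4 : π j * ε' = 0 := by
      have h5 : π j * ε' = π j - π j * π z := by
        rw [eq_sub_iff_add_eq, ← mul_add, add_comm ε', h2, mul_one]
      have h6 : π j * ε' ∈ ((Jid (eB (M+1) M)).map π) := by
        rw [h5]
        exact sub_mem (Ideal.mem_map_of_mem _ hj) (Ideal.mul_mem_left _ _ hε)
      exact Submodule.disjoint_def.1 hC.disjoint _ h6 (C.smul_mem _ hε')
    have h5 := congrArg (fun u => π j * u) h2
    simp only [mul_add, h4, add_zero, mul_one] at h5
    exact h5
  intro j hj
  refine Jid_ind (p := fun j => j * z = j) (zero_mul _) ?_ ?_ hj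
  · intro x y hx hy; rw [add_mul, hx, hy]
  · intro a b
    have h4 : eB (M+1) M * (b * z - b) = 0 := by
      apply eB_inj IH
      have h5 := congrArg Subtype.val (h3 (eB (M+1) M * b) (by simpa using mem_Jid (e := eB (M+1) M) 1 b))
      have h6 : rho (M+1) (eB (M+1) M * b) * rho (M+1) z = rho (M+1) (eB (M+1) M * b) := h5
      rw [mul_sub, ← mul_assoc, map_sub, map_mul _ _ z, h6, sub_self]
    rw [mul_sub, sub_eq_zero] at h4
    rw [mul_assoc, mul_assoc, mul_assoc, h4]

theorem exists_z (IH : ∀ x, rho M x = 0 → x = 0) : ∃ z ∈ Jid (eB (M+1) M), (∀ j ∈ Jid (eB (M+1) M), j * z = j) ∧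
    (∀ b, b * z = z * b) := by
  obtain ⟨z, hz, h⟩ := exists_z0 IH
  have h1 : ∀ j ∈ Jid (eB (M+1) M), tau z * j = j := by
    intro j hj
    have := congrArg tau (h _ (tau_J hj))
    rwa [tau_mul, tau_tau] at this
  have h2 : tau z = z := by
    rw [← h _ (tau_J hz), h1 z hz]
  rw [h2] at h1
  refine ⟨z, hz, h, fun b => ?_⟩
  rw [← h1 (b * z) (Ideal.mul_mem_left _ _ hz), ← mul_assoc, h _ (Ideal.mul_mem_right _ _ hz)]

end

theorem rho_inj (N : ℕ) : ∀ x, rho N x = 0 → x = 0 := by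
  induction N with
  | zero =>
    intro x hx
    obtain ⟨c, rfl⟩ := BA_zero x
    rw [rho_alg, mkQ_zero] at hx
    have : ev2 c = 0 := by
      rw [← ev_spec, ← map_zero toUF, toUF_eq]
      filter_upwards [hx] with k hk
      have h1 := congrFun (LinearMap.congr_fun hk (fun _ => 1)) (fun _ => (S0 k).a 0)
      simpa [scP_apply] using h1
    rw [(map_eq_zero ev2).1 this, map_zero]
  | succ M IH =>
    intro x hx
    obtain ⟨z, hz, h1, h2⟩ := exists_z IH
    obtain ⟨c, y, hy, hxy⟩ := BA_span x
    have hc := rho_words c y hy (by rw [← hxy]; exact hx)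
    simp only [hc, zero_smul, Finset.sum_const_zero, zero_add] at hxy
    subst hxy
    have h3 : ∀ j ∈ Jid (eB (M+1) M), x * j = 0 := by
      intro j hj
      refine Jid_ind (p := fun j => x * j = 0) (mul_zero _) ?_ ?_ hj
      · intro u v hu hv; rw [mul_add, hu, hv, add_zero]
      · intro a b
        have : x * a * eB (M+1) M = 0 := Be_inj IH _ (by rw [map_mul, map_mul, hx, zero_mul, zero_mul])
        rw [← mul_assoc, ← mul_assoc, this, zero_mul]
    rw [← h1 x hy, h3 z hz]

theorem exists_central (M : ℕ) : ∃ z ∈ Jid (eB (M+1) M), (∀ j ∈ Jid (eB (M+1) M), j * z = j) ∧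
    (∀ b, b * z = z * b) := exists_z (rho_inj M)

theorem incl_e_inj (M : ℕ) (x : BA (M-1)) (h : incl (show M - 1 ≤ M + 1 by omega) x * eB (M+1) M = 0) : x = 0 := by
  apply rho_inj
  rw [← rho_incl (show M - 1 ≤ M by omega)]
  apply rho_cancel
  rw [map_mul, rho_incl, rho_incl, ← rho_incl (show M - 1 ≤ M + 1 by omega), ← map_mul, h, map_zero]

end Part8

section Part9

/-- A ring `S` realised as a full corner of a ring `B`. -/
structure CornerData (S B : Type) [Ring S] [Ring B] where
  φ : S →ₙ+* B
  inj : Function.Injective φ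
  range : ∀ b, ∃ s, φ 1 * b * φ 1 = φ s
  full : ∃ (n : ℕ) (a b : Fin n → B), ∑ i, a i * φ 1 * b i = 1

namespace CornerData
variable {S B : Type} [Ring S] [Ring B] (D : CornerData S B)

/-- the idempotent -/
def f : B := D.φ 1
theorem f_φ (s : S) : D.f * D.φ s = D.φ s := by rw [f, ← map_mul, one_mul]
theorem φ_f (s : S) : D.φ s * D.f = D.φ s := by rw [f, ← map_mul, mul_one]
theorem ff : D.f * D.f = D.f := D.f_φ 1

/-- inverse -/
noncomputable def σ (b : B) : S := (D.range b).choose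
theorem φσ (b : B) : D.φ (D.σ b) = D.f * b * D.f := (D.range b).choose_spec.symm

variable (M : Type) [AddCommGroup M] [Module B M]

/-- `fM` -/
def cor : AddSubgroup M where
  carrier := {m | D.f • m = m}
  add_mem' := by
    intro a b (ha : D.f • a = a) (hb : D.f • b = b)
    show D.f • (a + b) = a + b
    rw [smul_add, ha, hb]
  zero_mem' := smul_zero _
  neg_mem' := by
    intro a (ha : D.f • a = a)
    show D.f • (-a) = -a
    rw [smul_neg, ha]

variable {M}
theorem cor_smul (m : D.cor M) : D.f • (m : M) = m := m.2
theorem smul_mem_cor (s : S) (m : M) : D.φ s • m ∈ D.cor M := by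
  show D.f • _ = _
  rw [← mul_smul, f_φ]
theorem f_mem_cor (m : M) : D.f • m ∈ D.cor M := D.smul_mem_cor 1 m

instance : Module S (D.cor M) where
  smul s m := ⟨D.φ s • (m : M), D.smul_mem_cor (M := M) s (m : M)⟩
  one_smul m := Subtype.ext m.2
  mul_smul s t m := Subtype.ext (by show D.φ (s * t) • (m : M) = D.φ s • (D.φ t • (m : M)); rw [map_mul, mul_smul])
  smul_zero s := Subtype.ext (smul_zero _)
  smul_add s m m' := Subtype.ext (smul_add _ _ _)
  add_smul s t m := Subtype.ext (by show D.φ (s + t) • (m : M) = D.φ s • (m : M) + D.φ t • (m : M); rw [map_add, add_smul])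
  zero_smul m := Subtype.ext (by show D.φ 0 • (m : M) = 0; rw [map_zero, zero_smul])

theorem coe_smul (s : S) (m : D.cor M) : ((s • m : D.cor M) : M) = D.φ s • (m : M) := rfl

variable {N : Type} [AddCommGroup N] [Module B N]

/-- functoriality -/
def corMap (h : M →ₗ[B] N) : D.cor M →ₗ[S] D.cor N where
  toFun m := ⟨h m, by show D.f • h m = h m; rw [← map_smul, cor_smul]⟩
  map_add' a b := Subtype.ext (map_add h _ _)
  map_smul' s m := Subtype.ext (map_smul h _ _)

theorem corMap_coe (h : M →ₗ[B] N) (m : D.cor M) : (D.corMap h m : N) = h m := rfl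

theorem sum_smul_one {n : ℕ} {a b : Fin n → B} (h : ∑ i, a i * D.f * b i = 1) (m : M) :
    ∑ i, a i • (D.f • (b i • m)) = m := by
  conv_rhs => rw [← one_smul B m, ← h, Finset.sum_smul]
  simp only [mul_smul]

theorem corMap_inj (h h' : M →ₗ[B] N) (e : D.corMap h = D.corMap h') : h = h' := by
  obtain ⟨n, a, b, hab⟩ := D.full
  ext m
  have key : ∀ m : M, h (D.f • m) = h' (D.f • m) := fun m =>
    congrArg Subtype.val (LinearMap.congr_fun e ⟨D.f • m, D.f_mem_cor m⟩)
  rw [← D.sum_smul_one hab m]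
  simp only [map_sum, map_smul h (a _), map_smul h' (a _), key]

theorem k_smul (k : D.cor M →ₗ[S] D.cor N) (c : B) (m : D.cor M) :
    ((k ⟨D.f • (c • (m : M)), D.f_mem_cor _⟩ : D.cor N) : N) = D.f • (c • (k m : N)) := by
  have h1 : (⟨D.f • (c • (m : M)), D.f_mem_cor _⟩ : D.cor M) = D.σ c • m := by
    refine Subtype.ext ?_
    rw [coe_smul, φσ, mul_smul, mul_smul, cor_smul]
  rw [h1, map_smul, coe_smul, φσ, mul_smul, mul_smul, cor_smul]

theorem corMap_surj (k : D.cor M →ₗ[S] D.cor N) : ∃ h : M →ₗ[B] N, D.corMap h = k := by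
  obtain ⟨n, a, b, hab⟩ := D.full
  let F : M → D.cor M := fun m => ⟨D.f • m, D.f_mem_cor m⟩
  have hF : ∀ m m', F (m + m') = F m + F m' := fun m m' => Subtype.ext (smul_add _ _ _)
  have hF0 : F 0 = 0 := Subtype.ext (smul_zero _)
  let Fh : M →+ D.cor M := ⟨⟨F, hF0⟩, hF⟩
  let h : M → N := fun m => ∑ i, a i • (k (F (b i • m)) : N)
  have hk : ∀ (c : B) (m : M), (k (F (c • D.f • m)) : N) = D.f • (c • (k (F m) : N)) := by
    intro c m
    exact D.k_smul k c (F m)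
  have hadd : ∀ m m', h (m + m') = h m + h m' := by
    intro m m'
    simp only [h, smul_add, hF, map_add, AddSubgroup.coe_add, Finset.sum_add_distrib]
  have hsm : ∀ (c : B) m, h (c • m) = c • h m := by
    intro c m
    have e1 : ∀ i, (k (F (b i • c • m)) : N) = ∑ j, D.f • ((b i * c * a j) • (k (F (b j • m)) : N)) := by
      intro i
      have : F (b i • c • m) = ∑ j, F ((b i * c * a j) • D.f • (b j • m)) := by
        conv_lhs => rw [← D.sum_smul_one hab m]
        simp only [Finset.smul_sum]
        have := map_sum Fh (fun j => b i • c • a j • D.f • b j • m) Finset.univ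
        refine this.trans ?_
        simp only [mul_smul]; rfl
      rw [this, map_sum, AddSubgroup.val_finset_sum]
      simp only [hk]
    show ∑ i, a i • (k (F (b i • c • m)) : N) = c • ∑ j, a j • (k (F (b j • m)) : N)
    simp only [e1, Finset.smul_sum]
    rw [Finset.sum_comm]
    refine Finset.sum_congr rfl fun j _ => ?_
    conv_rhs => rw [← D.sum_smul_one hab (c • a j • (k (F (b j • m)) : N))]
    simp only [mul_smul]
  refine ⟨⟨⟨h, hadd⟩, hsm⟩, ?_⟩
  ext m
  rw [corMap_coe]
  show ∑ i, a i • (k (F (b i • (m : M))) : N) = k m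
  rw [← D.sum_smul_one hab (k m : N)]
  refine Finset.sum_congr rfl fun i _ => ?_
  congr 1
  exact D.k_smul k (b i) m

section coind
variable (X : Type) [AddCommGroup X] [Module S X]

/-- coinduced module -/
def Coind : Type := D.cor B →ₗ[S] X

instance : AddCommGroup (D.Coind X) := inferInstanceAs (AddCommGroup (D.cor B →ₗ[S] X))

/-- right multiplication -/
def rmul (b : B) : D.cor B →ₗ[S] D.cor B where
  toFun u := ⟨(u : B) * b, by
    show D.f * ((u : B) * b) = u * b
    have : D.f * (u : B) = u := u.2
    rw [← mul_assoc, this]⟩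
  map_add' u v := Subtype.ext (add_mul _ _ _)
  map_smul' s u := Subtype.ext (mul_assoc _ _ _)

theorem rmul_coe (b : B) (u : D.cor B) : (D.rmul b u : B) = u * b := rfl

/-- application -/
def app {X : Type} [AddCommGroup X] [Module S X] (α : D.Coind X) (u : D.cor B) : X :=
  (show D.cor B →ₗ[S] X from α) u

theorem app_add_right {X : Type} [AddCommGroup X] [Module S X] (α : D.Coind X) (u v : D.cor B) :
    D.app α (u + v) = D.app α u + D.app α v := map_add (show D.cor B →ₗ[S] X from α) u v
theorem app_smul_right {X : Type} [AddCommGroup X] [Module S X] (α : D.Coind X) (s : S) (v : D.cor B) :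
    D.app α (s • v) = s • D.app α v := map_smul (show D.cor B →ₗ[S] X from α) s v
theorem app_add {X : Type} [AddCommGroup X] [Module S X] (α β : D.Coind X) (u : D.cor B) :
    D.app (α + β) u = D.app α u + D.app β u := rfl
theorem app_ext {X : Type} [AddCommGroup X] [Module S X] {α β : D.Coind X} (h : ∀ u, D.app α u = D.app β u) :
    α = β := LinearMap.ext h

instance : Module B (D.Coind X) where
  smul b α := (show D.cor B →ₗ[S] X from α).comp (D.rmul b)
  one_smul α := D.app_ext fun u => congrArg (D.app α) (Subtype.ext (mul_one _))
  mul_smul b c α := D.app_ext fun u => congrArg (D.app α) (Subtype.ext (mul_assoc _ _ _).symm)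
  smul_zero b := rfl
  smul_add b α β := rfl
  add_smul b c α := D.app_ext fun u => by
    refine Eq.trans ?_ (D.app_add_right α (D.rmul b u) (D.rmul c u))
    exact congrArg (D.app α) (Subtype.ext (mul_add _ _ _))
  zero_smul α := D.app_ext fun u => by
    refine Eq.trans ?_ (map_zero (show D.cor B →ₗ[S] X from α))
    exact congrArg (D.app α) (Subtype.ext (mul_zero _))

theorem app_smul {X : Type} [AddCommGroup X] [Module S X] (b : B) (α : D.Coind X) (u : D.cor B) :
    D.app (b • α) u = D.app α (D.rmul b u) := rfl

theorem σ_add (b c : B) : D.σ (b + c) = D.σ b + D.σ c := D.inj (by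
  rw [map_add, φσ, φσ, φσ, mul_add, add_mul])
theorem σ_mul (s : S) (c : B) : D.σ (D.φ s * c) = s * D.σ c := D.inj (by
  rw [map_mul, φσ, φσ, ← mul_assoc, f_φ, ← mul_assoc, ← mul_assoc, φ_f])
theorem σ_f : D.σ D.f = 1 := D.inj (by
  rw [φσ, ff, ff]; rfl)
theorem σ_mul_f (b : B) : D.σ (b * D.f) = D.σ b := D.inj (by
  rw [φσ, φσ, mul_assoc, mul_assoc, ff, mul_assoc])

/-- the unit as element of the corner -/
def fc : D.cor B := ⟨D.f, D.ff⟩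

/-- the coinduced map -/
noncomputable def αx {X : Type} [AddCommGroup X] [Module S X] (x : X) : D.Coind X :=
  ({ toFun := fun u => D.σ (u : B) • x
     map_add' := fun u v => by rw [AddSubgroup.coe_add, σ_add, add_smul]
     map_smul' := fun s u => by
      rw [coe_smul, smul_eq_mul, σ_mul, mul_smul]; rfl } : D.cor B →ₗ[S] X)

theorem app_αx {X : Type} [AddCommGroup X] [Module S X] (x : X) (u : D.cor B) : D.app (D.αx x) u = D.σ (u : B) • x := rfl

/-- corner of the coinduced module -/
noncomputable def coindEquiv : D.cor (D.Coind X) ≃ₗ[S] X where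
  toFun α := D.app (α : D.Coind X) D.fc
  map_add' α β := rfl
  map_smul' s α := by
    rw [coe_smul, app_smul, RingHom.id_apply, ← app_smul_right]
    refine congrArg _ (Subtype.ext ?_)
    rw [rmul_coe, coe_smul]
    exact (D.f_φ s).trans (D.φ_f s).symm
  invFun x := ⟨D.αx x, by
    show D.f • D.αx x = D.αx x
    refine D.app_ext fun u => ?_
    rw [app_smul, app_αx, app_αx, rmul_coe, σ_mul_f]⟩
  left_inv α := Subtype.ext (D.app_ext fun u => by
    show D.σ (u : B) • D.app (α : D.Coind X) D.fc = D.app (α : D.Coind X) u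
    have h1 : D.app (α : D.Coind X) (D.rmul D.f u) = D.app (α : D.Coind X) u := by
      rw [← app_smul, cor_smul]
    rw [← app_smul_right, ← h1]
    refine congrArg _ (Subtype.ext ?_)
    have h2 : D.f * (u : B) = u := u.2
    rw [coe_smul, φσ, rmul_coe]
    show D.f * u * D.f * D.f = _
    rw [mul_assoc, ff, h2])
  right_inv x := by
    show D.σ D.f • x = x
    rw [σ_f, one_smul]

end coind

open CategoryTheory

/-- the functor -/
def functor : ModuleCat.{0} B ⥤ ModuleCat.{0} S where
  obj M := ModuleCat.of S (D.cor M)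
  map h := ModuleCat.ofHom (D.corMap h.hom)
  map_id M := rfl
  map_comp f g := rfl

theorem morita (D : CornerData S B) : Nonempty (ModuleCat.{0} B ≌ ModuleCat.{0} S) := by
  haveI : D.functor.Faithful := ⟨by
    intro M N h h' e
    apply ModuleCat.hom_ext
    apply D.corMap_inj
    exact congrArg ModuleCat.Hom.hom e⟩
  haveI : D.functor.Full := ⟨by
    intro M N k
    obtain ⟨h, hh⟩ := D.corMap_surj (M := M) (N := N) k.hom
    exact ⟨ModuleCat.ofHom h, ModuleCat.hom_ext hh⟩⟩
  haveI : D.functor.EssSurj := ⟨by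
    intro X
    exact ⟨ModuleCat.of B (D.Coind X), ⟨(D.coindEquiv X).toModuleIso⟩⟩⟩
  haveI : D.functor.IsEquivalence := {}
  exact ⟨D.functor.asEquivalence⟩

end CornerData

end Part9

section Part10

namespace CornerData

theorem of_mem {S B : Type} [Ring S] [Ring B] (φ : S →ₙ+* B) (inj : Function.Injective φ)
    (range : ∀ b, ∃ s, φ 1 * b * φ 1 = φ s) (h1 : (1 : B) ∈ Jid (φ 1)) : Nonempty (CornerData S B) := by
  refine ⟨⟨φ, inj, range, ?_⟩⟩
  refine Jid_ind (p := fun x => ∃ (n : ℕ) (a b : Fin n → B), ∑ i, a i * φ 1 * b i = x) ?_ ?_ ?_ h1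
  · exact ⟨0, fun _ => 0, fun _ => 0, by simp⟩
  · rintro x y ⟨n, a, b, rfl⟩ ⟨m, c, d, rfl⟩
    refine ⟨n + m, Fin.append a c, Fin.append b d, ?_⟩
    rw [Fin.sum_univ_add]
    simp
  · intro a b
    exact ⟨1, fun _ => a, fun _ => b, by simp⟩

theorem congr {S T B : Type} [Ring S] [Ring T] [Ring B] (D : CornerData S B) (ε : T ≃+* S) :
    Nonempty (CornerData T B) := by
  refine ⟨⟨D.φ.comp (ε : T →ₙ+* S), ?_, ?_, ?_⟩⟩
  · exact D.inj.comp ε.injective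
  · intro b
    obtain ⟨s, hs⟩ := D.range b
    refine ⟨ε.symm s, ?_⟩
    simpa using hs
  · obtain ⟨n, a, b, h⟩ := D.full
    exact ⟨n, a, b, by simpa using h⟩

theorem one_mem {S B : Type} [Ring S] [Ring B] (D : CornerData S B) : (1 : B) ∈ Jid (D.φ 1) := by
  obtain ⟨n, a, b, h⟩ := D.full
  rw [← h]
  exact Ideal.sum_mem _ fun i _ => mem_Jid _ _

theorem step {S A B H : Type} [Ring S] [Ring A] [Ring B] [Ring H] (D : CornerData S A)
    (ι : A →+* B) (e : B) (he : e * e = e) (hc : ∀ a, ι a * e = e * ι a)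
    (hinj : ∀ a, ι a * e = 0 → a = 0) (heBe : ∀ b, ∃ a, e * b * e = ι a * e)
    (p : B →+* H) (hp : Function.Surjective p) (hk : ∀ x, p x = 0 ↔ x ∈ Jid e)
    (z : B) (hz : z ∈ Jid e) (hz1 : ∀ j ∈ Jid e, j * z = j) (hz2 : ∀ b, b * z = z * b) :
    Nonempty (CornerData (H × S) B) := by
  choose q hq using hp
  have hJ : ∀ j ∈ Jid e, j * (1 - z) = 0 := fun j hj => by rw [mul_sub, mul_one, hz1 j hj, sub_self]
  have hcz : ∀ b, b * (1 - z) = (1 - z) * b := fun b => by rw [mul_sub, sub_mul, hz2, mul_one, one_mul]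
  have heq : ∀ x y, p x = p y → x * (1 - z) = y * (1 - z) := by
    intro x y h
    rw [← sub_eq_zero, ← sub_mul]
    exact hJ _ ((hk _).1 (by rw [map_sub, h, sub_self]))
  have hw : (1 - z) * (1 - z) = 1 - z := by
    have := hJ z hz
    rw [sub_mul, this, one_mul, sub_zero]
  have hez : e * (1 - z) = 0 := hJ e e_mem_Jid
  have hze : (1 - z) * e = 0 := by rw [← hcz, hez]
  have hie : ∀ a, ι a * e * (1 - z) = 0 := fun a => by rw [mul_assoc, hez, mul_zero]
  have hei : ∀ a, (1 - z) * (ι a * e) = 0 := fun a => by rw [← hcz, hie]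
  have hmul : ∀ a b, ι a * e * (ι b * e) = ι (a * b) * e := fun a b => by
    rw [mul_assoc, ← mul_assoc e, ← hc, mul_assoc, he, ← mul_assoc, map_mul]
  let φ : (H × S) →ₙ+* B :=
    { toFun := fun x => q x.1 * (1 - z) + ι (D.φ x.2) * e
      map_zero' := by
        have : q 0 * (1 - z) = 0 * (1 - z) := heq _ _ (by rw [hq, map_zero])
        simp [this]
      map_add' := fun x y => by
        have : q (x.1 + y.1) * (1 - z) = (q x.1 + q y.1) * (1 - z) := heq _ _ (by rw [hq, map_add, hq, hq])
        show q (x.1 + y.1) * (1 - z) + ι (D.φ (x.2 + y.2)) * e = _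
        rw [this, map_add, map_add, add_mul, add_mul]; abel
      map_mul' := fun x y => by
        have : q (x.1 * y.1) * (1 - z) = (q x.1 * q y.1) * (1 - z) := heq _ _ (by rw [hq, map_mul, hq, hq])
        show q (x.1 * y.1) * (1 - z) + ι (D.φ (x.2 * y.2)) * e = _
        have e1 : q x.1 * (1 - z) * (q y.1 * (1 - z)) = q x.1 * q y.1 * (1 - z) := by
          rw [mul_assoc, ← mul_assoc (1 - z), ← hcz, mul_assoc, hw, mul_assoc]
        have e2 : q x.1 * (1 - z) * (ι (D.φ y.2) * e) = 0 := by rw [mul_assoc, hei, mul_zero]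
        have e3 : ι (D.φ x.2) * e * (q y.1 * (1 - z)) = 0 := by rw [hcz, ← mul_assoc, hie, zero_mul]
        rw [this, map_mul, mul_add, add_mul, add_mul, e1, e2, e3, hmul]; abel }
  have hφ : ∀ x, φ x = q x.1 * (1 - z) + ι (D.φ x.2) * e := fun x => rfl
  have hφz : ∀ x, φ x * (1 - z) = q x.1 * (1 - z) := fun x => by
    rw [hφ, add_mul, hie, mul_assoc, hw, add_zero]
  have hφe : ∀ x, φ x * e = ι (D.φ x.2) * e := fun x => by
    rw [hφ, add_mul, mul_assoc, mul_assoc, hze, he, mul_zero, zero_add]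
  have hq1 : q 1 * (1 - z) = 1 - z := by
    rw [heq (q 1) 1 (by rw [hq, map_one]), one_mul]
  have hpz : p z = 0 := (hk z).2 hz
  have h1 : φ 1 = (1 - z) + ι (D.φ 1) * e := by
    rw [hφ]; show q 1 * (1 - z) + _ = _; rw [hq1]; rfl
  refine of_mem φ ?_ ?_ ?_
  · rw [injective_iff_map_eq_zero]
    intro x hx
    have a1 := hφz x
    have a2 := hφe x
    rw [hx, zero_mul] at a1 a2
    refine Prod.ext ?_ ?_
    · have := congrArg p a1
      rw [map_mul, map_sub, hpz, hq, map_one, map_zero, sub_zero, mul_one] at this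
      exact this.symm
    · have := hinj _ a2.symm
      exact D.inj (this.trans (map_zero _).symm)
  · intro b
    obtain ⟨y, hy⟩ := heBe b
    obtain ⟨s, hs⟩ := D.range y
    refine ⟨(p b, s), ?_⟩
    rw [h1, hφ]
    show _ = q (p b) * (1 - z) + ι (D.φ s) * e
    rw [heq (q (p b)) b (hq _)]
    have e1 : (1 - z) * b * (1 - z) = b * (1 - z) := by rw [← hcz, mul_assoc, hw]
    have e2 : (1 - z) * b * (ι (D.φ 1) * e) = 0 := by rw [← hcz, mul_assoc, hei, mul_zero]
    have e3 : ι (D.φ 1) * e * b * (1 - z) = 0 := by rw [mul_assoc, hcz, ← mul_assoc, hie, zero_mul]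
    have e4 : ι (D.φ 1) * e * b * (ι (D.φ 1) * e) = ι (D.φ s) * e := by
      calc ι (D.φ 1) * e * b * (ι (D.φ 1) * e) = ι (D.φ 1) * (e * (b * ι (D.φ 1)) * e) := by noncomm_ring
        _ = ι (D.φ 1) * (e * b * e * ι (D.φ 1)) := by rw [← mul_assoc e b, mul_assoc (e * b), hc, mul_assoc]; simp only [mul_assoc]
        _ = ι (D.φ s) * e := by rw [hy, ← hs, map_mul, map_mul, mul_assoc (ι y), ← hc]; simp only [mul_assoc]
    rw [add_mul, add_mul, mul_add, mul_add, e1, e2, e3, e4]; abel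
  · have he1 : e ∈ Jid (φ 1) := by
      have : ∀ a ∈ Jid (D.φ 1), ι a * e ∈ Jid (φ 1) := by
        intro a ha
        refine Jid_ind (p := fun a => ι a * e ∈ Jid (φ 1)) (by simp) ?_ ?_ ha
        · intro x y hx hy; rw [map_add, add_mul]; exact add_mem hx hy
        · intro a b
          have : ι (a * D.φ 1 * b) * e = ι a * φ 1 * (e * ι b) := by
            rw [map_mul, map_mul, mul_assoc _ (ι b), hc, ← mul_assoc, mul_assoc (ι a), ← mul_assoc (ι a * _), mul_assoc (ι a) (φ 1), hφe]; rfl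
          rw [this]; exact mem_Jid _ _
      simpa using this 1 D.one_mem
    have hz' : z ∈ Jid (φ 1) := by
      refine Jid_ind (p := fun z => z ∈ Jid (φ 1)) (zero_mem _) (fun x y => add_mem) ?_ hz
      intro a b
      exact Ideal.mul_mem_right _ _ (Ideal.mul_mem_left _ _ he1)
    have hw' : 1 - z ∈ Jid (φ 1) := by
      have : 1 * φ 1 * (1 - z) = 1 - z := by rw [one_mul, hφz]; exact hq1
      rw [← this]; exact mem_Jid _ _
    simpa using add_mem hw' hz'

end CornerData

theorem base_corner : Nonempty (CornerData (HA 0) (BA 0)) := by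
  let j : HA 0 →ₐ[BMWField] BA 0 := liftH (famB 0) (fun i hi => absurd hi (by omega))
  have hjp : ∀ x, piH 0 (j x) = x := by
    intro x
    refine HA_ind (p := fun x => piH 0 (j x) = x) ?_ ?_ ?_ ?_ x
    · intro i hi; omega
    · intro c; rw [AlgHom.commutes, AlgHom.commutes]
    · intro x y hx hy; rw [map_add, map_add, hx, hy]
    · intro x y hx hy; rw [map_mul, map_mul, hx, hy]
  have hpj : ∀ x, j (piH 0 x) = x := by
    intro x
    obtain ⟨c, rfl⟩ := BA_zero x
    rw [AlgHom.commutes, AlgHom.commutes]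
  have h1 : ((j : HA 0 →+* BA 0) : HA 0 →ₙ+* BA 0) 1 = 1 := map_one j
  refine CornerData.of_mem ((j : HA 0 →+* BA 0) : HA 0 →ₙ+* BA 0) ?_ ?_ ?_
  · exact Function.LeftInverse.injective hjp
  · intro b
    refine ⟨piH 0 b, ?_⟩
    rw [h1, one_mul, mul_one]; exact (hpj b).symm
  · rw [h1]; exact e_mem_Jid

theorem step_corner {S : Type} [Ring S] (M : ℕ) (D : CornerData S (BA (M-1))) :
    Nonempty (CornerData (HA (M+1) × S) (BA (M+1))) := by
  obtain ⟨z, hz, hz1, hz2⟩ := exists_central M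
  have hd := deltaVar_ne_zero
  have hF := famB (M+1)
  have hee : eB (M+1) M * eB (M+1) M = deltaVar • eB (M+1) M := (hF.one M (by omega)).ee
  have hJe : Jid (deltaVar⁻¹ • eB (M+1) M) = Jid (eB (M+1) M) := by
    apply le_antisymm
    · intro x hx
      refine Jid_ind (p := fun x => x ∈ Jid (eB (M+1) M)) (zero_mem _) (fun x y => add_mem) ?_ hx
      intro a b
      have : a * (deltaVar⁻¹ • eB (M+1) M) * b = (deltaVar⁻¹ • a) * eB (M+1) M * b := by simp
      rw [this]; exact mem_Jid _ _
    · intro x hx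
      refine Jid_ind (p := fun x => x ∈ Jid (deltaVar⁻¹ • eB (M+1) M)) (zero_mem _) (fun x y => add_mem) ?_ hx
      intro a b
      have : a * eB (M+1) M * b = (deltaVar • a) * (deltaVar⁻¹ • eB (M+1) M) * b := by
        simp [smul_smul, hd]
      rw [this]; exact mem_Jid _ _
  have hc : ∀ a, incl (show M - 1 ≤ M + 1 by omega) a * eB (M+1) M = eB (M+1) M * incl (show M - 1 ≤ M + 1 by omega) a := by
    intro a
    rcases Nat.eq_zero_or_pos M with rfl | hM
    · obtain ⟨c, rfl⟩ := BA_zero a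
      rw [AlgHom.commutes, Algebra.commutes]
    · exact hF.sub_comm_e (show M - 1 < M by omega) (Nat.lt_succ_self M) (incl_mem _ a)
  refine D.step (incl (show M - 1 ≤ M + 1 by omega)).toRingHom (deltaVar⁻¹ • eB (M+1) M) ?_ ?_ ?_ ?_
    (piH (M+1)).toRingHom (piH_surj _) ?_ z (hJe ▸ hz) (hJe ▸ hz1) hz2
  · rw [smul_mul_smul_comm, hee, smul_smul, mul_assoc, inv_mul_cancel₀ hd, mul_one]
  · intro a
    show incl _ a * _ = _ * incl _ a
    rw [mul_smul_comm, smul_mul_assoc, hc]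
  · intro a ha
    change incl _ a * _ = 0 at ha
    rw [mul_smul_comm] at ha
    exact incl_e_inj M a ((smul_eq_zero_iff_right (inv_ne_zero hd)).1 ha)
  · intro b
    obtain ⟨y, hy, h⟩ := hF.eBe M (by omega) (x := b) (by rw [SubK_gB]; trivial)
    obtain ⟨y, rfl⟩ := mem_incl (show M - 1 ≤ M + 1 by omega) hy
    refine ⟨deltaVar⁻¹ • y, ?_⟩
    show _ = incl _ _ * _
    rw [smul_mul_assoc, smul_mul_assoc, mul_smul_comm, h, map_smul, smul_mul_assoc, mul_smul_comm]
  · intro x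
    rw [hJe]
    exact ⟨fun h => piH_ker h, fun h => piH_J h⟩

/-- cast of Hecke algebras -/
noncomputable def heckeCast {a b : ℕ} (h : a = b) : HeckeAlgebra a ≃+* HeckeAlgebra b := by
  subst h; exact RingEquiv.refl _

theorem prodEquiv (n k k' : ℕ) (hk : k' = k + 1) :
    Nonempty (((i : Fin k') → HeckeAlgebra (n + 2 - 2 * (i : ℕ))) ≃+*
      (HA (n + 1) × ((i : Fin k) → HeckeAlgebra (n - 2 * (i : ℕ))))) := by
  subst hk
  have h : ∀ i : Fin k, n + 2 - 2 * (i.succ : ℕ) = n - 2 * (i : ℕ) := fun i => by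
    rw [Fin.val_succ]; omega
  refine ⟨RingEquiv.ofBijective
    ({ toFun := fun x => (x 0, fun i => heckeCast (h i) (x i.succ))
       map_zero' := Prod.ext rfl (funext fun i => map_zero _)
       map_one' := Prod.ext rfl (funext fun i => map_one _)
       map_add' := fun x y => Prod.ext rfl (funext fun i => map_add _ _ _)
       map_mul' := fun x y => Prod.ext rfl (funext fun i => map_mul _ _ _) } : _ →+* _) ⟨?_, ?_⟩⟩
  · intro x y hxy
    funext i
    refine Fin.cases ?_ (fun i => ?_) i
    · exact congrArg Prod.fst hxy
    · exact (heckeCast (h i)).injective (congrFun (congrArg Prod.snd hxy) i)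
  · rintro ⟨a, b⟩
    refine ⟨Fin.cons (α := fun i : Fin (k+1) => HeckeAlgebra (n + 2 - 2 * (i : ℕ))) a (fun i => (heckeCast (h i)).symm (b i)), ?_⟩
    refine Prod.ext rfl (funext fun i => ?_)
    exact (heckeCast (h i)).apply_symm_apply (b i)

theorem baseEquiv (n : ℕ) (hn : n - 1 = 0) (k : ℕ) (hk : k = 1) :
    Nonempty (((i : Fin k) → HeckeAlgebra (n - 2 * (i : ℕ))) ≃+* HA 0) := by
  subst hk
  have h : HeckeAlgebra (n - 2 * ((0 : Fin 1) : ℕ)) = HA (n - 1) := rfl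
  have e : HeckeAlgebra n ≃+* HA 0 := by
    show HA (n - 1) ≃+* HA 0
    rw [hn]
  refine ⟨RingEquiv.trans (RingEquiv.ofBijective
    ({ toFun := fun x => x 0
       map_zero' := rfl
       map_one' := rfl
       map_add' := fun x y => rfl
       map_mul' := fun x y => rfl } : ((i : Fin 1) → HeckeAlgebra (n - 2 * (i : ℕ))) →+* HeckeAlgebra n) ⟨?_, ?_⟩) e⟩
  · intro x y hxy
    funext i
    obtain rfl : i = 0 := Subsingleton.elim _ _
    exact hxy
  · intro a
    refine ⟨Fin.cons (α := fun i : Fin 1 => HeckeAlgebra (n - 2 * (i : ℕ))) a (fun i => i.elim0), rfl⟩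

theorem corner_all (n : ℕ) :
    Nonempty (CornerData ((i : Fin (n / 2 + 1)) → HeckeAlgebra (n - 2 * (i : ℕ))) (BA (n - 1))) := by
  induction n using Nat.twoStepInduction with
  | zero =>
    obtain ⟨D⟩ := base_corner
    obtain ⟨ε⟩ := baseEquiv 0 rfl (0 / 2 + 1) rfl
    exact D.congr ε
  | one =>
    obtain ⟨D⟩ := base_corner
    obtain ⟨ε⟩ := baseEquiv 1 rfl (1 / 2 + 1) rfl
    exact D.congr ε
  | more n ih _ =>
    obtain ⟨D⟩ := ih
    obtain ⟨D'⟩ := step_corner n D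
    obtain ⟨ε⟩ := prodEquiv n (n / 2 + 1) ((n + 2) / 2 + 1) (by omega)
    exact D'.congr ε

theorem final_thm (n : ℕ) (hn : 2 ≤ n) :
    MoritaEquivalent (BMWAlgebra (n - 1) (typeA (n - 1)))
      ((i : Fin (n / 2 + 1)) → HeckeAlgebra (n - 2 * (i : ℕ))) := by
  obtain ⟨D⟩ := corner_all n
  exact D.morita

end Part10

set_option autoImplicit true

/-- For `n ≥ 2`, the Birman–Murakami–Wenzl algebra
`B(A_{n-1})` over `K = ℚ(l,δ)` is Morita equivalent to the direct sum
`⊕_{i=0}^{⌊n/2⌋} H_{n-2i}` of Iwahori–Hecke algebras of the symmetric groups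
`S_{n-2i}` over `K` (with quadratic relation `T_j² = 1 - m·T_j`). -/
theorem bmwAlgebra_typeA_moritaEquivalent_heckeAlgebras
    (n : ℕ) (hn : 2 ≤ n) :
    MoritaEquivalent (BMWAlgebra (n - 1) (typeA (n - 1)))
      ((i : Fin (n / 2 + 1)) → HeckeAlgebra (n - 2 * (i : ℕ))) := by
  exact final_thm n hn
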